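/- (Exact multiplicity for sinusoidal weights.) Let a < b, let k ∈ ℕ with k ≥ 2, let p > 1, and set h(t) := sin(kπ(t−a)/(b−a)) for t ∈ [a,b]. Then there exists μ** > 0 such that for every μ > μ** the Dirichlet problem u'' + (h⁺(t) − μ h⁻(t)) |u|^{p−1} u = 0, u(a) = 0 = u(b), has exactly 2^m − 1 positive solutions, where m = ⌊(k+1)/2⌋ is the integer part of (k+1)/2; moreover these solutions are non-degenerate. -/

import Mathlib

open Set Filter Topology

/-- The positive part `h⁺ = |h|/2 + h/2` of a weight function. -/
noncomputable def posW (h : ℝ → ℝ) : ℝ → ℝ := fun t => |h t| / 2 + h t / 2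

/-- The negative part `h⁻ = |h|/2 - h/2` of a weight function. -/
noncomputable def negW (h : ℝ → ℝ) : ℝ → ℝ := fun t => |h t| / 2 - h t / 2

/-- The sinusoidal weight `h(t) = sin(kπ(t-a)/(b-a))`. -/
noncomputable def sinW (a b : ℝ) (k : ℕ) : ℝ → ℝ :=
  fun t => Real.sin ((k : ℝ) * Real.pi * (t - a) / (b - a))

/-- The weight `h⁺ - μ h⁻` of problem `(D_μ)` for `h = sin(kπ(t-a)/(b-a))`. -/
noncomputable def sinWμ (a b : ℝ) (k : ℕ) (μ : ℝ) : ℝ → ℝ :=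
  fun t => posW (sinW a b k) t - μ * negW (sinW a b k) t

/-- A classical (C²) solution of `u'' + ω(t) f(u) = 0` on `[a,b]`:
`u'` and `u''` are the first and second derivatives of `u` on `[a,b]` and the
equation holds pointwise on `[a,b]`. -/
def IsC2Sol (a b : ℝ) (ω : ℝ → ℝ) (f : ℝ → ℝ) (u u' u'' : ℝ → ℝ) : Prop :=
  (∀ t ∈ Set.Icc a b, HasDerivAt u (u' t) t) ∧
  (∀ t ∈ Set.Icc a b, HasDerivAt u' (u'' t) t) ∧
  (∀ t ∈ Set.Icc a b, u'' t + ω t * f (u t) = 0)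

/-- A classical (C²) solution of the linear equation `w'' + ω(t) w = 0` on `[a,b]`. -/
def IsC2LinSol (a b : ℝ) (ω : ℝ → ℝ) (w w' w'' : ℝ → ℝ) : Prop :=
  (∀ t ∈ Set.Icc a b, HasDerivAt w (w' t) t) ∧
  (∀ t ∈ Set.Icc a b, HasDerivAt w' (w'' t) t) ∧
  (∀ t ∈ Set.Icc a b, w'' t + ω t * w t = 0)

/-!
An affine change of variables turns the problem into `u'' + (sin⁺ t - μ sin⁻ t) u ^ p = 0` on
`[0, kπ]`, where the positive and the negative humps of the sine alternate. Solutions are convex on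
the negative humps, and bounded a priori on the positive ones. Hence for large `μ` they are nearly
zero at the ends of every positive hump, and on the hump itself they are either nearly zero
throughout or close to the unique positive solution `U` of `U'' + sin t * U ^ p = 0`,
`U 0 = U π = 0`. The code of a solution is the set of positive humps of the second kind, and each
of the `2 ^ m - 1` nonempty sets of positive humps is the code of exactly one positive solution.

Existence is a shooting argument from `t = 0`, which nests intervals of initial slopes hump by hump.
Uniqueness for a given code and non-degeneracy come from one linear statement. Both the difference
of two solutions with the same code and a solution of the linearized problem solve `w'' + q w = 0`.
Here a small hump hardly affects `w`, a bump flips its sign by the non-degeneracy of `U`, and Sturm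
comparison with the convex solution itself controls `w` on the negative humps. So the phase point
`(w, w')` stays in a cone, up to sign, and `w` cannot vanish at `kπ`.
-/

open scoped NNReal

/-! ### Derivative bounds and crossings -/

theorem add_mul_sub_le_of_le_hasDerivAt {g g' : ℝ → ℝ} {x y c : ℝ} (hxy : x ≤ y)
    (hg : ∀ t ∈ Icc x y, HasDerivAt g (g' t) t) (hc : ∀ t ∈ Icc x y, c ≤ g' t) :
    g x + c * (y - x) ≤ g y := by
  rcases hxy.eq_or_lt with rfl | h
  · simp
  · obtain ⟨ξ, hξ, hslope⟩ := exists_hasDerivAt_eq_slope g g' h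
      (fun t ht => (hg t ht).continuousAt.continuousWithinAt)
      (fun t ht => hg t (Ioo_subset_Icc_self ht))
    have := hc ξ (Ioo_subset_Icc_self hξ)
    rw [hslope, le_div_iff₀ (by linarith)] at this
    linarith

theorem le_add_mul_sub_of_hasDerivAt_le {g g' : ℝ → ℝ} {x y c : ℝ} (hxy : x ≤ y)
    (hg : ∀ t ∈ Icc x y, HasDerivAt g (g' t) t) (hc : ∀ t ∈ Icc x y, g' t ≤ c) :
    g y ≤ g x + c * (y - x) := by
  have := add_mul_sub_le_of_le_hasDerivAt (g := fun t => -g t) (g' := fun t => -g' t) (c := -c) hxy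
    (fun t ht => (hg t ht).neg) (fun t ht => neg_le_neg (hc t ht))
  linarith

theorem lt_of_hasDerivAt_pos {g g' : ℝ → ℝ} {x y : ℝ} (hxy : x < y)
    (hg : ∀ t ∈ Icc x y, HasDerivAt g (g' t) t) (hpos : ∀ t ∈ Ioo x y, 0 < g' t) : g x < g y := by
  refine strictMonoOn_of_hasDerivWithinAt_pos (f' := g') (convex_Icc x y)
    (fun t ht => (hg t ht).continuousAt.continuousWithinAt) (fun t ht => ?_) (fun t ht => ?_)
    (left_mem_Icc.2 hxy.le) (right_mem_Icc.2 hxy.le) hxy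
  · exact (hg t (interior_subset ht)).hasDerivWithinAt
  · exact hpos t (by rwa [interior_Icc] at ht)

theorem deriv_nonpos_of_forall_left_le {w : ℝ → ℝ} {d a t : ℝ} (hat : a < t)
    (hd : HasDerivAt w d t) (h : ∀ s ∈ Ioo a t, w t ≤ w s) : d ≤ 0 := by
  have hslope := (hasDerivWithinAt_iff_tendsto_slope' self_notMem_Iio).1
    (hd.hasDerivWithinAt (s := Iio t))
  refine le_of_tendsto hslope ?_
  filter_upwards [Ioo_mem_nhdsLT hat] with s hs
  rw [slope_def_field]
  exact div_nonpos_of_nonneg_of_nonpos (sub_nonneg.2 (h s hs)) (sub_nonpos.2 hs.2.le)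

theorem eventually_right_pos {w : ℝ → ℝ} {d t : ℝ} (hd : HasDerivAt w d t) (h0 : 0 ≤ w t)
    (hpos : w t = 0 → 0 < d) : ∀ᶠ s in 𝓝[>] t, 0 < w s := by
  rcases h0.eq_or_lt with hzero | hlt
  · have hslope := (hasDerivWithinAt_iff_tendsto_slope' self_notMem_Ioi).1
      (hd.hasDerivWithinAt (s := Ioi t))
    filter_upwards [hslope.eventually (lt_mem_nhds (hpos hzero.symm)), self_mem_nhdsWithin]
      with s hs hts
    rw [slope_def_field, ← hzero, sub_zero] at hs
    exact (div_pos_iff_of_pos_right (sub_pos.2 hts)).1 hs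
  · exact (hd.continuousAt.eventually (lt_mem_nhds hlt)).filter_mono nhdsWithin_le_nhds

theorem exists_first_eq {φ : ℝ → ℝ} {a b c : ℝ} (hab : a ≤ b) (hφ : ContinuousOn φ (Icc a b))
    (ha : φ a ≤ c) (hb : c ≤ φ b) :
    ∃ s ∈ Icc a b, φ s = c ∧ ∀ t ∈ Ico a s, φ t < c := by
  have hcompact : IsCompact (Icc a b ∩ φ ⁻¹' Ici c) :=
    isCompact_Icc.of_isClosed_subset (hφ.preimage_isClosed_of_isClosed isClosed_Icc isClosed_Ici)
      inter_subset_left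
  obtain ⟨s, ⟨hs, hcs⟩, hmin⟩ := hcompact.exists_isLeast ⟨b, right_mem_Icc.2 hab, hb⟩
  have hbefore : ∀ t ∈ Ico a s, φ t < c := fun t ht => not_le.1 fun h =>
    ht.2.not_ge (hmin ⟨⟨ht.1, ht.2.le.trans hs.2⟩, h⟩)
  refine ⟨s, hs, le_antisymm ?_ hcs, hbefore⟩
  obtain ⟨r, hr, hrc⟩ := intermediate_value_Icc hs.1 (hφ.mono (Icc_subset_Icc_right hs.2))
    ⟨ha, hcs⟩
  have : s ≤ r := hmin ⟨⟨hr.1, hr.2.trans hs.2⟩, hrc.ge⟩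
  exact (le_antisymm this hr.2 ▸ hrc).le

theorem exists_last_eq {φ : ℝ → ℝ} {a b c : ℝ} (hab : a ≤ b) (hφ : ContinuousOn φ (Icc a b))
    (ha : φ a ≤ c) (hb : c ≤ φ b) :
    ∃ s ∈ Icc a b, φ s = c ∧ ∀ t ∈ Ioc s b, c < φ t := by
  obtain ⟨s, hs, hsc, hbefore⟩ := exists_first_eq (φ := fun t => -φ (-t)) (neg_le_neg hab)
    (c := -c)
    (hφ.comp continuous_neg.continuousOn fun t ht => ⟨by linarith [ht.2], by linarith [ht.1]⟩).neg
    (by simpa using hb) (by simpa using ha)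
  refine ⟨-s, ⟨by linarith [hs.2], by linarith [hs.1]⟩, by simpa using hsc, fun t ht => ?_⟩
  have := hbefore (-t) ⟨by linarith [ht.2], by linarith [ht.1]⟩
  simpa using this

/-! ### Second order equations -/

/-- `u'` is the derivative of `u` and `u'' = F(t, u)` on `s`. A function `F` which ignores its
second argument prescribes the second derivative itself. -/
def IsSolOn (s : Set ℝ) (F : ℝ → ℝ → ℝ) (u u' : ℝ → ℝ) : Prop :=
  ∀ t ∈ s, HasDerivAt u (u' t) t ∧ HasDerivAt u' (F t (u t)) t

namespace IsSolOn

variable {s : Set ℝ} {F : ℝ → ℝ → ℝ} {u u' : ℝ → ℝ}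

theorem continuousOn (hu : IsSolOn s F u u') : ContinuousOn u s :=
  fun t ht => (hu t ht).1.continuousAt.continuousWithinAt

theorem mono (hu : IsSolOn s F u u') {r : Set ℝ} (hrs : r ⊆ s) : IsSolOn r F u u' :=
  fun t ht => hu t (hrs ht)

theorem congr (hu : IsSolOn s F u u') {G : ℝ → ℝ → ℝ} (h : ∀ t ∈ s, F t (u t) = G t (u t)) :
    IsSolOn s G u u' :=
  fun t ht => ⟨(hu t ht).1, h t ht ▸ (hu t ht).2⟩

theorem neg (hu : IsSolOn s F u u') :
    IsSolOn s (fun t x => -F t (-x)) (fun t => -u t) (fun t => -u' t) :=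
  fun t ht => ⟨(hu t ht).1.neg, (hu t ht).2.neg.congr_deriv (by simp)⟩

theorem comp_const_sub {c : ℝ} {r : Set ℝ} (hu : IsSolOn s F u u') (hrs : ∀ t ∈ r, c - t ∈ s) :
    IsSolOn r (fun t x => F (c - t) x) (fun t => u (c - t)) (fun t => -u' (c - t)) := by
  intro t ht
  have hrefl : HasDerivAt (fun t => c - t) (-1) t := by simpa using (hasDerivAt_id t).const_sub c
  obtain ⟨h, h'⟩ := hu _ (hrs t ht)
  exact ⟨(h.comp t hrefl).congr_deriv (by simp), (h'.comp t hrefl).neg.congr_deriv (by simp)⟩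

theorem comp_add_const {c : ℝ} {r : Set ℝ} (hu : IsSolOn s F u u') (hrs : ∀ t ∈ r, t + c ∈ s) :
    IsSolOn r (fun t x => F (t + c) x) (fun t => u (t + c)) (fun t => u' (t + c)) :=
  fun t ht => ⟨(hu _ (hrs t ht)).1.comp_add_const t c, (hu _ (hrs t ht)).2.comp_add_const t c⟩

end IsSolOn

theorem lipschitzWith_phaseField {C l : ℝ≥0} {g : ℝ → ℝ} (hg : LipschitzWith C g) :
    LipschitzWith (l + C / l) (fun q : ℝ × ℝ => ((l : ℝ) * q.2, g q.1 / l)) := by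
  refine LipschitzWith.of_dist_le_mul fun q r => ?_
  have h₁ : dist q.1 r.1 ≤ dist q r := le_max_left _ _
  have h₂ : dist q.2 r.2 ≤ dist q r := le_max_right _ _
  have hl : 0 ≤ (l : ℝ) * dist q r := by positivity
  have hC : 0 ≤ (C / l : ℝ) * dist q r := by positivity
  push_cast
  rw [add_mul]
  refine max_le ?_ ?_
  · calc dist ((l : ℝ) * q.2) (l * r.2) = l * dist q.2 r.2 := by
          rw [Real.dist_eq, Real.dist_eq, ← mul_sub, abs_mul, NNReal.abs_eq]
      _ ≤ l * dist q r := by gcongr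
      _ ≤ _ := by linarith
  · calc dist (g q.1 / l) (g r.1 / l) = dist (g q.1) (g r.1) / l := by
          rw [Real.dist_eq, Real.dist_eq, ← sub_div, abs_div, NNReal.abs_eq]
      _ ≤ C * dist q r / l := by
          gcongr
          exact (hg.dist_le_mul _ _).trans (by gcongr)
      _ = C / l * dist q r := by ring
      _ ≤ _ := by linarith

theorem gronwallBound_le {δ ε K x y : ℝ} (hK : 1 ≤ K) (hδ : 0 ≤ δ) (hε : 0 ≤ ε) (hx : 0 ≤ x)
    (hxy : x ≤ y) : gronwallBound δ K ε x ≤ (δ + ε) * Real.exp (K * y) := by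
  rw [gronwallBound_of_K_ne_0 (by positivity)]
  have hmono : Real.exp (K * x) ≤ Real.exp (K * y) := by gcongr
  have hone : 1 ≤ Real.exp (K * x) := Real.one_le_exp (by positivity)
  have hdiv : ε / K ≤ ε := div_le_self hε hK
  calc δ * Real.exp (K * x) + ε / K * (Real.exp (K * x) - 1)
      ≤ δ * Real.exp (K * y) + ε * Real.exp (K * y) := by
        gcongr
        linarith
    _ = _ := by ring

section Dependence

variable {a b e D : ℝ} {C : ℝ≥0} {F : ℝ → ℝ → ℝ} {w w' z z' : ℝ → ℝ}

theorem IsSolOn.dist_le_of_approx {z'' : ℝ → ℝ} (hF : ∀ t ∈ Icc a b, LipschitzWith C (F t))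
    (hw : IsSolOn (Icc a b) F w w') (hz : IsSolOn (Icc a b) (fun t _ => z'' t) z z')
    (he : ∀ t ∈ Icc a b, |z'' t - F t (z t)| ≤ e)
    (h₀ : |w a - z a| ≤ D) (h₁ : |w' a - z' a| ≤ D) :
    ∀ t ∈ Icc a b, |w t - z t| ≤ (D + e) * Real.exp ((1 + C) * (b - a)) ∧
      |w' t - z' t| ≤ (D + e) * Real.exp ((1 + C) * (b - a)) := by
  intro t ht
  have he0 : 0 ≤ e := (abs_nonneg _).trans (he t ht)
  have hD : 0 ≤ D := (abs_nonneg _).trans h₀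
  have hpair : ∀ {G v v'}, IsSolOn (Icc a b) G v v' → ∀ r ∈ Icc a b,
      HasDerivAt (fun t => (v t, v' t)) (v' r, G r (v r)) r :=
    fun hv r hr => (hv r hr).1.prodMk (hv r hr).2
  have key := dist_le_of_approx_trajectories_ODE_of_mem (K := 1 + C)
    (v := fun t q => (q.2, F t q.1)) (s := fun _ => univ) (εf := 0) (εg := e) (δ := D)
    (fun r hr => by simpa using lipschitzWith_phaseField (l := 1) (hF r (Ico_subset_Icc_self hr)))
    (fun r hr => (hpair hw r hr).continuousAt.continuousWithinAt)
    (fun r hr => (hpair hw r (Ico_subset_Icc_self hr)).hasDerivWithinAt)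
    (fun r _ => by simp) (fun _ _ => mem_univ _)
    (fun r hr => (hpair hz r hr).continuousAt.continuousWithinAt)
    (fun r hr => (hpair hz r (Ico_subset_Icc_self hr)).hasDerivWithinAt)
    (fun r hr => max_le (by simpa using he0) (he r (Ico_subset_Icc_self hr)))
    (fun _ _ => mem_univ _) (max_le h₀ h₁) t ht
  have hbound := gronwallBound_le (K := 1 + C) (by simp) hD he0 (sub_nonneg.2 ht.1)
    (sub_le_sub_right ht.2 a)
  rw [zero_add] at key
  exact ⟨(le_max_left _ _).trans (key.trans hbound), (le_max_right _ _).trans (key.trans hbound)⟩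

theorem IsSolOn.dist_le (hF : ∀ t ∈ Icc a b, LipschitzWith C (F t))
    (hw : IsSolOn (Icc a b) F w w') (hz : IsSolOn (Icc a b) F z z')
    (h₀ : |w a - z a| ≤ D) (h₁ : |w' a - z' a| ≤ D) :
    ∀ t ∈ Icc a b, |w t - z t| ≤ D * Real.exp ((1 + C) * (b - a)) ∧
      |w' t - z' t| ≤ D * Real.exp ((1 + C) * (b - a)) := by
  simpa using IsSolOn.dist_le_of_approx (e := 0) (z'' := fun t => F t (z t)) hF hw hz (by simp)
    h₀ h₁

theorem IsSolOn.unique (hF : ∀ t ∈ Icc a b, LipschitzWith C (F t))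
    (hw : IsSolOn (Icc a b) F w w') (hz : IsSolOn (Icc a b) F z z')
    (h₀ : w a = z a) (h₁ : w' a = z' a) : ∀ t ∈ Icc a b, w t = z t ∧ w' t = z' t := by
  intro t ht
  have := IsSolOn.dist_le (D := 0) hF hw hz (by simp [h₀]) (by simp [h₁]) t ht
  simpa [sub_eq_zero] using this

theorem IsSolOn.unique_of_mem {c : ℝ} (hF : ∀ t ∈ Icc a b, LipschitzWith C (F t))
    (hw : IsSolOn (Icc a b) F w w') (hz : IsSolOn (Icc a b) F z z') (hc : c ∈ Icc a b)
    (h₀ : w c = z c) (h₁ : w' c = z' c) : ∀ t ∈ Icc a b, w t = z t ∧ w' t = z' t := by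
  intro t ht
  rcases le_total c t with hct | htc
  · have hsub : Icc c b ⊆ Icc a b := Icc_subset_Icc_left hc.1
    exact (hw.mono hsub).unique (fun s hs => hF s (hsub hs)) (hz.mono hsub) h₀ h₁ t ⟨hct, ht.2⟩
  · have hrefl : ∀ s ∈ Icc 0 (c - a), c - s ∈ Icc a b := fun s hs =>
      ⟨by linarith [hs.2], by linarith [hs.1, hc.2]⟩
    have := (hw.comp_const_sub hrefl).unique (fun s hs => hF _ (hrefl s hs))
      (hz.comp_const_sub hrefl) (by simpa using h₀) (by simpa using h₁) (c - t)
      ⟨sub_nonneg.2 htc, sub_le_sub_left ht.1 c⟩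
    simpa using this

end Dependence

-- Rescaling the derivative by `l` makes the speed of the phase field on a ball of radius `R` at
-- most `R / (T + 1)`, so that one application of Picard-Lindelöf reaches time `T`.
theorem isPicardLindelof_phaseField {a b B : ℝ} {C : ℝ≥0} {F : ℝ → ℝ → ℝ} (hab : a ≤ b)
    (hF : ∀ t, LipschitzWith C (F t)) (hcont : ∀ x, Continuous (fun t => F t x))
    (hB : ∀ t x, |F t x| ≤ B) (x y : ℝ) :
    ∃ l : ℝ≥0, 0 < l ∧ ∃ R L : ℝ≥0, IsPicardLindelof
      (fun t (q : ℝ × ℝ) => ((l : ℝ) * q.2, F t q.1 / l)) (tmin := a - 1) (tmax := b + 1)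
      ⟨a, by linarith, by linarith⟩ (x, y / l) R 0 L (l + C / l) := by
  have hB0 : 0 ≤ B := (abs_nonneg _).trans (hB 0 0)
  obtain ⟨T, hT⟩ : ∃ T : ℝ≥0, (T : ℝ) = b - a + 1 := ⟨⟨b - a + 1, by linarith⟩, rfl⟩
  have hT1 : (1 : ℝ) ≤ T := by linarith
  obtain ⟨l, hl⟩ : ∃ l : ℝ≥0, l = 1 / (2 * T) := ⟨_, rfl⟩
  have hlT : (l : ℝ) * T = 1 / 2 := by rw [hl]; push_cast; field_simp
  have hl0 : (0 : ℝ) < l := by rw [hl]; push_cast; positivity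
  obtain ⟨R, hR⟩ : ∃ R : ℝ≥0, (R : ℝ) = |y / l| + B / l * T :=
    ⟨⟨|y / l| + B / l * T, by positivity⟩, rfl⟩
  have hBT : 0 ≤ B / l * T := by positivity
  refine ⟨l, hl0, R, R / T, fun t _ => (lipschitzWith_phaseField (hF t)).lipschitzOnWith,
    fun q _ => Continuous.continuousOn (by fun_prop (disch := assumption)), fun t _ q hq => ?_, ?_⟩
  · have hq₂ : |q.2 - y / l| ≤ R := (le_max_right _ _).trans hq
    push_cast
    rw [le_div_iff₀ (by linarith), Prod.norm_def, max_mul_of_nonneg _ _ T.coe_nonneg]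
    refine max_le ?_ ?_
    · have habs : |q.2| ≤ |q.2 - y / l| + |y / l| := by
        simpa using abs_add_le (q.2 - y / l) (y / l)
      calc ‖(l : ℝ) * q.2‖ * T = l * T * |q.2| := by
            rw [Real.norm_eq_abs, abs_mul, NNReal.abs_eq]; ring
        _ ≤ R := by rw [hlT]; linarith
    · calc ‖F t q.1 / l‖ * T = |F t q.1| / l * T := by
            rw [Real.norm_eq_abs, abs_div, NNReal.abs_eq]
        _ ≤ B / l * T := by gcongr; exact hB _ _
        _ ≤ R := by rw [hR]; linarith [abs_nonneg (y / l)]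
  · have : max (b + 1 - a) (a - (a - 1)) = (T : ℝ) := by rw [max_eq_left (by linarith)]; linarith
    simp only [this, NNReal.coe_div, NNReal.coe_zero, sub_zero]
    rw [div_mul_cancel₀ _ (by positivity)]

theorem exists_isSolOn_of_bounded {a b B : ℝ} {C : ℝ≥0} {F : ℝ → ℝ → ℝ} (hab : a ≤ b)
    (hF : ∀ t, LipschitzWith C (F t)) (hcont : ∀ x, Continuous (fun t => F t x))
    (hB : ∀ t x, |F t x| ≤ B) (x y : ℝ) :
    ∃ u u', IsSolOn (Icc a b) F u u' ∧ u a = x ∧ u' a = y := by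
  obtain ⟨l, hl, R, L, hPL⟩ := isPicardLindelof_phaseField hab hF hcont hB x y
  have hl_ne : (l : ℝ) ≠ 0 := by exact_mod_cast hl.ne'
  obtain ⟨α, hα₀, hα⟩ := hPL.exists_eq_forall_mem_Icc_hasDerivWithinAt₀
  change α a = _ at hα₀
  refine ⟨fun t => (α t).1, fun t => l * (α t).2, fun t ht => ?_, by simp [hα₀], ?_⟩
  · have hd := (hα t ⟨by linarith [ht.1], by linarith [ht.2]⟩).hasDerivAt
      (Icc_mem_nhds (by linarith [ht.1]) (by linarith [ht.2]))
    have hsnd := ((hasFDerivAt_snd (𝕜 := ℝ) (E := ℝ) (F := ℝ)).comp_hasDerivAt t hd).const_mul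
      (l : ℝ)
    exact ⟨(hasFDerivAt_fst (𝕜 := ℝ) (E := ℝ) (F := ℝ)).comp_hasDerivAt t hd,
      hsnd.congr_deriv (mul_div_cancel₀ _ hl_ne)⟩
  · simp [hα₀, mul_div_cancel₀ _ hl_ne]

/-! ### Sturm comparison -/

section Sturm

variable {a b : ℝ} {w w' w'' z z' z'' : ℝ → ℝ}

theorem IsSolOn.hasDerivAt_wronskian {s : Set ℝ} (hw : IsSolOn s (fun t _ => w'' t) w w')
    (hz : IsSolOn s (fun t _ => z'' t) z z') : ∀ t ∈ s,
    HasDerivAt (fun t => w' t * z t - w t * z' t) (w'' t * z t - w t * z'' t) t := by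
  intro t ht
  exact (((hw t ht).2.mul (hz t ht).1).sub ((hw t ht).1.mul (hz t ht).2)).congr_deriv (by ring)

theorem IsSolOn.wronskian_le (hw : IsSolOn (Icc a b) (fun t _ => w'' t) w w')
    (hz : IsSolOn (Icc a b) (fun t _ => z'' t) z z')
    (h : ∀ t ∈ Icc a b, 0 ≤ w'' t * z t - w t * z'' t) (hab : a ≤ b) :
    w' a * z a - w a * z' a ≤ w' b * z b - w b * z' b := by
  simpa using add_mul_sub_le_of_le_hasDerivAt (c := 0) hab (hw.hasDerivAt_wronskian hz) h

theorem IsSolOn.pos_of_wronskian_pos (hw : IsSolOn (Icc a b) (fun t _ => w'' t) w w')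
    (hz : IsSolOn (Icc a b) (fun t _ => z'' t) z z') (hz0 : ∀ t ∈ Icc a b, 0 ≤ z t)
    (hw0 : 0 ≤ w a) (hW : 0 < w' a * z a - w a * z' a)
    (h : ∀ t ∈ Icc a b, 0 ≤ w t → 0 ≤ w'' t * z t - w t * z'' t) : ∀ t ∈ Ioc a b, 0 < w t := by
  by_contra! hcon
  obtain ⟨t₁, ht₁, hwt₁⟩ := hcon
  have ha : a ∈ Icc a b := ⟨le_rfl, (ht₁.1.trans_le ht₁.2).le⟩
  have hright : ∀ᶠ s in 𝓝[>] a, 0 < w s := eventually_right_pos (hw a ha).1 hw0 fun hwa =>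
    pos_of_mul_pos_left (by simpa [hwa] using hW) (hz0 a ha)
  obtain ⟨c, hac, hc⟩ := mem_nhdsGT_iff_exists_Ioc_subset.1 hright
  have hac : a < c := hac
  have hct₁ : c < t₁ := not_le.1 fun hle => (hc ⟨ht₁.1, hle⟩).not_ge hwt₁
  obtain ⟨τ, hτ, hwτ, hbefore⟩ := exists_first_eq (φ := fun t => -w t) (c := 0) hct₁.le
    (hw.continuousOn.mono (Icc_subset_Icc hac.le ht₁.2)).neg
    (neg_nonpos.2 (hc ⟨hac, le_rfl⟩).le) (neg_nonneg.2 hwt₁)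
  rw [neg_eq_zero] at hwτ
  have hτb : Icc a τ ⊆ Icc a b := Icc_subset_Icc_right (hτ.2.trans ht₁.2)
  have haτ : a < τ := hac.trans_le hτ.1
  have hpos : ∀ s ∈ Ioo a τ, 0 < w s := fun s hs => (le_or_gt s c).elim (fun h => hc ⟨hs.1, h⟩)
    fun h => neg_lt_zero.1 (hbefore s ⟨h.le, hs.2⟩)
  have hnonneg : ∀ s ∈ Icc a τ, 0 ≤ w s := by
    intro s hs
    rcases hs.1.eq_or_lt with rfl | has
    · exact hw0
    · exact hs.2.eq_or_lt.elim (fun h => (h ▸ hwτ).ge) fun h => (hpos s ⟨has, h⟩).le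
  have hτmem : τ ∈ Icc a b := hτb (right_mem_Icc.2 haτ.le)
  have hdec : w' τ ≤ 0 := deriv_nonpos_of_forall_left_le haτ (hw τ hτmem).1
    fun s hs => hwτ ▸ (hpos s hs).le
  have hmono := (hw.mono hτb).wronskian_le (hz.mono hτb)
    (fun s hs => h s (hτb hs) (hnonneg s hs)) haτ.le
  rw [hwτ, zero_mul, sub_zero] at hmono
  exact (hW.trans_le hmono).not_ge (mul_nonpos_of_nonpos_of_nonneg hdec (hz0 τ hτmem))

theorem IsSolOn.wronskian_le_of_pos (hw : IsSolOn (Icc a b) (fun t _ => w'' t) w w')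
    (hz : IsSolOn (Icc a b) (fun t _ => z'' t) z z') (hz0 : ∀ t ∈ Icc a b, 0 ≤ z t)
    (hw0 : 0 ≤ w a) (hW : 0 < w' a * z a - w a * z' a)
    (h : ∀ t ∈ Icc a b, 0 ≤ w t → 0 ≤ w'' t * z t - w t * z'' t) {t : ℝ} (ht : t ∈ Icc a b) :
    w' a * z a - w a * z' a ≤ w' t * z t - w t * z' t := by
  have hsub : Icc a t ⊆ Icc a b := Icc_subset_Icc_right ht.2
  refine (hw.mono hsub).wronskian_le (hz.mono hsub) (fun s hs => h s (hsub hs) ?_) ht.1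
  rcases hs.1.eq_or_lt with rfl | has
  · exact hw0
  · exact (hw.pos_of_wronskian_pos hz hz0 hw0 hW h s ⟨has, (hsub hs).2⟩).le

end Sturm

/-! ### The truncated power -/

/-- An a priori bound for nonnegative solutions of `u'' + sin t * u ^ p = 0` on `[0, π]`. The base
`6` is chosen so that `u ≥ solBound p / 4` gives `sin t * u ^ (p - 1) ≥ 4` on `[π/4, 3π/4]`. -/
noncomputable def solBound (p : ℝ) : ℝ := 4 * 6 ^ (1 / (p - 1))

/-- An a priori bound for the derivatives of nonnegative solutions of `u'' + sin t * u ^ p = 0` on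
`[0, π]`. -/
noncomputable def slopeBound (p : ℝ) : ℝ := solBound p + 4 * solBound p ^ p

/-- The largest initial slope used for shooting, chosen strictly above all slopes of solutions. -/
noncomputable def slopeCap (p : ℝ) : ℝ := slopeBound p + 1

/-- The level above which the power is truncated. A solution with initial value zero and initial
slope at most `slopeCap p` does not reach it on a positive hump, because `π < 4`. -/
noncomputable def truncLevel (p : ℝ) : ℝ := 4 * slopeCap p + 1

/-- The power `u ^ p`, extended by zero to the left of zero and by a constant to the right of
`truncLevel p`, so that it is bounded and globally Lipschitz. -/
noncomputable def truncPow (p u : ℝ) : ℝ := (max 0 (min u (truncLevel p))) ^ p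

/-- The derivative of `u ↦ (max 0 u) ^ p`. -/
noncomputable def posPowDeriv (p u : ℝ) : ℝ := p * (max 0 u) ^ (p - 1)

/-- The Lipschitz constant of `truncPow p`. -/
noncomputable def truncLip (p : ℝ) : ℝ≥0 := (posPowDeriv p (truncLevel p)).toNNReal

section PowerEquation

variable {p : ℝ}

theorem solBound_pos : 0 < solBound p := by unfold solBound; positivity

theorem solBound_le_slopeBound : solBound p ≤ slopeBound p :=
  le_add_of_nonneg_right (by have := solBound_pos (p := p); positivity)

theorem slopeBound_lt_slopeCap : slopeBound p < slopeCap p := lt_add_one _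

theorem solBound_lt_slopeCap : solBound p < slopeCap p :=
  solBound_le_slopeBound.trans_lt slopeBound_lt_slopeCap

theorem one_lt_slopeCap : 1 < slopeCap p :=
  lt_add_of_pos_left _ (solBound_pos.trans_le solBound_le_slopeBound)

theorem slopeCap_pos : 0 < slopeCap p := one_pos.trans one_lt_slopeCap

theorem slopeCap_lt_truncLevel : slopeCap p < truncLevel p := by
  unfold truncLevel
  linarith [slopeCap_pos (p := p)]

theorem truncLevel_pos : 0 < truncLevel p := slopeCap_pos.trans slopeCap_lt_truncLevel

theorem solBound_le_truncLevel : solBound p ≤ truncLevel p :=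
  (solBound_lt_slopeCap.trans slopeCap_lt_truncLevel).le

theorem truncPow_nonneg (p u : ℝ) : 0 ≤ truncPow p u := by unfold truncPow; positivity

theorem truncPow_pos {u : ℝ} (hu : 0 < u) : 0 < truncPow p u :=
  Real.rpow_pos_of_pos (lt_max_of_lt_right (lt_min hu truncLevel_pos)) p

theorem truncPow_of_nonpos (hp : 1 < p) {u : ℝ} (hu : u ≤ 0) : truncPow p u = 0 := by
  rw [truncPow, max_eq_left (min_le_of_left_le hu), Real.zero_rpow (by linarith)]

theorem truncPow_of_le {u : ℝ} (hu : u ≤ truncLevel p) : truncPow p u = (max 0 u) ^ p := by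
  rw [truncPow, min_eq_left hu]

theorem truncPow_of_mem_Icc {u : ℝ} (hu : u ∈ Icc 0 (truncLevel p)) : truncPow p u = u ^ p := by
  rw [truncPow_of_le hu.2, max_eq_right hu.1]

theorem truncPow_mono (hp : 1 < p) : Monotone (truncPow p) := fun u v huv => by
  unfold truncPow
  gcongr

theorem truncPow_le (hp : 1 < p) (u : ℝ) : truncPow p u ≤ truncLevel p ^ p := by
  unfold truncPow
  gcongr
  exact max_le truncLevel_pos.le (min_le_right _ _)

theorem posPowDeriv_nonneg (hp : 1 < p) (u : ℝ) : 0 ≤ posPowDeriv p u := by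
  unfold posPowDeriv
  positivity

theorem posPowDeriv_of_nonneg {u : ℝ} (hu : 0 ≤ u) : posPowDeriv p u = p * u ^ (p - 1) := by
  rw [posPowDeriv, max_eq_right hu]

theorem posPowDeriv_mono (hp : 1 < p) : Monotone (posPowDeriv p) := fun u v huv => by
  unfold posPowDeriv
  gcongr

theorem continuous_posPowDeriv (hp : 1 < p) : Continuous (posPowDeriv p) :=
  continuous_const.mul ((continuous_const.max continuous_id).rpow_const
    fun _ => Or.inr (by linarith))

theorem hasDerivAt_max_zero_rpow (hp : 1 < p) (x : ℝ) :
    HasDerivAt (fun x => (max 0 x) ^ p) (posPowDeriv p x) x := by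
  unfold posPowDeriv
  rcases lt_trichotomy x 0 with hx | rfl | hx
  · have hzero : (fun x : ℝ => (max 0 x) ^ p) =ᶠ[𝓝 x] fun _ => 0 := by
      filter_upwards [gt_mem_nhds hx] with y hy
      rw [max_eq_left hy.le, Real.zero_rpow (by linarith)]
    rw [max_eq_left hx.le, Real.zero_rpow (by linarith), mul_zero]
    exact (hasDerivAt_const x (0 : ℝ)).congr_of_eventuallyEq hzero
  · have habs : HasDerivAt (fun x : ℝ => |x| ^ p) 0 0 := by
      simpa using hasDerivAt_abs_rpow (0 : ℝ) hp
    rw [max_self, Real.zero_rpow (by linarith), mul_zero]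
    rw [hasDerivAt_iff_isLittleO] at habs ⊢
    simp only [abs_zero, smul_zero, sub_zero, max_self, Real.zero_rpow (show p ≠ 0 by linarith)]
      at habs ⊢
    refine (Asymptotics.IsBigO.of_bound 1 (Eventually.of_forall fun y => ?_)).trans_isLittleO habs
    rw [Real.norm_of_nonneg (by positivity), Real.norm_of_nonneg (by positivity), one_mul]
    gcongr
    exact max_le (abs_nonneg _) (le_abs_self _)
  · have hpow : (fun x : ℝ => (max 0 x) ^ p) =ᶠ[𝓝 x] fun x => x ^ p := by
      filter_upwards [lt_mem_nhds hx] with y hy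
      rw [max_eq_right hy.le]
    rw [max_eq_right hx.le]
    exact (Real.hasDerivAt_rpow_const (Or.inl hx.ne')).congr_of_eventuallyEq hpow

theorem exists_mem_uIcc_sub_eq_mul {g g' : ℝ → ℝ} (hg : ∀ x, HasDerivAt g (g' x) x) (x y : ℝ) :
    ∃ ξ ∈ uIcc x y, g x - g y = g' ξ * (x - y) := by
  wlog hxy : x ≤ y generalizing x y
  · obtain ⟨ξ, hξ, h⟩ := this y x (by linarith)
    exact ⟨ξ, uIcc_comm x y ▸ hξ, by linarith⟩
  rcases hxy.eq_or_lt with rfl | hlt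
  · exact ⟨x, by simp, by simp⟩
  · obtain ⟨ξ, hξ, hslope⟩ := exists_hasDerivAt_eq_slope g g' hlt
      (fun t _ => (hg t).continuousAt.continuousWithinAt) fun t _ => hg t
    refine ⟨ξ, uIcc_of_le hxy ▸ Ioo_subset_Icc_self hξ, ?_⟩
    rw [eq_div_iff (by linarith)] at hslope
    linarith

theorem exists_truncPow_sub_eq (hp : 1 < p) {x y : ℝ} (hx : x ≤ truncLevel p)
    (hy : y ≤ truncLevel p) :
    ∃ ξ ∈ uIcc x y, truncPow p x - truncPow p y = posPowDeriv p ξ * (x - y) := by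
  rw [truncPow_of_le hx, truncPow_of_le hy]
  exact exists_mem_uIcc_sub_eq_mul (hasDerivAt_max_zero_rpow hp) x y

theorem coe_truncLip (hp : 1 < p) : (truncLip p : ℝ) = posPowDeriv p (truncLevel p) :=
  Real.coe_toNNReal _ (posPowDeriv_nonneg hp _)

theorem lipschitzWith_truncPow (hp : 1 < p) : LipschitzWith (truncLip p) (truncPow p) := by
  refine LipschitzWith.of_dist_le_mul fun x y => ?_
  have hmin : ∀ x, truncPow p x = truncPow p (min x (truncLevel p)) := fun x => by
    simp [truncPow]
  obtain ⟨ξ, hξ, h⟩ := exists_truncPow_sub_eq hp (min_le_right x (truncLevel p))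
    (min_le_right y (truncLevel p))
  have hξM : ξ ≤ truncLevel p := hξ.2.trans (max_le (min_le_right _ _) (min_le_right _ _))
  rw [Real.dist_eq, Real.dist_eq, hmin x, hmin y, h, abs_mul,
    abs_of_nonneg (posPowDeriv_nonneg hp ξ), coe_truncLip hp]
  have hcontr : |min x (truncLevel p) - min y (truncLevel p)| ≤ |x - y| := by
    simpa using abs_min_sub_min_le_max x (truncLevel p) y (truncLevel p)
  gcongr
  · exact posPowDeriv_nonneg hp _
  · exact posPowDeriv_mono hp hξM

theorem rpow_eq_rpow_sub_one_mul (hp : 1 < p) {u : ℝ} (hu : 0 ≤ u) :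
    u ^ p = u ^ (p - 1) * u := by
  rw [← Real.rpow_add_one' hu (by linarith), sub_add_cancel]

theorem rpow_sub_one_le_truncPow_slope (hp : 1 < p) {u v : ℝ} (hu : u ∈ Icc 0 (truncLevel p))
    (hv : v ∈ Icc 0 (truncLevel p)) (huv : u ≠ v) :
    u ^ (p - 1) ≤ (truncPow p u - truncPow p v) / (u - v) := by
  rw [truncPow_of_mem_Icc hu, truncPow_of_mem_Icc hv, rpow_eq_rpow_sub_one_mul hp hu.1,
    rpow_eq_rpow_sub_one_mul hp hv.1]
  have hmono : ∀ {x y : ℝ}, 0 ≤ x → x ≤ y → x ^ (p - 1) ≤ y ^ (p - 1) :=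
    fun hx hxy => Real.rpow_le_rpow hx hxy (by linarith)
  rcases lt_or_gt_of_ne huv with h | h
  · rw [le_div_iff_of_neg (by linarith)]
    nlinarith [mul_le_mul_of_nonneg_right (hmono hu.1 h.le) hv.1]
  · rw [le_div_iff₀ (by linarith)]
    nlinarith [mul_le_mul_of_nonneg_right (hmono hv.1 h.le) hv.1]

theorem exists_forall_abs_sub_le {g : ℝ → ℝ} (hg : Continuous g) {K : Set ℝ} (hK : IsCompact K)
    {δ : ℝ} (hδ : 0 < δ) :
    ∃ ρ > 0, ρ ≤ 1 ∧ ∀ x ∈ K, ∀ y, |x - y| ≤ ρ → |g y - g x| ≤ δ := by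
  have hunif := hK.uniformContinuousAt_of_continuousAt g (fun x _ => hg.continuousAt)
    (Metric.dist_mem_uniformity hδ)
  obtain ⟨ε, hε, h⟩ := Metric.mem_uniformity_dist.1 hunif
  refine ⟨min (ε / 2) 1, by positivity, min_le_right _ _, fun x hx y hxy => ?_⟩
  have hlt : dist x y < ε := (hxy.trans (min_le_left _ _)).trans_lt (half_lt_self hε)
  have hdist : dist (g x) (g y) < δ := h hlt hx
  exact (abs_sub_comm _ _).trans_le hdist.le

/-! ### The equations on one hump -/

/-- The right-hand side of the linear equation `w'' + q(t) w = 0`. -/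
def linField (q : ℝ → ℝ) : ℝ → ℝ → ℝ := fun t x => -(q t * x)

/-- The right-hand side of the equation `u'' + q(t) u ^ p = 0` with truncated power. -/
noncomputable def powField (p : ℝ) (q : ℝ → ℝ) : ℝ → ℝ → ℝ := fun t x => -(q t * truncPow p x)

/-- The weight on a negative hump. -/
noncomputable def negSin (μ : ℝ) : ℝ → ℝ := fun t => -(μ * Real.sin t)

theorem lipschitzWith_linField {q : ℝ → ℝ} {C : ℝ≥0} {t : ℝ} (hq : |q t| ≤ C) :
    LipschitzWith C (linField q t) :=
  LipschitzWith.of_dist_le_mul fun x y => by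
    rw [Real.dist_eq, Real.dist_eq, linField, linField, ← neg_sub', ← mul_sub, abs_neg, abs_mul]
    gcongr

theorem lipschitzWith_powField (hp : 1 < p) {q : ℝ → ℝ} {C : ℝ≥0} {t : ℝ} (hq : |q t| ≤ C) :
    LipschitzWith (C * truncLip p) (powField p q t) :=
  (lipschitzWith_linField hq).comp (lipschitzWith_truncPow hp)

theorem lipschitzWith_powField_sin (hp : 1 < p) (t : ℝ) :
    LipschitzWith (truncLip p) (powField p Real.sin t) := by
  simpa using lipschitzWith_powField (C := 1) hp (by simpa using Real.abs_sin_le_one t)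

theorem sin_nonneg_of_mem_Icc {t : ℝ} (ht : t ∈ Icc 0 Real.pi) : 0 ≤ Real.sin t :=
  Real.sin_nonneg_of_nonneg_of_le_pi ht.1 ht.2

theorem powField_sin_nonpos (u : ℝ → ℝ) :
    ∀ t ∈ Icc 0 Real.pi, powField p Real.sin t (u t) ≤ 0 := fun t ht =>
  neg_nonpos.2 (mul_nonneg (sin_nonneg_of_mem_Icc ht) (truncPow_nonneg p (u t)))

theorem powField_negSin_nonneg {μ : ℝ} (hμ : 0 ≤ μ) (u : ℝ → ℝ) :
    ∀ t ∈ Icc 0 Real.pi, 0 ≤ powField p (negSin μ) t (u t) := fun t ht => by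
  rw [powField, negSin, neg_mul, neg_neg]
  exact mul_nonneg (mul_nonneg hμ (sin_nonneg_of_mem_Icc ht)) (truncPow_nonneg p (u t))

theorem pi_sub_mem_Icc {t : ℝ} (ht : t ∈ Icc 0 Real.pi) : Real.pi - t ∈ Icc 0 Real.pi :=
  ⟨by linarith [ht.2], by linarith [ht.1]⟩

theorem IsSolOn.reflect {F : ℝ → ℝ → ℝ} {u u' : ℝ → ℝ} (hF : ∀ t, F (Real.pi - t) = F t)
    (hu : IsSolOn (Icc 0 Real.pi) F u u') :
    IsSolOn (Icc 0 Real.pi) F (fun t => u (Real.pi - t)) (fun t => -u' (Real.pi - t)) :=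
  (hu.comp_const_sub fun _ ht => pi_sub_mem_Icc ht).congr fun t _ => by rw [hF]

theorem powField_sin_pi_sub (t : ℝ) :
    powField p Real.sin (Real.pi - t) = powField p Real.sin t := by
  ext x
  simp only [powField, Real.sin_pi_sub]

theorem powField_negSin_pi_sub (μ t : ℝ) :
    powField p (negSin μ) (Real.pi - t) = powField p (negSin μ) t := by
  ext x
  simp only [powField, negSin, Real.sin_pi_sub]

/-! ### A priori bounds -/

section Concave

variable {a b : ℝ} {F : ℝ → ℝ → ℝ} {u u' : ℝ → ℝ}

section

variable (hu : IsSolOn (Icc a b) F u u') (hF : ∀ t ∈ Icc a b, F t (u t) ≤ 0) {s t : ℝ}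
  (has : a ≤ s) (hst : s ≤ t) (htb : t ≤ b)

include hu hF has hst htb

theorem IsSolOn.deriv_anti_of_nonpos : u' t ≤ u' s := by
  simpa using le_add_mul_sub_of_hasDerivAt_le (c := 0) hst
    (fun r hr => (hu r ⟨has.trans hr.1, hr.2.trans htb⟩).2)
    (fun r hr => hF r ⟨has.trans hr.1, hr.2.trans htb⟩)

theorem IsSolOn.le_tangent_of_nonpos : u t ≤ u s + u' s * (t - s) :=
  le_add_mul_sub_of_hasDerivAt_le hst (fun r hr => (hu r ⟨has.trans hr.1, hr.2.trans htb⟩).1)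
    fun _ hr => hu.deriv_anti_of_nonpos hF has hr.1 (hr.2.trans htb)

theorem IsSolOn.add_deriv_right_le_of_nonpos : u s + u' t * (t - s) ≤ u t :=
  add_mul_sub_le_of_le_hasDerivAt hst (fun r hr => (hu r ⟨has.trans hr.1, hr.2.trans htb⟩).1)
    fun _ hr => hu.deriv_anti_of_nonpos hF (has.trans hr.1) hr.2 htb

end

section

variable (hu : IsSolOn (Icc a b) F u u') (hF : ∀ t ∈ Icc a b, 0 ≤ F t (u t)) {s t : ℝ}
  (has : a ≤ s) (hst : s ≤ t) (htb : t ≤ b)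

include hu hF has hst htb

theorem IsSolOn.deriv_mono_of_nonneg : u' s ≤ u' t := by
  simpa using hu.neg.deriv_anti_of_nonpos (by simpa using hF) has hst htb

theorem IsSolOn.tangent_le_of_nonneg : u s + u' s * (t - s) ≤ u t := by
  linarith [hu.neg.le_tangent_of_nonpos (by simpa using hF) has hst htb]

theorem IsSolOn.le_add_deriv_right_of_nonneg : u t ≤ u s + u' t * (t - s) := by
  linarith [hu.neg.add_deriv_right_le_of_nonpos (by simpa using hF) has hst htb]

end

theorem IsSolOn.le_of_nonneg (hu : IsSolOn (Icc a b) F u u') (hF : ∀ t ∈ Icc a b, 0 ≤ F t (u t))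
    {c : ℝ} (ha : u a ≤ c) (hb : u b ≤ c) : ∀ t ∈ Icc a b, u t ≤ c := by
  intro t ht
  rcases le_total 0 (u' t) with h | h
  · linarith [hu.tangent_le_of_nonneg hF ht.1 ht.2 le_rfl, mul_nonneg h (sub_nonneg.2 ht.2)]
  · linarith [hu.le_add_deriv_right_of_nonneg hF le_rfl ht.1 ht.2,
      mul_nonneg (neg_nonneg.2 h) (sub_nonneg.2 ht.1)]

theorem IsSolOn.min_mul_le_of_nonpos (hu : IsSolOn (Icc a b) F u u')
    (hF : ∀ t ∈ Icc a b, F t (u t) ≤ 0) (hu0 : ∀ t ∈ Icc a b, 0 ≤ u t) {s t : ℝ}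
    (hs : s ∈ Icc a b) (ht : t ∈ Icc a b) : min (s - a) (b - s) * u t ≤ (b - a) * u s := by
  have hus := hu0 s hs
  rcases le_total s t with hst | hts
  · have h₁ := hu.le_tangent_of_nonpos hF hs.1 hst ht.2
    have h₂ := hu.add_deriv_right_le_of_nonpos hF le_rfl hs.1 hs.2
    calc min (s - a) (b - s) * u t ≤ (s - a) * u t :=
          mul_le_mul_of_nonneg_right (min_le_left _ _) (hu0 t ht)
      _ ≤ (t - a) * u s := by
          linarith [mul_le_mul_of_nonneg_left h₁ (sub_nonneg.2 hs.1),
            mul_le_mul_of_nonneg_left h₂ (sub_nonneg.2 hst),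
            mul_nonneg (sub_nonneg.2 hst) (hu0 a ⟨le_rfl, hs.1.trans hs.2⟩)]
      _ ≤ (b - a) * u s := by gcongr; exact ht.2
  · have h₁ := hu.add_deriv_right_le_of_nonpos hF ht.1 hts hs.2
    have h₂ := hu.le_tangent_of_nonpos hF hs.1 hs.2 le_rfl
    calc min (s - a) (b - s) * u t ≤ (b - s) * u t :=
          mul_le_mul_of_nonneg_right (min_le_right _ _) (hu0 t ht)
      _ ≤ (b - t) * u s := by
          linarith [mul_le_mul_of_nonneg_left h₁ (sub_nonneg.2 hs.2),
            mul_le_mul_of_nonneg_left h₂ (sub_nonneg.2 hts),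
            mul_nonneg (sub_nonneg.2 hts) (hu0 b ⟨hs.1.trans hs.2, le_rfl⟩)]
      _ ≤ (b - a) * u s := by gcongr; exact ht.1

theorem IsSolOn.abs_deriv_le {M B : ℝ} (hab : a < b) (hu : IsSolOn (Icc a b) F u u')
    (hM : ∀ t ∈ Icc a b, u t ∈ Icc 0 M) (hB : ∀ t ∈ Icc a b, |F t (u t)| ≤ B) :
    ∀ t ∈ Icc a b, |u' t| ≤ M / (b - a) + B * (b - a) := by
  intro t ht
  have hab' : 0 < b - a := sub_pos.2 hab
  obtain ⟨ξ, hξ, hslope⟩ := exists_hasDerivAt_eq_slope u u' hab hu.continuousOn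
    fun t ht => (hu t (Ioo_subset_Icc_self ht)).1
  have ha := hM a (left_mem_Icc.2 hab.le)
  have hb := hM b (right_mem_Icc.2 hab.le)
  have hξM : |u' ξ| ≤ M / (b - a) := by
    rw [hslope, abs_div, abs_of_pos hab']
    gcongr
    exact abs_le.2 ⟨by linarith [ha.2, hb.1], by linarith [ha.1, hb.2]⟩
  have hdiff : |u' t - u' ξ| ≤ B * (b - a) :=
    calc |u' t - u' ξ| ≤ B * |t - ξ| := (convex_Icc a b).norm_image_sub_le_of_norm_hasDerivWithin_le
          (fun r hr => (hu r hr).2.hasDerivWithinAt) hB (Ioo_subset_Icc_self hξ) ht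
      _ ≤ B * (b - a) := by
          gcongr
          · exact (abs_nonneg _).trans (hB t ht)
          · exact abs_le.2 ⟨by linarith [ht.1, hξ.2], by linarith [ht.2, hξ.1]⟩
  calc |u' t| = |u' ξ + (u' t - u' ξ)| := by ring_nf
    _ ≤ |u' ξ| + |u' t - u' ξ| := abs_add_le _ _
    _ ≤ _ := add_le_add hξM hdiff

end Concave

-- Sturm comparison with `sin (l * (t - a))`.
theorem IsSolOn.add_nonpos_of_le_neg_sq_mul {a l : ℝ} {F : ℝ → ℝ → ℝ} {u u' : ℝ → ℝ} (hl : 0 < l)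
    (hu : IsSolOn (Icc a (a + Real.pi / l)) F u u')
    (hF : ∀ t ∈ Icc a (a + Real.pi / l), F t (u t) ≤ -(l ^ 2 * u t)) :
    u a + u (a + Real.pi / l) ≤ 0 := by
  have hlen : 0 < Real.pi / l := div_pos Real.pi_pos hl
  have hz : IsSolOn (Icc a (a + Real.pi / l)) (fun t _ => -(l ^ 2 * Real.sin (l * (t - a))))
      (fun t => Real.sin (l * (t - a))) (fun t => l * Real.cos (l * (t - a))) := fun t _ => by
    have hlin : HasDerivAt (fun t => l * (t - a)) l t := by
      simpa using ((hasDerivAt_id t).sub_const a).const_mul l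
    exact ⟨hlin.sin.congr_deriv (mul_comm _ _), (hlin.cos.const_mul l).congr_deriv (by ring)⟩
  have hW := hz.wronskian_le (w'' := fun t => -(l ^ 2 * Real.sin (l * (t - a))))
    (z'' := fun t => F t (u t)) hu (fun t ht => ?_) (by linarith)
  · have hend : l * (a + Real.pi / l - a) = Real.pi := by field_simp; ring
    simp only [hend, sub_self, mul_zero, Real.sin_zero, Real.cos_zero, Real.sin_pi, Real.cos_pi,
      zero_mul, sub_zero, mul_one, mul_neg] at hW
    have : l * (u a + u (a + Real.pi / l)) ≤ 0 := by linarith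
    exact nonpos_of_mul_nonpos_right this hl
  · have hsin : 0 ≤ Real.sin (l * (t - a)) :=
      Real.sin_nonneg_of_nonneg_of_le_pi (mul_nonneg hl.le (sub_nonneg.2 ht.1)) (by
        have := mul_le_mul_of_nonneg_left (sub_le_iff_le_add'.2 ht.2) hl.le
        rwa [mul_div_cancel₀ _ hl.ne'] at this)
    linarith [mul_le_mul_of_nonneg_left (hF t ht) hsin]

theorem seven_tenths_le_sin {t : ℝ} (ht : t ∈ Icc (Real.pi / 4) (3 * Real.pi / 4)) :
    7 / 10 ≤ Real.sin t := by
  have habs : |Real.pi / 2 - t| ≤ Real.pi / 4 :=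
    abs_le.2 ⟨by linarith [ht.2], by linarith [ht.1]⟩
  have hsqrt : (7 / 5 : ℝ) ≤ √2 := Real.le_sqrt_of_sq_le (by norm_num)
  calc (7 / 10 : ℝ) ≤ √2 / 2 := by linarith
    _ = Real.cos (Real.pi / 4) := Real.cos_pi_div_four.symm
    _ ≤ Real.cos |Real.pi / 2 - t| :=
        Real.cos_le_cos_of_nonneg_of_le_pi (abs_nonneg _) (by linarith [Real.pi_pos]) habs
    _ = Real.sin t := by rw [Real.cos_abs, Real.cos_pi_div_two_sub]

theorem six_le_rpow_of_solBound_le (hp : 1 < p) {x : ℝ} (hx : solBound p / 4 ≤ x) :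
    6 ≤ x ^ (p - 1) := by
  have hroot : (6 : ℝ) ^ (1 / (p - 1)) ≤ x := by unfold solBound at hx; linarith
  calc (6 : ℝ) = ((6 : ℝ) ^ (1 / (p - 1))) ^ (p - 1) := by
        rw [← Real.rpow_mul (by norm_num), one_div_mul_cancel (by linarith), Real.rpow_one]
    _ ≤ x ^ (p - 1) := Real.rpow_le_rpow (by positivity) hroot (by linarith)

section Bounds

variable {u u' : ℝ → ℝ}

theorem IsSolOn.le_solBound (hp : 1 < p)
    (hu : IsSolOn (Icc 0 Real.pi) (fun t x => -(Real.sin t * x ^ p)) u u')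
    (hu0 : ∀ t ∈ Icc 0 Real.pi, 0 ≤ u t) : ∀ t ∈ Icc 0 Real.pi, u t ≤ solBound p := by
  by_contra! hcon
  obtain ⟨t, ht, hlarge⟩ := hcon
  have hpi := Real.pi_pos
  have hm := solBound_pos (p := p)
  have hmem : ∀ s ∈ Icc (Real.pi / 4) (3 * Real.pi / 4), s ∈ Icc 0 Real.pi :=
    fun s hs => ⟨by linarith [hs.1], by linarith [hs.2]⟩
  have hconc : ∀ s ∈ Icc 0 Real.pi, -(Real.sin s * u s ^ p) ≤ 0 := fun s hs =>
    neg_nonpos.2 (mul_nonneg (sin_nonneg_of_mem_Icc hs) (Real.rpow_nonneg (hu0 s hs) p))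
  have hmiddle : ∀ s ∈ Icc (Real.pi / 4) (3 * Real.pi / 4), solBound p / 4 ≤ u s := by
    intro s hs
    have hmin : Real.pi / 4 ≤ min (s - 0) (Real.pi - s) :=
      le_min (by linarith [hs.1]) (by linarith [hs.2])
    have hle : Real.pi * (solBound p / 4) ≤ Real.pi * u s :=
      calc Real.pi * (solBound p / 4) = Real.pi / 4 * solBound p := by ring
        _ ≤ min (s - 0) (Real.pi - s) * u t := by gcongr; linarith
        _ ≤ (Real.pi - 0) * u s := hu.min_mul_le_of_nonpos hconc hu0 (hmem s hs) ht
        _ = Real.pi * u s := by rw [sub_zero]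
    exact le_of_mul_le_mul_left hle hpi
  have hend : Real.pi / 4 + Real.pi / 2 = 3 * Real.pi / 4 := by ring
  have hsum : u (Real.pi / 4) + u (Real.pi / 4 + Real.pi / 2) ≤ 0 := by
    refine IsSolOn.add_nonpos_of_le_neg_sq_mul two_pos (hu.mono (hend ▸ hmem)) fun s hs => ?_
    rw [hend] at hs
    have hsin := seven_tenths_le_sin hs
    have hpow := six_le_rpow_of_solBound_le hp (hmiddle s hs)
    have hfour : 4 ≤ Real.sin s * u s ^ (p - 1) := by nlinarith
    rw [rpow_eq_rpow_sub_one_mul hp (hu0 s (hmem s hs))]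
    linarith [mul_le_mul_of_nonneg_right hfour (hu0 s (hmem s hs))]
  have hleft := hmiddle (Real.pi / 4) ⟨le_rfl, by linarith⟩
  have hright := hmiddle (3 * Real.pi / 4) ⟨by linarith, le_rfl⟩
  rw [hend] at hsum
  linarith

theorem IsSolOn.abs_deriv_le_slopeBound (hp : 1 < p)
    (hu : IsSolOn (Icc 0 Real.pi) (fun t x => -(Real.sin t * x ^ p)) u u')
    (hu0 : ∀ t ∈ Icc 0 Real.pi, 0 ≤ u t) : ∀ t ∈ Icc 0 Real.pi, |u' t| ≤ slopeBound p := by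
  have hle := hu.le_solBound hp hu0
  have hm := solBound_pos (p := p)
  have hfield : ∀ t ∈ Icc 0 Real.pi, |-(Real.sin t * u t ^ p)| ≤ solBound p ^ p := by
    intro t ht
    rw [abs_neg, abs_mul, abs_of_nonneg (Real.rpow_nonneg (hu0 t ht) p)]
    calc |Real.sin t| * u t ^ p ≤ 1 * solBound p ^ p := by
          gcongr
          · exact Real.rpow_nonneg (hu0 t ht) p
          · exact Real.abs_sin_le_one t
          · exact hu0 t ht
          · exact hle t ht
      _ = _ := one_mul _
  intro t ht
  have hslope := hu.abs_deriv_le Real.pi_pos (fun t ht => ⟨hu0 t ht, hle t ht⟩) hfield t ht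
  have hdiv : solBound p / (Real.pi - 0) ≤ solBound p :=
    div_le_self hm.le (by linarith [Real.pi_gt_three])
  have hmul : solBound p ^ p * (Real.pi - 0) ≤ solBound p ^ p * 4 := by
    gcongr
    linarith [Real.pi_le_four]
  unfold slopeBound
  linarith

-- On `[0, ε / (2 * slopeCap p)]` the solution stays above `ε / 2`, where its second derivative is
-- at least a multiple of `μ`.
theorem exists_forall_negSin_large (hp : 1 < p) {ε : ℝ} (hε : 0 < ε) :
    ∃ μ₀ > 0, ∀ μ ≥ μ₀, ∀ u u', IsSolOn (Icc 0 Real.pi) (powField p (negSin μ)) u u' →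
      -slopeCap p ≤ u' 0 → ε ≤ u 0 → slopeCap p < u' Real.pi ∧ solBound p < u Real.pi := by
  have hk := slopeCap_pos (p := p)
  have hk1 := one_lt_slopeCap (p := p)
  have hpi3 := Real.pi_gt_three
  obtain ⟨δ, hδ⟩ : ∃ δ, δ = min (ε / (2 * slopeCap p)) 1 := ⟨_, rfl⟩
  have hδ0 : 0 < δ := hδ ▸ by positivity
  have hδ1 : δ ≤ 1 := hδ ▸ min_le_right _ _
  have hδε : slopeCap p * δ ≤ ε / 2 := by
    have : δ ≤ ε / (2 * slopeCap p) := hδ ▸ min_le_left _ _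
    rw [le_div_iff₀ (by positivity)] at this
    linarith
  obtain ⟨c, hc⟩ : ∃ c, c = Real.sin (δ / 2) * truncPow p (ε / 2) := ⟨_, rfl⟩
  have hsin : 0 < Real.sin (δ / 2) := Real.sin_pos_of_pos_of_lt_pi (by linarith) (by linarith)
  have hc0 : 0 < c := hc ▸ mul_pos hsin (truncPow_pos (by linarith))
  refine ⟨(2 * slopeCap p + 1) * 2 / (c * δ), by positivity, fun μ hμ u u' hu hslope hval => ?_⟩
  have hμ0 : 0 < μ := lt_of_lt_of_le (by positivity) hμ
  have hconv : ∀ t ∈ Icc 0 Real.pi, 0 ≤ powField p (negSin μ) t (u t) :=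
    powField_negSin_nonneg hμ0.le u
  have hlow : ∀ t ∈ Icc 0 δ, ε / 2 ≤ u t := fun t ht => by
    have := hu.tangent_le_of_nonneg hconv le_rfl ht.1 (by linarith [ht.2])
    nlinarith [ht.1, ht.2]
  have hgain : u' (δ / 2) + μ * c * (δ - δ / 2) ≤ u' δ := by
    refine add_mul_sub_le_of_le_hasDerivAt (by linarith)
      (fun t ht => (hu t ⟨by linarith [ht.1], by linarith [ht.2]⟩).2) fun t ht => ?_
    have hsint : Real.sin (δ / 2) ≤ Real.sin t :=
      Real.sin_le_sin_of_le_of_le_pi_div_two (by linarith) (by linarith [ht.2]) ht.1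
    have hpow := truncPow_mono hp (hlow t ⟨by linarith [ht.1], ht.2⟩)
    rw [powField, negSin, neg_mul, neg_neg, mul_assoc, hc]
    have := truncPow_nonneg p (ε / 2)
    have := hsin.le.trans hsint
    gcongr
  have hlarge : slopeCap p + 1 ≤ u' δ := by
    have h₁ := hu.deriv_mono_of_nonneg hconv le_rfl (by linarith : (0 : ℝ) ≤ δ / 2) (by linarith)
    rw [ge_iff_le, div_le_iff₀ (by positivity)] at hμ
    linarith
  refine ⟨by linarith [hu.deriv_mono_of_nonneg hconv hδ0.le (by linarith : δ ≤ _) le_rfl], ?_⟩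
  have htan := hu.tangent_le_of_nonneg hconv hδ0.le (by linarith : δ ≤ _) le_rfl
  nlinarith [hlow δ ⟨hδ0.le, le_rfl⟩, solBound_lt_slopeCap (p := p)]

end Bounds

/-! ### Arcs: symmetry and nondegeneracy -/

/-- A positive solution of the truncated equation on one positive hump which vanishes at both ends
of the hump. -/
structure IsArc (p : ℝ) (U U' : ℝ → ℝ) : Prop where
  isSolOn : IsSolOn (Icc 0 Real.pi) (powField p Real.sin) U U'
  left_eq_zero : U 0 = 0
  right_eq_zero : U Real.pi = 0
  pos : ∀ t ∈ Ioo 0 Real.pi, 0 < U t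

/-- The weight of the linearization of `u'' + sin t * u ^ p = 0` at `U`. -/
noncomputable def linWeight (p : ℝ) (U : ℝ → ℝ) : ℝ → ℝ :=
  fun t => Real.sin t * posPowDeriv p (U t)

theorem pi_div_two_mem_Ioo : Real.pi / 2 ∈ Ioo 0 Real.pi :=
  ⟨Real.pi_div_two_pos, half_lt_self Real.pi_pos⟩

-- The pair is chosen among all `x ≤ c ≤ y` with `U y ≤ U x` so that `x + y` is minimal.
theorem exists_reflection_le {U : ℝ → ℝ} {c : ℝ} (hc : 0 ≤ c) (hU : ContinuousOn U (Icc 0 (2 * c)))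
    (hmono : MonotoneOn U (Icc 0 c)) :
    ∃ x ∈ Icc 0 c, ∃ y ∈ Icc c (2 * c), x + y ≤ 2 * c ∧ U y ≤ U x ∧
      ∀ t ∈ Icc 0 ((x + y) / 2), U t ≤ U (x + y - t) := by
  let K : Set (ℝ × ℝ) :=
    (Icc 0 c ×ˢ Icc c (2 * c)) ∩ (fun z : ℝ × ℝ => U z.1 - U z.2) ⁻¹' Ici 0
  have hrect : IsCompact (Icc 0 c ×ˢ Icc c (2 * c)) := isCompact_Icc.prod isCompact_Icc
  have hfst : ContinuousOn (fun z : ℝ × ℝ => U z.1) (Icc 0 c ×ˢ Icc c (2 * c)) :=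
    hU.comp continuous_fst.continuousOn fun z hz => ⟨hz.1.1, by linarith [hz.1.2]⟩
  have hsnd : ContinuousOn (fun z : ℝ × ℝ => U z.2) (Icc 0 c ×ˢ Icc c (2 * c)) :=
    hU.comp continuous_snd.continuousOn fun z hz => ⟨by linarith [hz.2.1], hz.2.2⟩
  have hK : IsCompact K := hrect.of_isClosed_subset
    ((hfst.sub hsnd).preimage_isClosed_of_isClosed hrect.isClosed isClosed_Ici) inter_subset_left
  have hcK : (c, c) ∈ K :=
    ⟨⟨⟨hc, le_rfl⟩, ⟨le_rfl, by simp only; linarith⟩⟩, by simp⟩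
  obtain ⟨⟨x, y⟩, ⟨⟨hx, hy⟩, hxy⟩, hmin⟩ := hK.exists_isMinOn (f := fun z : ℝ × ℝ => z.1 + z.2)
    ⟨_, hcK⟩ (continuous_fst.add continuous_snd).continuousOn
  have hsum : x + y ≤ c + c := hmin hcK
  refine ⟨x, hx, y, hy, by linarith, sub_nonneg.1 hxy, fun t ht => ?_⟩
  obtain ⟨r, hr⟩ : ∃ r, r = x + y - t := ⟨_, rfl⟩
  rw [← hr]
  rcases le_or_gt r c with hrc | hcr
  · exact hmono ⟨ht.1, by linarith [ht.2]⟩ ⟨by linarith [ht.1, ht.2], hrc⟩ (by linarith [ht.2])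
  by_contra! hlt
  have hcont : ContinuousWithinAt U (Ioo c r) r :=
    (hU r ⟨by linarith, by linarith [ht.1]⟩).mono
      fun s hs => ⟨by linarith [hs.1], by linarith [hs.2, ht.1]⟩
  have := right_nhdsWithin_Ioo_neBot hcr
  obtain ⟨s, hst, hs⟩ :=
    ((hcont.eventually (gt_mem_nhds hlt)).and self_mem_nhdsWithin).exists
  have hsK : (t, s) ∈ K := ⟨⟨⟨ht.1, by simp only; linarith [ht.2]⟩,
    ⟨hs.1.le, by simp only; linarith [hs.2, ht.1]⟩⟩, sub_nonneg.2 hst.le⟩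
  have hle : x + y ≤ t + s := hmin hsK
  linarith [hs.2]

theorem powField_sin_reflection_sub_nonpos (hp : 1 < p) {U : ℝ → ℝ} {l : ℝ} (hl : l ≤ Real.pi / 2)
    (hle : ∀ t ∈ Icc 0 l, U t ≤ U (2 * l - t)) : ∀ t ∈ Icc 0 l,
    powField p Real.sin (2 * l - t) (U (2 * l - t)) - powField p Real.sin t (U t) ≤ 0 := by
  intro t ht
  have hl0 : 0 ≤ l := ht.1.trans ht.2
  have hsin : Real.sin t ≤ Real.sin (2 * l - t) := by
    rw [← sub_nonneg, Real.sin_sub_sin, show (2 * l - t - t) / 2 = l - t by ring,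
      show (2 * l - t + t) / 2 = l by ring]
    have hs := sin_nonneg_of_mem_Icc (t := l - t) ⟨by linarith [ht.2], by linarith [ht.1]⟩
    have hc := Real.cos_nonneg_of_neg_pi_div_two_le_of_le (x := l) (by linarith) hl
    positivity
  have hmul := mul_le_mul hsin (truncPow_mono hp (hle t ht)) (truncPow_nonneg p _)
    (sin_nonneg_of_mem_Icc (t := 2 * l - t) ⟨by linarith [ht.2], by linarith [ht.1]⟩)
  unfold powField
  linarith

namespace IsArc

variable {U U' : ℝ → ℝ}

theorem nonneg (hU : IsArc p U U') : ∀ t ∈ Icc 0 Real.pi, 0 ≤ U t := by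
  intro t ht
  rcases ht.1.eq_or_lt with rfl | h₀
  · exact hU.left_eq_zero.ge
  rcases ht.2.eq_or_lt with rfl | h₁
  · exact hU.right_eq_zero.ge
  exact (hU.pos t ⟨h₀, h₁⟩).le

theorem reflect (hU : IsArc p U U') :
    IsArc p (fun t => U (Real.pi - t)) (fun t => -U' (Real.pi - t)) where
  isSolOn := hU.isSolOn.reflect powField_sin_pi_sub
  left_eq_zero := by simpa using hU.right_eq_zero
  right_eq_zero := by simpa using hU.left_eq_zero
  pos t ht := hU.pos _ ⟨by linarith [ht.2], by linarith [ht.1]⟩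

theorem deriv_zero_pos (hU : IsArc p U U') : 0 < U' 0 := by
  have htan := hU.isSolOn.le_tangent_of_nonpos (powField_sin_nonpos U) le_rfl
    pi_div_two_mem_Ioo.1.le pi_div_two_mem_Ioo.2.le
  rw [hU.left_eq_zero, zero_add, sub_zero] at htan
  exact pos_of_mul_pos_left ((hU.pos _ pi_div_two_mem_Ioo).trans_le htan)
    pi_div_two_mem_Ioo.1.le

theorem deriv_pi_neg (hU : IsArc p U U') : U' Real.pi < 0 := by
  simpa using hU.reflect.deriv_zero_pos

theorem lt_truncLevel (hU : IsArc p U U') (hcap : U' 0 ≤ slopeCap p) :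
    ∀ t ∈ Icc 0 Real.pi, U t < truncLevel p := by
  intro t ht
  have htan := hU.isSolOn.le_tangent_of_nonpos (powField_sin_nonpos U) le_rfl ht.1 ht.2
  have hmul : U' 0 * t ≤ slopeCap p * 4 :=
    mul_le_mul hcap (ht.2.trans Real.pi_le_four) ht.1 slopeCap_pos.le
  rw [hU.left_eq_zero, zero_add, sub_zero] at htan
  unfold truncLevel
  linarith

theorem mem_Icc_truncLevel (hU : IsArc p U U') (hcap : U' 0 ≤ slopeCap p) :
    ∀ t ∈ Icc 0 Real.pi, U t ∈ Icc 0 (truncLevel p) :=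
  fun t ht => ⟨hU.nonneg t ht, (hU.lt_truncLevel hcap t ht).le⟩

theorem monotoneOn_of_deriv_eq_zero (hU : IsArc p U U') {c : ℝ} (hc : c ∈ Icc 0 Real.pi)
    (hz : U' c = 0) : MonotoneOn U (Icc 0 c) := by
  intro s hs t ht hst
  have htan := hU.isSolOn.add_deriv_right_le_of_nonpos (powField_sin_nonpos U) hs.1 hst
    (ht.2.trans hc.2)
  have hderiv := hU.isSolOn.deriv_anti_of_nonpos (powField_sin_nonpos U) ht.1 ht.2 hc.2
  rw [hz] at hderiv
  linarith [mul_nonneg hderiv (sub_nonneg.2 hst)]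

-- The method of moving planes: if `c < π / 2`, move the plane to the first point `l ≤ c` at which
-- `t ↦ U (2 * l - t) - U t` touches zero. This function is concave and positive at `0`.
theorem pi_div_two_le_of_deriv_eq_zero (hp : 1 < p) (hU : IsArc p U U') {c : ℝ}
    (hc : c ∈ Ioo 0 Real.pi) (hz : U' c = 0) : Real.pi / 2 ≤ c := by
  by_contra! hlt
  obtain ⟨x, hx, y, hy, hsum, hxy, hle⟩ := exists_reflection_le hc.1.le
    (hU.isSolOn.continuousOn.mono (Icc_subset_Icc_right (by linarith)))
    (hU.monotoneOn_of_deriv_eq_zero (Ioo_subset_Icc_self hc) hz)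
  obtain ⟨l, hl⟩ : ∃ l, 2 * l = x + y := ⟨(x + y) / 2, by ring⟩
  rw [show (x + y) / 2 = l by linarith, ← hl] at hle
  have hl0 : 0 < l := by linarith [hx.1, hy.1, hc.1]
  have hdiff : IsSolOn (Icc 0 l)
      (fun t _ => powField p Real.sin (2 * l - t) (U (2 * l - t)) - powField p Real.sin t (U t))
      (fun t => U (2 * l - t) - U t) (fun t => -U' (2 * l - t) - U' t) := fun t ht => by
    have hR := hU.isSolOn.comp_const_sub (c := 2 * l) (r := Icc 0 l)
      (fun t ht => ⟨by linarith [ht.2], by linarith [ht.1]⟩) t ht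
    have hI := hU.isSolOn t ⟨ht.1, by linarith [ht.2]⟩
    exact ⟨hR.1.sub hI.1, hR.2.sub hI.2⟩
  have hconc := powField_sin_reflection_sub_nonpos hp (by linarith) hle
  have hpos : 0 < U (2 * l) := hU.pos _ ⟨by linarith, by linarith⟩
  have hxl : x ≤ l := by linarith [hx.2, hy.1]
  have hleft := hdiff.add_deriv_right_le_of_nonpos hconc le_rfl hx.1 hxl
  have hslope : 0 ≤ -U' (2 * l - x) - U' x := by
    rcases hxl.eq_or_lt with rfl | hxl
    · rw [show x = c by linarith [hx.2, hy.1], show 2 * c - c = c by ring, hz]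
      simp
    · have hright := hdiff.le_tangent_of_nonpos hconc hx.1 hxl.le le_rfl
      rw [show 2 * l - l = l by ring, show 2 * l - x = y by linarith, sub_self] at hright
      rw [show 2 * l - x = y by linarith]
      exact nonneg_of_mul_nonneg_left (by linarith) (sub_pos.2 hxl)
  rw [show 2 * l - x = y by linarith] at hleft hslope
  simp only [sub_zero, hU.left_eq_zero] at hleft
  linarith [mul_nonneg hslope hx.1]

theorem deriv_pi_div_two (hp : 1 < p) (hU : IsArc p U U') : U' (Real.pi / 2) = 0 := by
  obtain ⟨c, hc, hz⟩ : ∃ c ∈ Ioo 0 Real.pi, U' c = 0 :=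
    exists_hasDerivAt_eq_zero Real.pi_pos hU.isSolOn.continuousOn
      (hU.left_eq_zero.trans hU.right_eq_zero.symm)
      fun t ht => (hU.isSolOn t (Ioo_subset_Icc_self ht)).1
  have hleft := hU.pi_div_two_le_of_deriv_eq_zero hp hc hz
  have hright := hU.reflect.pi_div_two_le_of_deriv_eq_zero hp (c := Real.pi - c)
    ⟨by linarith [hc.2], by linarith [hc.1]⟩ (by simpa using hz)
  rwa [show Real.pi / 2 = c by linarith]

theorem hasDerivAt_truncPow_comp (hp : 1 < p) (hU : IsArc p U U') (hcap : U' 0 ≤ slopeCap p) :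
    ∀ t ∈ Icc 0 Real.pi,
      HasDerivAt (fun t => truncPow p (U t)) (posPowDeriv p (U t) * U' t) t := by
  intro t ht
  refine HasDerivAt.comp t (h₂ := truncPow p) ?_ (hU.isSolOn t ht).1
  refine (hasDerivAt_max_zero_rpow hp _).congr_of_eventuallyEq ?_
  filter_upwards [gt_mem_nhds (hU.lt_truncLevel hcap t ht)] with y hy
  exact truncPow_of_le hy.le

theorem isSolOn_deriv (hp : 1 < p) (hU : IsArc p U U') (hcap : U' 0 ≤ slopeCap p) :
    IsSolOn (Icc 0 Real.pi)
      (fun t x => -(Real.cos t * truncPow p (U t)) - linWeight p U t * x)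
      U' (fun t => powField p Real.sin t (U t)) := fun t ht =>
  ⟨(hU.isSolOn t ht).2, ((Real.hasDerivAt_sin t).mul
    (hU.hasDerivAt_truncPow_comp hp hcap t ht)).neg.congr_deriv (by unfold linWeight; ring)⟩

theorem linWeight_mul_self (hp : 1 < p) (hU : IsArc p U U') (hcap : U' 0 ≤ slopeCap p) :
    ∀ t ∈ Icc 0 Real.pi, linWeight p U t * U t = p * (Real.sin t * truncPow p (U t)) := by
  intro t ht
  rw [linWeight, posPowDeriv_of_nonneg (hU.nonneg t ht),
    truncPow_of_mem_Icc (hU.mem_Icc_truncLevel hcap t ht),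
    rpow_eq_rpow_sub_one_mul hp (hU.nonneg t ht)]
  ring

section Nondegeneracy

variable {w w' : ℝ → ℝ} (hp : 1 < p) (hU : IsArc p U U') (hcap : U' 0 ≤ slopeCap p)
  (hw : IsSolOn (Icc 0 Real.pi) (linField (linWeight p U)) w w')

include hp hU hcap hw

theorem hasDerivAt_linearized_wronskian : ∀ t ∈ Icc 0 Real.pi,
    HasDerivAt (fun t => U' t * w t - U t * w' t)
      ((p - 1) * (Real.sin t * truncPow p (U t)) * w t) t := by
  intro t ht
  refine (IsSolOn.hasDerivAt_wronskian (w'' := fun t => powField p Real.sin t (U t))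
    (z'' := fun t => linField (linWeight p U) t (w t)) hU.isSolOn hw t ht).congr_deriv ?_
  have := hU.linWeight_mul_self hp hcap t ht
  unfold powField linField
  linear_combination w t * this

-- Sturm comparison with `U'`, whose linearized equation has a defect of the sign of `cos`.
theorem linearized_pos_of_le_pi_div_two (hw0 : w 0 = 0) (hw1 : 0 < w' 0) :
    ∀ t ∈ Ioc 0 (Real.pi / 2), 0 < w t := by
  have hsub : Icc 0 (Real.pi / 2) ⊆ Icc 0 Real.pi :=
    Icc_subset_Icc_right pi_div_two_mem_Ioo.2.le
  refine IsSolOn.pos_of_wronskian_pos (w'' := fun t => linField (linWeight p U) t (w t))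
    (z'' := fun t => -(Real.cos t * truncPow p (U t)) - linWeight p U t * U' t)
    (hw.mono hsub) ((hU.isSolOn_deriv hp hcap).mono hsub) (fun t ht => ?_) hw0.ge ?_
    fun t ht hwt => ?_
  · rw [← hU.deriv_pi_div_two hp]
    exact hU.isSolOn.deriv_anti_of_nonpos (powField_sin_nonpos U) ht.1 ht.2 pi_div_two_mem_Ioo.2.le
  · simpa [hw0] using mul_pos hw1 hU.deriv_zero_pos
  · have hcos := Real.cos_nonneg_of_neg_pi_div_two_le_of_le (x := t)
      (by linarith [ht.1, Real.pi_pos]) ht.2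
    unfold linField
    linarith [mul_nonneg hwt (mul_nonneg hcos (truncPow_nonneg p (U t)))]

theorem linearized_wronskian_pos {T : ℝ} (hT : T ∈ Icc (Real.pi / 2) Real.pi)
    (hpos : ∀ t ∈ Ioo 0 (Real.pi / 2), 0 < w t) (hnonneg : ∀ t ∈ Icc (Real.pi / 2) T, 0 ≤ w t)
    (hw0 : w 0 = 0) : 0 < U' T * w T - U T * w' T := by
  have hpi := Real.pi_pos
  have hderiv := hU.hasDerivAt_linearized_wronskian hp hcap hw
  have hhalf := lt_of_hasDerivAt_pos pi_div_two_mem_Ioo.1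
    (fun t ht => hderiv t ⟨ht.1, by linarith [ht.2]⟩) fun t ht =>
      have ht' : t < Real.pi := by linarith [ht.2]
      mul_pos (mul_pos (sub_pos.2 hp) (mul_pos (Real.sin_pos_of_pos_of_lt_pi ht.1 ht')
        (truncPow_pos (hU.pos t ⟨ht.1, ht'⟩)))) (hpos t ht)
  have hrest := add_mul_sub_le_of_le_hasDerivAt (c := 0) hT.1
    (fun t ht => hderiv t ⟨by linarith [ht.1], ht.2.trans hT.2⟩) fun t ht =>
      mul_nonneg (mul_nonneg (sub_nonneg.2 hp.le) (mul_nonneg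
        (sin_nonneg_of_mem_Icc ⟨by linarith [ht.1], ht.2.trans hT.2⟩) (truncPow_nonneg p _)))
        (hnonneg t ht)
  simp only [hw0, hU.left_eq_zero, mul_zero, zero_mul, sub_self, add_zero] at hhalf hrest
  exact hhalf.trans_le hrest

theorem exists_linearized_zero (hw0 : w 0 = 0) (hw1 : 0 < w' 0) :
    ∃ s ∈ Ioo (Real.pi / 2) Real.pi, w s = 0 ∧ w' s < 0 := by
  have hpi := Real.pi_pos
  have hpos := hU.linearized_pos_of_le_pi_div_two hp hcap hw hw0 hw1
  have hpos' : ∀ t ∈ Ioo 0 (Real.pi / 2), 0 < w t := fun t ht => hpos t ⟨ht.1, ht.2.le⟩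
  have hmid := hpos (Real.pi / 2) ⟨by linarith, le_rfl⟩
  obtain ⟨r, hr, hneg⟩ : ∃ r ∈ Icc (Real.pi / 2) Real.pi, w r < 0 := by
    by_contra! hnonneg
    have hW := hU.linearized_wronskian_pos hp hcap hw ⟨by linarith, le_rfl⟩ hpos' hnonneg hw0
    rw [hU.right_eq_zero, zero_mul, sub_zero] at hW
    exact hW.not_ge (mul_nonpos_of_nonpos_of_nonneg hU.deriv_pi_neg.le
      (hnonneg _ ⟨by linarith, le_rfl⟩))
  obtain ⟨s, hs, hws, hbefore⟩ := exists_first_eq (φ := fun t => -w t) (c := 0) hr.1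
    (hw.continuousOn.mono (Icc_subset_Icc (by linarith) hr.2)).neg (by linarith) (by linarith)
  rw [neg_eq_zero] at hws
  have hs₁ : Real.pi / 2 < s := hs.1.lt_of_ne (by rintro rfl; linarith)
  have hs₂ : s < Real.pi := (hs.2.lt_of_ne (by rintro rfl; linarith)).trans_le hr.2
  have hW := hU.linearized_wronskian_pos hp hcap hw ⟨hs.1, hs₂.le⟩ hpos' (fun t ht =>
    ht.2.eq_or_lt.elim (fun h => (h ▸ hws).ge)
      fun h => (neg_lt_zero.1 (hbefore t ⟨ht.1, h⟩)).le) hw0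
  rw [hws, mul_zero, zero_sub, neg_pos] at hW
  exact ⟨s, ⟨hs₁, hs₂⟩, hws, neg_of_mul_neg_right hW (hU.nonneg s ⟨by linarith, hs₂.le⟩)⟩

theorem linearized_pi_neg (hw0 : w 0 = 0) (hw1 : 0 < w' 0) : w Real.pi < 0 := by
  have hpi := Real.pi_pos
  obtain ⟨s, hs, hws, hws'⟩ := hU.exists_linearized_zero hp hcap hw hw0 hw1
  have hsub : Icc s Real.pi ⊆ Icc 0 Real.pi := Icc_subset_Icc_left (by linarith [hs.1])
  have hU's : U' s < 0 := by
    have := lt_of_hasDerivAt_pos (g := fun t => -U' t) hs.1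
      (fun t ht => (hU.isSolOn t ⟨by linarith [ht.1], by linarith [ht.2, hs.2]⟩).2.neg)
      fun t ht => by
        rw [powField, neg_neg]
        have ht' : t ∈ Ioo 0 Real.pi := ⟨by linarith [ht.1], ht.2.trans hs.2⟩
        exact mul_pos (Real.sin_pos_of_pos_of_lt_pi ht'.1 ht'.2) (truncPow_pos (hU.pos t ht'))
    rw [hU.deriv_pi_div_two hp] at this
    linarith
  refine neg_pos.1 (IsSolOn.pos_of_wronskian_pos
    (w'' := fun t => -linField (linWeight p U) t (w t))
    (z'' := fun t => -(-(Real.cos t * truncPow p (U t)) - linWeight p U t * U' t))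
    ((hw.mono hsub).neg.congr fun t _ => by rw [neg_neg])
    (((hU.isSolOn_deriv hp hcap).mono hsub).neg.congr fun t _ => by rw [neg_neg])
    (fun t ht => ?_) (by simp [hws]) ?_ (fun t ht hwt => ?_) Real.pi ⟨hs.2, le_rfl⟩)
  · exact neg_nonneg.2 ((hU.isSolOn.deriv_anti_of_nonpos (powField_sin_nonpos U)
      (by linarith [hs.1]) ht.1 ht.2).trans hU's.le)
  · simpa [hws] using mul_pos_of_neg_of_neg hws' hU's
  · have hcos := Real.cos_nonpos_of_pi_div_two_le_of_le (x := t) (by linarith [ht.1, hs.1])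
      (by linarith [ht.2])
    unfold linField
    linarith [mul_nonneg hwt (mul_nonneg (neg_nonneg.2 hcos) (truncPow_nonneg p (U t)))]

end Nondegeneracy

end IsArc

theorem IsSolOn.abs_le {a b D : ℝ} {C : ℝ≥0} {F : ℝ → ℝ → ℝ} {w w' : ℝ → ℝ}
    (hF : ∀ t ∈ Icc a b, LipschitzWith C (F t)) (hF0 : ∀ t ∈ Icc a b, F t 0 = 0)
    (hw : IsSolOn (Icc a b) F w w') (h₀ : |w a| ≤ D) (h₁ : |w' a| ≤ D) :
    ∀ t ∈ Icc a b, |w t| ≤ D * Real.exp ((1 + C) * (b - a)) := fun t ht => by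
  have hzero : IsSolOn (Icc a b) F (fun _ => 0) (fun _ => 0) := fun t ht =>
    ⟨hasDerivAt_const _ _, (hasDerivAt_const t (0 : ℝ)).congr_deriv (hF0 t ht).symm⟩
  simpa using (hw.dist_le hF hzero (by simpa using h₀) (by simpa using h₁) t ht).1

theorem exists_isSolOn_linField {a b : ℝ} {q : ℝ → ℝ} (hab : a ≤ b)
    (hq : ContinuousOn q (Icc a b)) (x y : ℝ) :
    ∃ w w', IsSolOn (Icc a b) (linField q) w w' ∧ w a = x ∧ w' a = y := by
  obtain ⟨C, hC⟩ := isCompact_Icc.exists_bound_of_continuousOn hq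
  have hC0 : 0 ≤ C := (abs_nonneg _).trans (hC a ⟨le_rfl, hab⟩)
  lift C to ℝ≥0 using hC0
  set Q : ℝ → ℝ := fun t => q (projIcc a b hab t) with hQ
  have hQC (t : ℝ) : |Q t| ≤ C := hC _ (projIcc a b hab t).2
  have hQcont : Continuous Q :=
    hq.comp_continuous (continuous_subtype_val.comp continuous_projIcc)
      fun t => (projIcc a b hab t).2
  set D := max |x| |y|
  set R := D * Real.exp ((1 + C) * (b - a))
  have hR : -R ≤ R := neg_le_self (by positivity)
  -- Truncating in the unknown makes the field bounded; by Grönwall the solution never reaches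
  -- the truncation level.
  set clamp : ℝ → ℝ := fun x => projIcc (-R) R hR x
  have hclamp {x : ℝ} (hx : |x| ≤ R) : clamp x = x := by
    simp only [clamp, projIcc_of_mem _ (abs_le.1 hx)]
  have hlip (t : ℝ) : LipschitzWith C (fun x => linField Q t (clamp x)) := by
    simpa using! (lipschitzWith_linField (hQC t)).comp
      ((LipschitzWith.subtype_val _).comp (LipschitzWith.projIcc hR))
  obtain ⟨w, w', hw, hwa, hwa'⟩ := exists_isSolOn_of_bounded (B := C * R) hab hlip
    (fun x => (hQcont.mul continuous_const).neg)
    (fun t x => by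
      rw [linField, abs_neg, abs_mul]
      exact mul_le_mul (hQC t) (abs_le.2 (projIcc (-R) R hR x).2) (abs_nonneg _) C.2) x y
  have hbound : ∀ t ∈ Icc a b, |w t| ≤ R := hw.abs_le (fun t _ => hlip t)
    (fun t _ => by simp [linField, hclamp (x := 0) (by simpa using hR)])
    (by simp [hwa, D]) (by simp [hwa', D])
  exact ⟨w, w', hw.congr fun t ht => by
    simp only [hclamp (hbound t ht), linField, hQ, projIcc_of_mem _ ht], hwa, hwa'⟩

theorem IsSolOn.const_mul {s : Set ℝ} {q w w' : ℝ → ℝ} (hw : IsSolOn s (linField q) w w') (c : ℝ) :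
    IsSolOn s (linField q) (fun t => c * w t) (fun t => c * w' t) := fun t ht =>
  ⟨(hw t ht).1.const_mul c, ((hw t ht).2.const_mul c).congr_deriv (by unfold linField; ring)⟩

theorem exists_forall_linField_dist_le {a b : ℝ} (hab : a ≤ b) {q₀ : ℝ → ℝ}
    (hq₀ : ContinuousOn q₀ (Icc a b)) {M ε : ℝ} (hM : 0 ≤ M) (hε : 0 < ε) :
    ∃ δ > 0, ∀ q w w' v v', IsSolOn (Icc a b) (linField q) w w' →
      IsSolOn (Icc a b) (linField q₀) v v' → (∀ t ∈ Icc a b, |q t - q₀ t| ≤ δ) →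
      |v a| ≤ M → |v' a| ≤ M → |w a - v a| ≤ δ → |w' a - v' a| ≤ δ →
      |w b - v b| ≤ ε ∧ |w' b - v' b| ≤ ε := by
  obtain ⟨C, hC⟩ := isCompact_Icc.exists_bound_of_continuousOn hq₀
  have hC0 : 0 ≤ C := (abs_nonneg _).trans (hC a ⟨le_rfl, hab⟩)
  lift C to ℝ≥0 using hC0
  set R := M * Real.exp ((1 + C) * (b - a))
  set E := Real.exp ((1 + ((C + 1 : ℝ≥0) : ℝ)) * (b - a))
  refine ⟨min 1 (ε / ((1 + R) * E)), by positivity, fun q w w' v v' hw hv hq hva hva' h₀ h₁ => ?_⟩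
  set δ := min 1 (ε / ((1 + R) * E))
  have hδ0 : 0 ≤ δ := by positivity
  have hδ : (δ + δ * R) * E ≤ ε := by
    have : δ ≤ ε / ((1 + R) * E) := min_le_right _ _
    rw [le_div_iff₀ (by positivity)] at this
    linarith
  have hvR := hv.abs_le (fun t ht => lipschitzWith_linField (hC t ht)) (by simp [linField]) hva hva'
  have hqC : ∀ t ∈ Icc a b, |q t| ≤ (C + 1 : ℝ≥0) := fun t ht => by
    have := abs_sub_abs_le_abs_sub (q t) (q₀ t)
    have := hC t ht
    rw [Real.norm_eq_abs] at this
    push_cast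
    linarith [hq t ht, min_le_left 1 (ε / ((1 + R) * E))]
  have key := hw.dist_le_of_approx (fun t ht => lipschitzWith_linField (hqC t ht))
    (hv : IsSolOn (Icc a b) (fun t _ => linField q₀ t (v t)) v v') (e := δ * R)
    (fun t ht => by
      have heq : linField q₀ t (v t) - linField q t (v t) = (q t - q₀ t) * v t := by
        unfold linField; ring
      rw [heq, abs_mul]
      exact mul_le_mul (hq t ht) (hvR t ht) (abs_nonneg _) hδ0) h₀ h₁ b ⟨hab, le_rfl⟩
  exact ⟨key.1.trans hδ, key.2.trans hδ⟩

/-- The cone `0 ≤ x ≤ d y`, `0 < y` of initial data `(x, y)` in the phase plane. -/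
def ForwardCone (d x y : ℝ) : Prop := 0 ≤ x ∧ 0 < y ∧ x ≤ d * y

/-- The weight `q` flips the sign, up to the aperture `δ`: solutions of `w'' + q w = 0` on `[0, π]`
which start in the forward cone of aperture `δ` end negative, with `|w'| ≤ B |w|`. -/
def IsFlipping (δ B : ℝ) (q : ℝ → ℝ) : Prop :=
  ∀ w w', IsSolOn (Icc 0 Real.pi) (linField q) w w' → ForwardCone δ (w 0) (w' 0) →
    w Real.pi < 0 ∧ |w' Real.pi| ≤ B * |w Real.pi|

/-- The equation `w'' + q w = 0` on `[0, π]` behaves like `w'' = 0`: solutions which start in a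
forward cone of aperture `d ≤ c` end positive and in the forward cone of aperture `2 (d + 4)`. -/
def IsNearlyFree (c : ℝ) (q : ℝ → ℝ) : Prop :=
  ∀ w w', IsSolOn (Icc 0 Real.pi) (linField q) w w' → ∀ d ∈ Icc 0 c, ForwardCone d (w 0) (w' 0) →
    0 < w Real.pi ∧ ForwardCone (2 * (d + 4)) (w Real.pi) (w' Real.pi)

theorem exists_eq_mul_of_deriv_zero_pos {q w w' : ℝ → ℝ}
    (hw : IsSolOn (Icc 0 Real.pi) (linField q) w w') (h : 0 < w' 0) :
    ∃ c > 0, ∃ v v', IsSolOn (Icc 0 Real.pi) (linField q) v v' ∧ v' 0 = 1 ∧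
      w = (fun t => c * v t) ∧ w' = fun t => c * v' t :=
  ⟨w' 0, h, _, _, hw.const_mul (w' 0)⁻¹, inv_mul_cancel₀ h.ne',
    funext fun _ => (mul_inv_cancel_left₀ h.ne' _).symm,
    funext fun _ => (mul_inv_cancel_left₀ h.ne' _).symm⟩

theorem IsArc.continuousOn_linWeight (hp : 1 < p) {U U' : ℝ → ℝ} (hU : IsArc p U U') :
    ContinuousOn (linWeight p U) (Icc 0 Real.pi) :=
  Real.continuous_sin.continuousOn.mul
    ((continuous_posPowDeriv hp).comp_continuousOn hU.isSolOn.continuousOn)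

theorem IsArc.exists_isFlipping (hp : 1 < p) {U U' : ℝ → ℝ} (hU : IsArc p U U')
    (hcap : U' 0 ≤ slopeCap p) :
    ∃ δ > 0, ∃ B > 0, ∀ q, (∀ t ∈ Icc 0 Real.pi, |q t - linWeight p U t| ≤ δ) →
      IsFlipping δ B q := by
  obtain ⟨v, v', hv, hv0, hv0'⟩ :=
    exists_isSolOn_linField Real.pi_pos.le (hU.continuousOn_linWeight hp) 0 1
  have hneg : v Real.pi < 0 := hU.linearized_pi_neg hp hcap hv hv0 (hv0' ▸ one_pos)
  set n := -v Real.pi / 2 with hn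
  have hn0 : 0 < n := by linarith
  obtain ⟨δ, hδ, hclose⟩ := exists_forall_linField_dist_le Real.pi_pos.le
    (hU.continuousOn_linWeight hp) zero_le_one hn0
  refine ⟨δ, hδ, (|v' Real.pi| + n) / n, by positivity, fun q hq w w' hw ⟨hw0, hw1, hwδ⟩ => ?_⟩
  obtain ⟨r, hr, z, z', hz, hz1, rfl, rfl⟩ := exists_eq_mul_of_deriv_zero_pos hw hw1
  rw [mul_left_comm, hz1, mul_one] at hwδ
  obtain ⟨h₁, h₂⟩ := hclose q z z' v v' hz hv hq (by simp [hv0]) (by simp [hv0'])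
    (by rw [hv0, sub_zero, abs_of_nonneg (nonneg_of_mul_nonneg_right hw0 hr)]
        exact le_of_mul_le_mul_left hwδ hr) (by simpa [hz1, hv0'] using hδ.le)
  have hzn : z Real.pi ≤ -n := by linarith [(abs_le.1 h₁).2]
  have hz' : |z' Real.pi| ≤ |v' Real.pi| + n := by
    linarith [abs_sub_abs_le_abs_sub (z' Real.pi) (v' Real.pi)]
  rw [abs_mul, abs_mul, mul_left_comm]
  refine ⟨mul_neg_of_pos_of_neg hr (by linarith), mul_le_mul_of_nonneg_left ?_ (abs_nonneg _)⟩
  rw [abs_of_neg (by linarith : z Real.pi < 0), div_mul_eq_mul_div, le_div_iff₀ hn0]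
  exact mul_le_mul hz' (le_neg_of_le_neg hzn) hn0.le (by positivity)

theorem exists_isNearlyFree (c : ℝ) :
    ∃ η > 0, ∀ q, (∀ t ∈ Icc 0 Real.pi, |q t| ≤ η) → IsNearlyFree c q := by
  have hpi := Real.pi_gt_three
  have hpi' := Real.pi_lt_d2
  obtain ⟨η, hη, hclose⟩ := exists_forall_linField_dist_le Real.pi_pos.le
    (continuousOn_const (c := (0 : ℝ))) (M := max 1 c) (by positivity) one_half_pos
  refine ⟨η, hη, fun q hq w w' hw d hd ⟨hw0, hw1, hwd⟩ => ?_⟩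
  obtain ⟨r, hr, z, z', hz, hz1, rfl, rfl⟩ := exists_eq_mul_of_deriv_zero_pos hw hw1
  rw [mul_left_comm, hz1, mul_one] at hwd
  have hz0 : 0 ≤ z 0 := nonneg_of_mul_nonneg_right hw0 hr
  have hzd : z 0 ≤ d := le_of_mul_le_mul_left hwd hr
  have haff : IsSolOn (Icc 0 Real.pi) (linField fun _ => 0) (fun t => z 0 + t) (fun _ => 1) :=
    fun t _ => ⟨(hasDerivAt_id t).const_add _, (hasDerivAt_const _ _).congr_deriv
      (by simp [linField])⟩
  obtain ⟨h₁, h₂⟩ := hclose q z z' _ _ hz haff (by simpa using hq)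
    (by rw [add_zero, abs_of_nonneg hz0]; exact (hzd.trans hd.2).trans (le_max_right _ _))
    (by simp) (by simpa using hη.le) (by simpa [hz1] using hη.le)
  rw [abs_le] at h₁ h₂
  have hpos : 0 < z Real.pi := by linarith
  refine ⟨mul_pos hr hpos, mul_nonneg hr.le hpos.le, mul_pos hr (by linarith), ?_⟩
  rw [mul_left_comm]
  refine mul_le_mul_of_nonneg_left ?_ hr.le
  nlinarith [hd.1]

/-- The difference quotient of `truncPow p` between `u` and `v`, equal to the derivative of the
untruncated power when `u = v`. -/
noncomputable def truncPowSlope (p u v : ℝ) : ℝ :=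
  if u = v then posPowDeriv p u else (truncPow p u - truncPow p v) / (u - v)

theorem truncPowSlope_mul (p u v : ℝ) :
    truncPowSlope p u v * (u - v) = truncPow p u - truncPow p v := by
  unfold truncPowSlope
  split_ifs with h
  · simp [h]
  · exact div_mul_cancel₀ _ (sub_ne_zero.2 h)

theorem exists_truncPowSlope_eq (hp : 1 < p) {u v : ℝ} (hu : u ≤ truncLevel p)
    (hv : v ≤ truncLevel p) : ∃ ξ ∈ uIcc u v, truncPowSlope p u v = posPowDeriv p ξ := by
  unfold truncPowSlope
  split_ifs with h
  · exact ⟨u, left_mem_uIcc, rfl⟩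
  · obtain ⟨ξ, hξ, heq⟩ := exists_truncPow_sub_eq hp hu hv
    exact ⟨ξ, hξ, by rw [heq, mul_div_cancel_right₀ _ (sub_ne_zero.2 h)]⟩

theorem rpow_sub_one_le_truncPowSlope (hp : 1 < p) {u v : ℝ} (hu : u ∈ Icc 0 (truncLevel p))
    (hv : v ∈ Icc 0 (truncLevel p)) : u ^ (p - 1) ≤ truncPowSlope p u v := by
  unfold truncPowSlope
  split_ifs with h
  · rw [posPowDeriv_of_nonneg hu.1]
    exact le_mul_of_one_le_left (Real.rpow_nonneg hu.1 _) hp.le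
  · exact rpow_sub_one_le_truncPow_slope hp hu hv h

/-- The weight of the linear equation satisfied by the difference `u - v` of two solutions of
`u'' + q(t) truncPow p u = 0`. -/
noncomputable def secantWeight (p : ℝ) (q u v : ℝ → ℝ) : ℝ → ℝ :=
  fun t => q t * truncPowSlope p (u t) (v t)

theorem IsSolOn.sub {s : Set ℝ} {q u u' v v' : ℝ → ℝ} (hu : IsSolOn s (powField p q) u u')
    (hv : IsSolOn s (powField p q) v v') :
    IsSolOn s (linField (secantWeight p q u v)) (fun t => u t - v t) (fun t => u' t - v' t) :=
  fun t ht => ⟨(hu t ht).1.sub (hv t ht).1, ((hu t ht).2.sub (hv t ht).2).congr_deriv (by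
    unfold powField linField secantWeight
    linear_combination q t * truncPowSlope_mul p (u t) (v t))⟩

theorem abs_secantWeight_sub_linWeight_le (hp : 1 < p) {ρ δ t : ℝ} {U u v : ℝ → ℝ}
    (hU : ∀ y, |U t - y| ≤ ρ → |posPowDeriv p y - posPowDeriv p (U t)| ≤ δ)
    (hu : |U t - u t| ≤ ρ) (hv : |U t - v t| ≤ ρ) (hut : u t ≤ truncLevel p)
    (hvt : v t ≤ truncLevel p) : |secantWeight p Real.sin u v t - linWeight p U t| ≤ δ := by
  obtain ⟨ξ, hξ, heq⟩ := exists_truncPowSlope_eq hp hut hvt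
  have hball : ∀ y, |U t - y| ≤ ρ ↔ y ∈ Metric.closedBall (U t) ρ := fun y => by
    rw [Metric.mem_closedBall, Real.dist_eq, abs_sub_comm]
  have hξρ : |U t - ξ| ≤ ρ := by
    rw [hball] at hu hv ⊢
    rw [Real.closedBall_eq_Icc] at hu hv ⊢
    exact ordConnected_Icc.uIcc_subset hu hv hξ
  unfold secantWeight linWeight
  rw [heq, ← mul_sub, abs_mul]
  exact (mul_le_of_le_one_left (abs_nonneg _) (Real.abs_sin_le_one t)).trans (hU ξ hξρ)

theorem exists_isSolOn_powField (hp : 1 < p) {a b : ℝ} (hab : a ≤ b) {q : ℝ → ℝ} {C : ℝ≥0}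
    (hq : Continuous q) (hC : ∀ t, |q t| ≤ C) (x y : ℝ) :
    ∃ u u', IsSolOn (Icc a b) (powField p q) u u' ∧ u a = x ∧ u' a = y := by
  refine exists_isSolOn_of_bounded hab (fun t => lipschitzWith_powField hp (hC t))
    (fun x => (hq.mul continuous_const).neg) (B := C * truncLevel p ^ p) (fun t x => ?_) x y
  unfold powField
  rw [abs_neg, abs_mul, abs_of_nonneg (truncPow_nonneg p x)]
  exact mul_le_mul (hC t) (truncPow_le hp x) (truncPow_nonneg p x) C.2

theorem IsSolOn.nonneg_of_nonpos {a b : ℝ} {F : ℝ → ℝ → ℝ} {u u' : ℝ → ℝ}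
    (hu : IsSolOn (Icc a b) F u u') (hF : ∀ t ∈ Icc a b, F t (u t) ≤ 0) (ha : 0 ≤ u a)
    (hb : 0 ≤ u b) : ∀ t ∈ Icc a b, 0 ≤ u t := fun t ht =>
  neg_nonpos.1 (hu.neg.le_of_nonneg (fun t ht => by simpa using hF t ht) (neg_nonpos.2 ha)
    (neg_nonpos.2 hb) t ht)

theorem IsSolOn.le_truncLevel {u u' : ℝ → ℝ}
    (hu : IsSolOn (Icc 0 Real.pi) (powField p Real.sin) u u')
    (h₀ : u 0 ≤ 1) (h₁ : u' 0 ≤ slopeCap p) : ∀ t ∈ Icc 0 Real.pi, u t ≤ truncLevel p := by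
  intro t ht
  have htangent := hu.le_tangent_of_nonpos (powField_sin_nonpos u) le_rfl ht.1 ht.2
  have hslope : u' 0 * t ≤ slopeCap p * 4 :=
    mul_le_mul h₁ (ht.2.trans Real.pi_le_four) ht.1 slopeCap_pos.le
  unfold truncLevel
  linarith

theorem IsSolOn.isSolOn_rpow {s : Set ℝ} {q u u' : ℝ → ℝ} (hu : IsSolOn s (powField p q) u u')
    (hmem : ∀ t ∈ s, u t ∈ Icc 0 (truncLevel p)) : IsSolOn s (fun t x => -(q t * x ^ p)) u u' :=
  hu.congr fun t ht => by rw [powField, truncPow_of_mem_Icc (hmem t ht)]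

theorem IsSolOn.le_solBound_of_nonneg_ends (hp : 1 < p) {u u' : ℝ → ℝ}
    (hu : IsSolOn (Icc 0 Real.pi) (powField p Real.sin) u u') (h₀ : u 0 ∈ Icc 0 1)
    (h₁ : u' 0 ≤ slopeCap p) (hπ : 0 ≤ u Real.pi) :
    ∀ t ∈ Icc 0 Real.pi, u t ≤ solBound p ∧ |u' t| ≤ slopeBound p := by
  have hnonneg := hu.nonneg_of_nonpos (powField_sin_nonpos u) h₀.1 hπ
  have hrpow := hu.isSolOn_rpow fun t ht => ⟨hnonneg t ht, hu.le_truncLevel h₀.2 h₁ t ht⟩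
  exact fun t ht =>
    ⟨hrpow.le_solBound hp hnonneg t ht, hrpow.abs_deriv_le_slopeBound hp hnonneg t ht⟩

theorem IsArc.of_deriv_zero_pos (hp : 1 < p) {u u' : ℝ → ℝ}
    (hu : IsSolOn (Icc 0 Real.pi) (powField p Real.sin) u u') (h₀ : u 0 = 0)
    (hπ : u Real.pi = 0) (h₁ : 0 < u' 0) : IsArc p u u' := by
  have hF := powField_sin_nonpos (p := p) u
  have hnonneg := hu.nonneg_of_nonpos hF h₀.ge hπ.ge
  refine ⟨hu, h₀, hπ, fun t ht => (hnonneg t (Ioo_subset_Icc_self ht)).lt_of_ne' fun hzero => ?_⟩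
  -- An interior zero would be a minimum, so `u` would vanish to its left, where it is then affine.
  have hright := hu.le_tangent_of_nonpos hF ht.1.le ht.2.le le_rfl
  have hderiv : 0 ≤ u' t := by
    rw [hπ, hzero, zero_add] at hright
    exact nonneg_of_mul_nonneg_left hright (sub_pos.2 ht.2)
  have hvanish : ∀ s ∈ Icc 0 t, u s = 0 := fun s hs => by
    have hs' : s ∈ Icc 0 Real.pi := ⟨hs.1, hs.2.trans ht.2.le⟩
    have := hu.add_deriv_right_le_of_nonpos hF hs.1 hs.2 ht.2.le
    have := hnonneg s hs'
    nlinarith [mul_nonneg hderiv (sub_nonneg.2 hs.2)]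
  have hconst := add_mul_sub_le_of_le_hasDerivAt (c := 0) ht.1.le
    (fun s hs => (hu s ⟨hs.1, hs.2.trans ht.2.le⟩).2)
    (fun s hs => by simp [powField, hvanish s hs, truncPow_of_nonpos hp])
  have := hu.add_deriv_right_le_of_nonpos hF le_rfl ht.1.le ht.2.le
  nlinarith [ht.1]

theorem exists_small_slope_pos (hp : 1 < p) : ∃ y > 0, y < slopeCap p ∧ ∀ u u',
    IsSolOn (Icc 0 Real.pi) (powField p Real.sin) u u' → u 0 = 0 → u' 0 = y →
      0 < u Real.pi := by
  have hlim : Tendsto (fun y => 16 * posPowDeriv p (4 * y)) (𝓝 0) (𝓝 0) := by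
    have hcont : Continuous fun y => 16 * posPowDeriv p (4 * y) :=
      continuous_const.mul ((continuous_posPowDeriv hp).comp (continuous_const_mul 4))
    simpa [posPowDeriv, Real.zero_rpow (by linarith : p - 1 ≠ 0)] using hcont.tendsto 0
  obtain ⟨y, ⟨hy, hcap⟩, hy0 : 0 < y⟩ := ((((hlim.eventually_lt_const one_pos).and
    (eventually_lt_nhds slopeCap_pos)).filter_mono nhdsWithin_le_nhds).and
      (self_mem_nhdsWithin (a := (0 : ℝ)) (s := Ioi 0))).exists
  refine ⟨y, hy0, hcap, fun u u' hu h₀ h₁ => ?_⟩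
  have hF := powField_sin_nonpos (p := p) u
  have hu_le : ∀ t ∈ Icc 0 Real.pi, u t ≤ 4 * y := fun t ht => by
    have := hu.le_tangent_of_nonpos hF le_rfl ht.1 ht.2
    rw [h₀, h₁] at this
    nlinarith [ht.2, Real.pi_le_four]
  have hpow : 4 * truncPow p (4 * y) < y := by
    obtain ⟨ξ, hξ, heq⟩ := exists_truncPow_sub_eq hp (x := 4 * y) (y := 0)
      (by unfold truncLevel; linarith) truncLevel_pos.le
    rw [truncPow_of_nonpos hp le_rfl] at heq
    rw [uIcc_of_ge (by linarith)] at hξ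
    nlinarith [posPowDeriv_mono hp hξ.2]
  have hderiv : 0 < u' Real.pi := by
    have := add_mul_sub_le_of_le_hasDerivAt (c := -truncPow p (4 * y)) Real.pi_pos.le
      (fun t ht => (hu t ht).2) (fun t ht => neg_le_neg
        ((mul_le_of_le_one_left (truncPow_nonneg _ _) (Real.sin_le_one t)).trans
          (truncPow_mono hp (hu_le t ht))))
    nlinarith [truncPow_nonneg p (4 * y), Real.pi_le_four]
  have := hu.add_deriv_right_le_of_nonpos hF le_rfl Real.pi_pos.le le_rfl
  nlinarith [Real.pi_pos]

theorem IsArc.exists_transversal (hp : 1 < p) {U U' : ℝ → ℝ} (hU : IsArc p U U')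
    (hcap : U' 0 < slopeCap p) : ∃ r > 0, ∀ u u',
      IsSolOn (Icc 0 Real.pi) (powField p Real.sin) u u' → u 0 = 0 → u' 0 ≠ U' 0 →
        |u' 0 - U' 0| < r → u Real.pi * (u' 0 - U' 0) < 0 := by
  obtain ⟨δ, hδ, B, -, hflip⟩ := hU.exists_isFlipping hp hcap.le
  obtain ⟨ρ, hρ, -, hunif⟩ := exists_forall_abs_sub_le (continuous_posPowDeriv hp)
    (isCompact_Icc (a := 0) (b := truncLevel p)) hδ
  set E := Real.exp ((1 + (truncLip p : ℝ)) * (Real.pi - 0))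
  have hE0 : 0 < E := Real.exp_pos _
  refine ⟨min (ρ / E) (slopeCap p - U' 0), lt_min (by positivity) (by linarith), ?_⟩
  intro u u' hu h₀ hne hr
  obtain ⟨hrρ, hrcap⟩ := lt_min_iff.1 hr
  have hclose : ∀ t ∈ Icc 0 Real.pi, |U t - u t| ≤ ρ := fun t ht => by
    rw [abs_sub_comm]
    exact ((hu.dist_le (fun t _ => lipschitzWith_powField_sin hp t) hU.isSolOn
      (by simp [h₀, hU.left_eq_zero]) le_rfl t ht).1.trans ((lt_div_iff₀ hE0).1 hrρ).le)
  have hut := hu.le_truncLevel (h₀.trans_le zero_le_one) (by linarith [(abs_lt.1 hrcap).2])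
  have hd : u' 0 - U' 0 ≠ 0 := sub_ne_zero.2 hne
  have hweight : ∀ t ∈ Icc 0 Real.pi,
      |secantWeight p Real.sin u U t - linWeight p U t| ≤ δ := fun t ht =>
    abs_secantWeight_sub_linWeight_le hp (hunif _ (hU.mem_Icc_truncLevel hcap.le t ht))
      (hclose t ht) (by simpa using hρ.le) (hut t ht) (hU.mem_Icc_truncLevel hcap.le t ht).2
  have hneg := (hflip _ hweight _ _ ((hu.sub hU.isSolOn).const_mul (u' 0 - U' 0)⁻¹)
    (by simp [ForwardCone, h₀, hU.left_eq_zero, hd, hδ.le])).1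
  rw [hU.right_eq_zero, sub_zero] at hneg
  have := mul_neg_of_pos_of_neg (sq_pos_of_ne_zero hd) hneg
  rwa [sq, mul_assoc, mul_inv_cancel_left₀ hd, mul_comm] at this

theorem neg_of_downcrossing {X : ℝ → ℝ} {y z : ℝ} (hyz : y < z) (hX : ContinuousOn X (Icc y z))
    (hy : X y ≤ 0)
    (hcross : ∀ s ∈ Icc y z, X s = 0 → ∀ᶠ t in 𝓝[≠] s, X t * (t - s) < 0) : X z < 0 := by
  by_contra! hz
  obtain ⟨a, ⟨hya, haz⟩, ha⟩ : ∃ a ∈ Ico y z, X a < 0 := by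
    rcases hy.lt_or_eq with hneg | hzero
    · exact ⟨y, ⟨le_rfl, hyz⟩, hneg⟩
    · obtain ⟨a, ⟨ha, hya⟩, haz⟩ := (((hcross y ⟨le_rfl, hyz.le⟩ hzero).filter_mono
        (nhdsWithin_mono y fun _ h => (mem_Ioi.1 h).ne')).and self_mem_nhdsWithin |>.and
          (mem_nhdsWithin_of_mem_nhds (Iio_mem_nhds hyz))).exists
      exact ⟨a, ⟨(mem_Ioi.1 hya).le, haz⟩, neg_of_mul_neg_left ha (sub_pos.2 hya).le⟩
  obtain ⟨s, hs, hs0, hleft⟩ := exists_first_eq haz.le (hX.mono (Icc_subset_Icc_left hya)) ha.le hz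
  have has : a < s := hs.1.lt_of_ne (by rintro rfl; exact ha.ne hs0)
  obtain ⟨t, ⟨ht, hts⟩, hat⟩ := (((hcross s ⟨hya.trans hs.1, hs.2⟩ hs0).filter_mono
    (nhdsWithin_mono s fun _ h => (mem_Iio.1 h).ne)).and self_mem_nhdsWithin |>.and
      (mem_nhdsWithin_of_mem_nhds (Ioi_mem_nhds has))).exists
  exact ht.not_gt (mul_pos_of_neg_of_neg (hleft t ⟨(mem_Ioi.1 hat).le, hts⟩) (sub_neg.2 hts))

/-- `X` maps the slope at `0` of a solution of `u'' + sin(t) truncPow p u = 0` with `u(0) = 0` to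
its value `u(π)`. -/
def IsShootingMap (p : ℝ) (X : ℝ → ℝ) : Prop :=
  ∀ u u', IsSolOn (Icc 0 Real.pi) (powField p Real.sin) u u' → u 0 = 0 → u Real.pi = X (u' 0)

theorem exists_isSolOn_powField_sin (hp : 1 < p) (y : ℝ) :
    ∃ u u', IsSolOn (Icc 0 Real.pi) (powField p Real.sin) u u' ∧ u 0 = 0 ∧ u' 0 = y :=
  exists_isSolOn_powField hp Real.pi_pos.le (C := 1) Real.continuous_sin
    (fun t => by simpa using Real.abs_sin_le_one t) 0 y

theorem exists_isShootingMap (hp : 1 < p) : ∃ X, IsShootingMap p X := by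
  choose u u' hu h₀ h₁ using exists_isSolOn_powField_sin hp
  exact ⟨fun y => u y Real.pi, fun v v' hv hv0 =>
    (hv.unique (fun t _ => lipschitzWith_powField_sin hp t) (hu _) (hv0.trans (h₀ _).symm)
      (h₁ _).symm Real.pi ⟨Real.pi_pos.le, le_rfl⟩).1⟩

namespace IsShootingMap

variable {X : ℝ → ℝ}

theorem continuous (hp : 1 < p) (hX : IsShootingMap p X) : Continuous X := by
  refine (LipschitzWith.of_dist_le_mul
    (K := (Real.exp ((1 + truncLip p) * (Real.pi - 0))).toNNReal) fun y z => ?_).continuous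
  obtain ⟨u, u', hu, h₀, rfl⟩ := exists_isSolOn_powField_sin hp y
  obtain ⟨v, v', hv, hv0, rfl⟩ := exists_isSolOn_powField_sin hp z
  rw [Real.dist_eq, Real.dist_eq, Real.coe_toNNReal _ (Real.exp_pos _).le, ← hX u u' hu h₀,
    ← hX v v' hv hv0, mul_comm]
  exact (hu.dist_le (fun t _ => lipschitzWith_powField_sin hp t) hv (by simp [h₀, hv0]) le_rfl
    Real.pi ⟨Real.pi_pos.le, le_rfl⟩).1

theorem neg_of_slopeBound_lt (hp : 1 < p) (hX : IsShootingMap p X) {y : ℝ} (hy : slopeBound p < y)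
    (hcap : y ≤ slopeCap p) : X y < 0 := by
  obtain ⟨u, u', hu, h₀, rfl⟩ := exists_isSolOn_powField_sin hp y
  rw [← hX u u' hu h₀]
  by_contra! hπ
  exact (hu.le_solBound_of_nonneg_ends hp (by simp [h₀]) hcap hπ 0
    ⟨le_rfl, Real.pi_pos.le⟩).2.not_gt (hy.trans_le (le_abs_self _))

theorem exists_isArc (hp : 1 < p) (hX : IsShootingMap p X) {y : ℝ} (hy : 0 < y) (hzero : X y = 0) :
    ∃ U U', IsArc p U U' ∧ U' 0 = y := by
  obtain ⟨u, u', hu, h₀, rfl⟩ := exists_isSolOn_powField_sin hp y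
  exact ⟨u, u', .of_deriv_zero_pos hp hu h₀ ((hX u u' hu h₀).trans hzero) hy, rfl⟩

theorem eventually_mul_sub_neg (hp : 1 < p) (hX : IsShootingMap p X) {y : ℝ} (hy : 0 < y)
    (hcap : y ≤ slopeCap p) (hzero : X y = 0) : ∀ᶠ z in 𝓝[≠] y, X z * (z - y) < 0 := by
  have hlt : y < slopeCap p := by
    refine hcap.lt_of_ne ?_
    rintro rfl
    exact (hX.neg_of_slopeBound_lt hp slopeBound_lt_slopeCap le_rfl).ne hzero
  obtain ⟨U, U', hU, rfl⟩ := hX.exists_isArc hp hy hzero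
  obtain ⟨r, hr, h⟩ := hU.exists_transversal hp hlt
  filter_upwards [self_mem_nhdsWithin, mem_nhdsWithin_of_mem_nhds (Metric.ball_mem_nhds _ hr)]
    with z hne hz
  obtain ⟨u, u', hu, h₀, rfl⟩ := exists_isSolOn_powField_sin hp z
  exact hX u u' hu h₀ ▸ h u u' hu h₀ hne hz

theorem exists_sign_change (hp : 1 < p) (hX : IsShootingMap p X) :
    ∃ A ∈ Ioc 0 (slopeBound p), X A = 0 ∧ (∀ y ∈ Ioo 0 A, 0 < X y) ∧
      ∀ y ∈ Ioc A (slopeCap p), X y < 0 := by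
  have hc := hX.continuous hp
  obtain ⟨y₀, hy₀, hy₀cap, hsmall⟩ := exists_small_slope_pos hp
  have hX₀ : 0 < X y₀ := by
    obtain ⟨u, u', hu, h₀, rfl⟩ := exists_isSolOn_powField_sin hp y₀
    exact hX u u' hu h₀ ▸ hsmall u u' hu h₀ rfl
  obtain ⟨A, hA, hA0⟩ := intermediate_value_Icc' hy₀cap.le hc.continuousOn
    ⟨(hX.neg_of_slopeBound_lt hp slopeBound_lt_slopeCap le_rfl).le, hX₀.le⟩
  have hApos : 0 < A := hy₀.trans_le hA.1
  refine ⟨A, ⟨hApos, ?_⟩, hA0, fun y hy => ?_, fun y hy => ?_⟩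
  · by_contra! h
    exact (hX.neg_of_slopeBound_lt hp h hA.2).ne hA0
  · by_contra! h
    exact (neg_of_downcrossing hy.2 hc.continuousOn h fun s hs hs0 =>
      hX.eventually_mul_sub_neg hp (hy.1.trans_le hs.1) (hs.2.trans hA.2) hs0).ne hA0
  · exact neg_of_downcrossing hy.1 hc.continuousOn hA0.le fun s hs hs0 =>
      hX.eventually_mul_sub_neg hp (hApos.trans_le hs.1) (hs.2.trans hy.2) hs0

end IsShootingMap

theorem exists_pos_le_of_forall_pos {f : ℝ → ℝ} (hf : Continuous f) {K : Set ℝ} (hK : IsCompact K)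
    (hpos : ∀ y ∈ K, 0 < f y) : ∃ κ > 0, ∀ y ∈ K, κ ≤ f y := by
  rcases K.eq_empty_or_nonempty with rfl | hne
  · exact ⟨1, one_pos, by simp⟩
  · obtain ⟨y, hy, hmin⟩ := hK.exists_isMinOn hne hf.continuousOn
    exact ⟨f y, hpos y hy, fun z hz => hmin hz⟩

theorem exists_isArc_sign_change (hp : 1 < p) :
    ∃ U U', IsArc p U U' ∧ U' 0 ≤ slopeBound p ∧ ∀ η > 0, ∃ κ > 0, ∀ u u',
      IsSolOn (Icc 0 Real.pi) (powField p Real.sin) u u' → u 0 = 0 →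
        (u' 0 ∈ Icc η (U' 0 - η) → κ ≤ u Real.pi) ∧
          (u' 0 ∈ Icc (U' 0 + η) (slopeCap p) → u Real.pi ≤ -κ) := by
  obtain ⟨X, hX⟩ := exists_isShootingMap hp
  obtain ⟨A, hA, hA0, hpos, hneg⟩ := hX.exists_sign_change hp
  obtain ⟨U, U', hU, rfl⟩ := hX.exists_isArc hp hA.1 hA0
  refine ⟨U, U', hU, hA.2, fun η hη => ?_⟩
  obtain ⟨κ, hκ, hκX⟩ := exists_pos_le_of_forall_pos (hX.continuous hp)
    (isCompact_Icc (a := η) (b := U' 0 - η))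
    fun y hy => hpos y ⟨by linarith [hy.1], by linarith [hy.2]⟩
  obtain ⟨l, hl, hlX⟩ := exists_pos_le_of_forall_pos (hX.continuous hp).neg
    (isCompact_Icc (a := U' 0 + η) (b := slopeCap p))
    fun y hy => neg_pos.2 (hneg y ⟨by linarith [hy.1], hy.2⟩)
  refine ⟨min κ l, lt_min hκ hl, fun u u' hu h₀ => ?_⟩
  rw [hX u u' hu h₀]
  exact ⟨fun h => (min_le_left _ _).trans (hκX _ h),
    fun h => le_neg_of_le_neg ((min_le_right _ _).trans (hlX _ h))⟩

theorem ForwardCone.nonneg_of_nonpos {d : ℝ} {q w w' : ℝ → ℝ} (h : ForwardCone d (w 0) (w' 0))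
    (hw : IsSolOn (Icc 0 Real.pi) (linField q) w w') (hq : ∀ t ∈ Icc 0 Real.pi, q t ≤ 0) :
    ∀ t ∈ Icc 0 Real.pi, 0 ≤ w t := by
  have hpos := hw.pos_of_wronskian_pos (z := fun _ => 1) (z' := fun _ => 0) (z'' := fun _ => 0)
    (fun t _ => ⟨hasDerivAt_const _ _, hasDerivAt_const _ _⟩) (fun _ _ => zero_le_one) h.1
    (by simpa using h.2.1)
    (fun t ht hwt => by
      have := mul_nonneg_of_nonpos_of_nonpos (hq t ht) (neg_nonpos.2 hwt)
      unfold linField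
      linarith)
  intro t ht
  rcases ht.1.eq_or_lt with rfl | hlt
  · exact h.1
  · exact (hpos t ⟨hlt, ht.2⟩).le

theorem ForwardCone.of_nonpos {d : ℝ} {q w w' : ℝ → ℝ} (h : ForwardCone d (w 0) (w' 0))
    (hw : IsSolOn (Icc 0 Real.pi) (linField q) w w') (hq : ∀ t ∈ Icc 0 Real.pi, q t ≤ 0) :
    w 0 < w Real.pi ∧ ForwardCone (d + 4) (w Real.pi) (w' Real.pi) := by
  have hF : ∀ t ∈ Icc 0 Real.pi, 0 ≤ linField q t (w t) := fun t ht =>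
    neg_nonneg.2 (mul_nonpos_of_nonpos_of_nonneg (hq t ht) (h.nonneg_of_nonpos hw hq t ht))
  obtain ⟨h₀, h₁, hd⟩ := h
  have hleft := hw.tangent_le_of_nonneg hF le_rfl Real.pi_pos.le le_rfl
  have hright := hw.le_add_deriv_right_of_nonneg hF le_rfl Real.pi_pos.le le_rfl
  have hmono := hw.deriv_mono_of_nonneg hF le_rfl Real.pi_pos.le le_rfl
  have hd0 : 0 ≤ d := nonneg_of_mul_nonneg_left (h₀.trans hd) h₁
  have := mul_pos h₁ Real.pi_pos
  refine ⟨by linarith, by linarith, by linarith, ?_⟩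
  nlinarith [mul_le_mul_of_nonneg_left hmono hd0, Real.pi_le_four]

/-- The cone of initial data `(x, y) = (w 0, w' 0)` with `0 < x` whose logarithmic slope `y / x` is
at least `-B`. -/
def BoundedSlopeCone (B x y : ℝ) : Prop := 0 < x ∧ -(B * x) ≤ y

/-- A convex nonnegative function `u`, at most `ε` at the ends of `[0, π]`, with which solutions of
`w'' + q w = 0` are compared on a hump where `q ≤ 0`: it solves `u'' = F(t, u)` with
`u'' ≤ -q u`. -/
structure IsSmallBarrier (ε : ℝ) (q : ℝ → ℝ) (F : ℝ → ℝ → ℝ) (u u' : ℝ → ℝ) : Prop where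
  isSolOn : IsSolOn (Icc 0 Real.pi) F u u'
  nonneg : ∀ t ∈ Icc 0 Real.pi, 0 ≤ u t
  left_le : u 0 ≤ ε
  right_le : u Real.pi ≤ ε
  weight_nonpos : ∀ t ∈ Icc 0 Real.pi, q t ≤ 0
  field_nonneg : ∀ t ∈ Icc 0 Real.pi, 0 ≤ F t (u t)
  field_le : ∀ t ∈ Icc 0 Real.pi, F t (u t) ≤ linField q t (u t)

namespace IsSmallBarrier

variable {ε d A B β : ℝ} {q u u' w w' : ℝ → ℝ} {F : ℝ → ℝ → ℝ}

theorem linField_wronskian_nonneg (hu : IsSmallBarrier ε q F u u') :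
    ∀ t ∈ Icc 0 Real.pi, 0 ≤ w t → 0 ≤ linField q t (w t) * u t - w t * F t (u t) := by
  intro t ht hwt
  have := mul_nonneg hwt (sub_nonneg.2 (hu.field_le t ht))
  unfold linField at this ⊢
  linarith

theorem forwardCone_of_wronskian (hu : IsSmallBarrier ε q F u u') (hA : 0 < A)
    (hslope : A / 2 ≤ u' Real.pi) (hw : 0 ≤ w Real.pi) (hw' : 0 < w' Real.pi)
    (hW : -(w Real.pi * (A / 4)) ≤ w' Real.pi * u Real.pi - w Real.pi * u' Real.pi) :
    ForwardCone (4 * ε / A) (w Real.pi) (w' Real.pi) := by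
  have hright := mul_le_mul_of_nonneg_left hu.right_le hw'.le
  have := mul_le_mul_of_nonneg_left hslope hw
  refine ⟨hw, hw', ?_⟩
  rw [div_mul_eq_mul_div, le_div_iff₀ hA]
  linarith

theorem forwardCone_of_forwardCone (hu : IsSmallBarrier ε q F u u') (hA : 0 < A)
    (hw : IsSolOn (Icc 0 Real.pi) (linField q) w w') (h : ForwardCone d (w 0) (w' 0))
    (hleft : u' 0 ≤ A / 4) (hright : A / 2 ≤ u' Real.pi) :
    ForwardCone (4 * ε / A) (w Real.pi) (w' Real.pi) := by
  have hnonneg := h.nonneg_of_nonpos hw hu.weight_nonpos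
  obtain ⟨hlt, hπ, hπ', -⟩ := h.of_nonpos hw hu.weight_nonpos
  refine hu.forwardCone_of_wronskian hA hright hπ hπ' ?_
  have hmono := hw.wronskian_le hu.isSolOn
    (fun t ht => hu.linField_wronskian_nonneg t ht (hnonneg t ht)) Real.pi_pos.le
  have := mul_nonneg h.2.1.le (hu.nonneg 0 ⟨le_rfl, Real.pi_pos.le⟩)
  have := mul_le_mul_of_nonneg_left hleft h.1
  have := mul_le_mul_of_nonneg_right hlt.le (show 0 ≤ A / 4 by positivity)
  linarith

theorem le_wronskian_left (hu : IsSmallBarrier ε q F u u') (hB : 0 ≤ B) (hBε : B * ε ≤ β / 2)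
    (h : BoundedSlopeCone B (w 0) (w' 0)) (hleft : u' 0 ≤ -β) :
    β / 2 * w 0 ≤ w' 0 * u 0 - w 0 * u' 0 := by
  have hlow := mul_le_mul_of_nonneg_right h.2 (hu.nonneg 0 ⟨le_rfl, Real.pi_pos.le⟩)
  have := mul_le_mul_of_nonneg_left hu.left_le (mul_nonneg hB h.1.le)
  have := mul_le_mul_of_nonneg_left hBε h.1.le
  have := mul_le_mul_of_nonneg_left hleft h.1.le
  linarith

theorem neg_le_deriv_right (hu : IsSmallBarrier ε q F u u') (hε : 0 ≤ ε) :
    -ε ≤ u' Real.pi := by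
  have := hu.isSolOn.le_add_deriv_right_of_nonneg hu.field_nonneg le_rfl Real.pi_pos.le le_rfl
  have := hu.nonneg Real.pi ⟨Real.pi_pos.le, le_rfl⟩
  have := hu.left_le
  by_contra! hlt
  nlinarith [Real.pi_gt_three]

theorem pos_of_boundedSlopeCone (hu : IsSmallBarrier ε q F u u') (hβ : 0 < β) (hB : 0 ≤ B)
    (hBε : B * ε ≤ β / 2) (hw : IsSolOn (Icc 0 Real.pi) (linField q) w w')
    (h : BoundedSlopeCone B (w 0) (w' 0)) (hleft : u' 0 ≤ -β) :
    (∀ t ∈ Icc 0 Real.pi, 0 < w t) ∧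
      β / 2 * w 0 ≤ w' Real.pi * u Real.pi - w Real.pi * u' Real.pi := by
  have hW := hu.le_wronskian_left hB hBε h hleft
  have hW0 := (mul_pos (half_pos hβ) h.1).trans_le hW
  refine ⟨fun t ht => ?_, hW.trans <| hw.wronskian_le_of_pos hu.isSolOn hu.nonneg h.1.le hW0
    hu.linField_wronskian_nonneg ⟨Real.pi_pos.le, le_rfl⟩⟩
  rcases ht.1.eq_or_lt with rfl | hlt
  · exact h.1
  · exact hw.pos_of_wronskian_pos hu.isSolOn hu.nonneg h.1.le hW0 hu.linField_wronskian_nonneg t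
      ⟨hlt, ht.2⟩

theorem forwardCone_twelve (hu : IsSmallBarrier ε q F u u') (hβ : 0 < β) (hε : 0 ≤ ε)
    (hB : 0 ≤ B) (hBε : B * ε ≤ β / 2) (hεβ : ε ≤ β / 8)
    (hw : IsSolOn (Icc 0 Real.pi) (linField q) w w')
    (h : BoundedSlopeCone B (w 0) (w' 0)) (hleft : u' 0 ≤ -β) :
    0 < w Real.pi ∧ ForwardCone 12 (w Real.pi) (w' Real.pi) := by
  obtain ⟨hpos, hW⟩ := hu.pos_of_boundedSlopeCone hβ hB hBε hw h hleft
  have hwπ := hpos Real.pi ⟨Real.pi_pos.le, le_rfl⟩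
  have hconv := hw.le_add_deriv_right_of_nonneg (fun t ht => neg_nonneg.2
    (mul_nonpos_of_nonpos_of_nonneg (hu.weight_nonpos t ht) (hpos t ht).le))
    le_rfl Real.pi_pos.le le_rfl
  -- Either `w` at least doubles, and convexity bounds `w' π` below, or the Wronskian does.
  suffices 0 < w' Real.pi ∧ w Real.pi ≤ 12 * w' Real.pi from ⟨hwπ, hwπ.le, this⟩
  rcases le_or_gt (2 * w 0) (w Real.pi) with hdouble | hdouble
  · have hhalf : w Real.pi / 2 ≤ w' Real.pi * Real.pi := by linarith
    have hw' : 0 < w' Real.pi :=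
      pos_of_mul_pos_left ((half_pos hwπ).trans_le hhalf) Real.pi_pos.le
    exact ⟨hw', by nlinarith [Real.pi_le_four]⟩
  · have hslope := mul_le_mul_of_nonneg_left (hu.neg_le_deriv_right hε) hwπ.le
    have hquarter : β / 4 * w 0 ≤ w' Real.pi * u Real.pi := by
      nlinarith [mul_le_mul_of_nonneg_left hdouble.le hε, mul_le_mul_of_nonneg_right hεβ h.1.le]
    have hw' : 0 < w' Real.pi := pos_of_mul_pos_left
      ((mul_pos (by positivity) h.1).trans_le hquarter) (hu.nonneg _ ⟨Real.pi_pos.le, le_rfl⟩)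
    have := mul_le_mul_of_nonneg_left (hu.right_le.trans hεβ) hw'.le
    have : 2 * w 0 ≤ w' Real.pi := le_of_mul_le_mul_left (by linarith) hβ
    exact ⟨hw', by linarith⟩

theorem forwardCone_of_boundedSlopeCone (hu : IsSmallBarrier ε q F u u') (hβ : 0 < β)
    (hε : 0 ≤ ε) (hB : 0 ≤ B) (hBε : B * ε ≤ β / 2) (hεβ : ε ≤ β / 8)
    (hw : IsSolOn (Icc 0 Real.pi) (linField q) w w')
    (h : BoundedSlopeCone B (w 0) (w' 0)) (hleft : u' 0 ≤ -β) (hA : 0 < A)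
    (hright : A / 2 ≤ u' Real.pi) : ForwardCone (4 * ε / A) (w Real.pi) (w' Real.pi) := by
  obtain ⟨hwπ, -, hw', -⟩ := hu.forwardCone_twelve hβ hε hB hBε hεβ hw h hleft
  have hW := (hu.pos_of_boundedSlopeCone hβ hB hBε hw h hleft).2
  refine hu.forwardCone_of_wronskian hA hright hwπ.le hw' (le_trans ?_ hW)
  have := mul_pos hwπ hA
  have := mul_pos hβ h.1
  linarith

end IsSmallBarrier

/-! ### Cutting `[0, kπ]` into humps -/

/-- The restriction of `f` to the `i`-th hump `[iπ, (i + 1)π]` of the sine, shifted to `[0, π]`. -/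
noncomputable def hump (f : ℝ → ℝ) (i : ℕ) : ℝ → ℝ := fun t => f (t + i * Real.pi)

theorem hump_zero (f : ℝ → ℝ) (i : ℕ) : hump f i 0 = f (i * Real.pi) := by
  simp only [hump, zero_add]

theorem hump_pi (f : ℝ → ℝ) (i : ℕ) : hump f i Real.pi = hump f (i + 1) 0 := by
  simp only [hump, Nat.cast_succ]
  ring_nf

theorem hump_odd_pi (f : ℝ → ℝ) (j : ℕ) :
    hump f (2 * j + 1) Real.pi = hump f (2 * (j + 1)) 0 :=
  hump_pi f _

theorem add_mul_pi_mem_Icc {i k : ℕ} (hi : i < k) {t : ℝ} (ht : t ∈ Icc 0 Real.pi) :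
    t + i * Real.pi ∈ Icc 0 (k * Real.pi) := by
  have hik : (i + 1 : ℝ) ≤ k := by exact_mod_cast hi
  have := mul_le_mul_of_nonneg_right hik Real.pi_pos.le
  have := mul_nonneg i.cast_nonneg Real.pi_pos.le
  constructor <;> linarith [ht.1, ht.2]

theorem exists_eq_add_mul_pi {k : ℕ} (hk : 1 ≤ k) {t : ℝ} (ht : t ∈ Icc 0 (k * Real.pi)) :
    ∃ i < k, ∃ s ∈ Icc 0 Real.pi, t = s + i * Real.pi := by
  have hpi := Real.pi_pos
  rcases ht.2.eq_or_lt with rfl | hlt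
  · refine ⟨k - 1, by lia, Real.pi, right_mem_Icc.2 hpi.le, ?_⟩
    push_cast [hk]
    ring
  · have h0 : 0 ≤ t / Real.pi := div_nonneg ht.1 hpi.le
    refine ⟨⌊t / Real.pi⌋₊, (Nat.floor_lt h0).2 ((div_lt_iff₀ hpi).2 hlt),
      t - ⌊t / Real.pi⌋₊ * Real.pi, ⟨?_, ?_⟩, by ring⟩
    · linarith [(le_div_iff₀ hpi).1 (Nat.floor_le h0)]
    · linarith [(div_lt_iff₀ hpi).1 (Nat.lt_floor_add_one (t / Real.pi))]

theorem IsSolOn.hump_of_lt {k i : ℕ} {F : ℝ → ℝ → ℝ} {u u' : ℝ → ℝ}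
    (hu : IsSolOn (Icc 0 (k * Real.pi)) F u u') (hi : i < k) :
    IsSolOn (Icc 0 Real.pi) (fun t => F (t + i * Real.pi)) (hump u i) (hump u' i) :=
  hu.comp_add_const fun _ => add_mul_pi_mem_Icc hi

/-- The weight `sin⁺ - μ sin⁻`, to which the weight of the theorem reduces by rescaling. -/
noncomputable def sinWeight (μ : ℝ) : ℝ → ℝ := fun t => posW Real.sin t - μ * negW Real.sin t

theorem continuous_sinWeight (μ : ℝ) : Continuous (sinWeight μ) := by
  unfold sinWeight posW negW
  fun_prop

theorem abs_sinWeight_le (μ t : ℝ) : |sinWeight μ t| ≤ (1 + ‖μ‖₊ : ℝ≥0) := by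
  have h := Real.abs_sin_le_one t
  have hpos : |posW Real.sin t| ≤ 1 := by
    rw [posW, abs_of_nonneg (by linarith [neg_abs_le (Real.sin t)])]
    linarith [le_abs_self (Real.sin t)]
  have hneg : |negW Real.sin t| ≤ 1 := by
    rw [negW, abs_of_nonneg (by linarith [le_abs_self (Real.sin t)])]
    linarith [neg_abs_le (Real.sin t)]
  calc |sinWeight μ t| ≤ |posW Real.sin t| + |μ * negW Real.sin t| := abs_sub _ _
    _ ≤ 1 + |μ| := by
      rw [abs_mul]
      exact add_le_add hpos (mul_le_of_le_one_right (abs_nonneg μ) hneg)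

theorem hump_sinWeight_even (μ : ℝ) (j : ℕ) {t : ℝ} (ht : t ∈ Icc 0 Real.pi) :
    hump (sinWeight μ) (2 * j) t = Real.sin t := by
  have hsin : Real.sin (t + (2 * j : ℕ) * Real.pi) = Real.sin t := by
    rw [Real.sin_add_nat_mul_pi, pow_mul, neg_one_sq, one_pow, one_mul]
  simp only [hump, sinWeight, posW, negW, hsin, abs_of_nonneg (sin_nonneg_of_mem_Icc ht)]
  ring

theorem hump_sinWeight_odd (μ : ℝ) (j : ℕ) {t : ℝ} (ht : t ∈ Icc 0 Real.pi) :
    hump (sinWeight μ) (2 * j + 1) t = negSin μ t := by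
  have hsin : Real.sin (t + (2 * j + 1 : ℕ) * Real.pi) = -Real.sin t := by
    rw [Real.sin_add_nat_mul_pi, pow_succ, pow_mul, neg_one_sq, one_pow, one_mul, neg_one_mul]
  simp only [hump, sinWeight, posW, negW, negSin, hsin, abs_neg,
    abs_of_nonneg (sin_nonneg_of_mem_Icc ht)]
  ring

theorem IsSolOn.hump_even {μ : ℝ} {k j : ℕ} {u u' : ℝ → ℝ}
    (hu : IsSolOn (Icc 0 (k * Real.pi)) (powField p (sinWeight μ)) u u') (hj : 2 * j < k) :
    IsSolOn (Icc 0 Real.pi) (powField p Real.sin) (hump u (2 * j))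
      (hump u' (2 * j)) :=
  (hu.hump_of_lt hj).congr fun t ht => by
    rw [powField, powField, ← hump_sinWeight_even μ j ht]
    rfl

theorem IsSolOn.hump_odd {μ : ℝ} {k j : ℕ} {u u' : ℝ → ℝ}
    (hu : IsSolOn (Icc 0 (k * Real.pi)) (powField p (sinWeight μ)) u u') (hj : 2 * j + 1 < k) :
    IsSolOn (Icc 0 Real.pi) (powField p (negSin μ)) (hump u (2 * j + 1))
      (hump u' (2 * j + 1)) :=
  (hu.hump_of_lt hj).congr fun t ht => by
    rw [powField, powField, ← hump_sinWeight_odd μ j ht]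
    rfl

theorem IsSolOn.le_of_hump_even_le {μ c : ℝ} {k : ℕ} {g u u' : ℝ → ℝ} (hk : 1 ≤ k) (hμ : 0 ≤ μ)
    (hu : IsSolOn (Icc 0 (k * Real.pi)) (fun t x => -(sinWeight μ t * g x)) u u')
    (hg : ∀ t ∈ Icc 0 (k * Real.pi), 0 ≤ g (u t)) (hkπ : u (k * Real.pi) ≤ c)
    (heven : ∀ j, 2 * j < k → ∀ t ∈ Icc 0 Real.pi, hump u (2 * j) t ≤ c) :
    ∀ t ∈ Icc 0 (k * Real.pi), u t ≤ c := by
  intro t ht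
  obtain ⟨i, hi, s, hs, rfl⟩ := exists_eq_add_mul_pi hk ht
  rcases i.even_or_odd' with ⟨j, rfl | rfl⟩
  · exact heven j hi s hs
  refine (hu.hump_of_lt hi).le_of_nonneg (fun r hr => ?_) ?_ ?_ s hs
  · have hweight : sinWeight μ (r + (2 * j + 1 : ℕ) * Real.pi) ≤ 0 :=
      (hump_sinWeight_odd μ j hr).trans_le
        (neg_nonpos.2 (mul_nonneg hμ (sin_nonneg_of_mem_Icc hr)))
    exact neg_nonneg.2 (mul_nonpos_of_nonpos_of_nonneg hweight
      (hg _ (add_mul_pi_mem_Icc hi hr)))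
  · rw [← hump_pi]
    exact heven j (by lia) _ (right_mem_Icc.2 Real.pi_nonneg)
  · rw [hump_odd_pi]
    rcases (Nat.succ_le_of_lt hi).lt_or_eq with hlt | heq
    · exact heven (j + 1) hlt _ (left_mem_Icc.2 Real.pi_nonneg)
    · rwa [hump_zero, show 2 * (j + 1) = k from heq]

/-! ### Choice of the constants -/

theorem exists_forall_powField_sin_dist_le (hp : 1 < p) {ρ : ℝ} (hρ : 0 < ρ) :
    ∃ r > 0, ∀ u u' v v', IsSolOn (Icc 0 Real.pi) (powField p Real.sin) u u' →
      IsSolOn (Icc 0 Real.pi) (powField p Real.sin) v v' → |u 0 - v 0| ≤ r → |u' 0 - v' 0| ≤ r →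
        ∀ t ∈ Icc 0 Real.pi, |u t - v t| ≤ ρ ∧ |u' t - v' t| ≤ ρ := by
  refine ⟨ρ / Real.exp ((1 + truncLip p) * (Real.pi - 0)), by positivity,
    fun u u' v v' hu hv h₀ h₁ t ht => ?_⟩
  have h := hu.dist_le (fun t _ => lipschitzWith_powField_sin hp t) hv h₀ h₁ t ht
  rwa [div_mul_cancel₀ _ (Real.exp_pos _).ne'] at h

/-- The shooting dichotomy around the arc `(U, U')` at precision `η`: starting from height at most
`ε`, a slope between `η` and `U' 0 - η` ends at height at least `ε`, and a slope between
`U' 0 + η` and `slopeCap p` ends at height at most `-ε`. -/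
def ShootingDichotomy (p : ℝ) (U' : ℝ → ℝ) (η ε : ℝ) : Prop :=
  ∀ u u', IsSolOn (Icc 0 Real.pi) (powField p Real.sin) u u' → |u 0| ≤ ε →
    (u' 0 ∈ Icc η (U' 0 - η) → ε ≤ u Real.pi) ∧
      (u' 0 ∈ Icc (U' 0 + η) (slopeCap p) → u Real.pi ≤ -ε)

theorem ShootingDichotomy.mono {U' : ℝ → ℝ} {η ε r : ℝ} (h : ShootingDichotomy p U' η r)
    (hε : ε ≤ r) : ShootingDichotomy p U' η ε := fun u u' hu h₀ =>
  ⟨fun h₁ => hε.trans ((h u u' hu (h₀.trans hε)).1 h₁),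
    fun h₁ => ((h u u' hu (h₀.trans hε)).2 h₁).trans (neg_le_neg hε)⟩

theorem exists_isArc_shootingDichotomy (hp : 1 < p) :
    ∃ U U', IsArc p U U' ∧ U' 0 ≤ slopeBound p ∧
      ∀ η > 0, ∃ r > 0, ShootingDichotomy p U' η r := by
  obtain ⟨U, U', hU, hslope, hsign⟩ := exists_isArc_sign_change hp
  refine ⟨U, U', hU, hslope, fun η hη => ?_⟩
  obtain ⟨κ, hκ, hκη⟩ := hsign η hη
  obtain ⟨r, hr, hrκ⟩ := exists_forall_powField_sin_dist_le hp (half_pos hκ)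
  refine ⟨min r (κ / 2), lt_min hr (half_pos hκ), fun u u' hu h₀ => ?_⟩
  obtain ⟨v, v', hv, hv₀, hv₁⟩ := exists_isSolOn_powField_sin hp (u' 0)
  have hdist := abs_le.1 (hrκ u u' v v' hu hv
    (by rw [hv₀, sub_zero]; exact h₀.trans (min_le_left _ _))
    (by rw [hv₁, sub_self, abs_zero]; exact hr.le) Real.pi (right_mem_Icc.2 Real.pi_pos.le)).1
  have hmin := min_le_right r (κ / 2)
  rw [← hv₁]
  exact ⟨fun h => by linarith [(hκη v v' hv hv₀).1 h], fun h => by linarith [(hκη v v' hv hv₀).2 h]⟩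

/-- The constants of the proof for `k` humps. On positive humps, solutions either follow the
distinguished arc `(U, U')` or stay small; `η` and `ε` bound the initial slope and the height at
the nodes, and for `μ ≥ μ₀` solutions with slopes below `slopeCap p` are smaller than `ε` on
negative humps. -/
structure Calibration (p : ℝ) (k : ℕ) where
  (U U' : ℝ → ℝ)
  (δ B ρ β η₀ η ε μ₀ : ℝ)
  isArc : IsArc p U U'
  slope_le : U' 0 ≤ slopeBound p
  δ_pos : 0 < δ
  B_pos : 0 < B
  β_pos : 0 < β
  η_pos : 0 < η
  ε_pos : 0 < ε
  μ₀_pos : 0 < μ₀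
  isFlipping : ∀ q, (∀ t ∈ Icc 0 Real.pi, |q t - linWeight p U t| ≤ δ) → IsFlipping δ B q
  isNearlyFree : ∀ q, (∀ t ∈ Icc 0 Real.pi, |q t| ≤ η₀) → IsNearlyFree (12 * 3 ^ k) q
  modulus : ∀ t ∈ Icc 0 Real.pi, ∀ y, |U t - y| ≤ ρ →
    |posPowDeriv p y - posPowDeriv p (U t)| ≤ δ
  close : ∀ u u', IsSolOn (Icc 0 Real.pi) (powField p Real.sin) u u' → |u 0| ≤ ε →
    |u' 0 - U' 0| ≤ η → (∀ t ∈ Icc 0 Real.pi, |U t - u t| ≤ ρ) ∧ u' Real.pi ≤ -β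
  dichotomy : ShootingDichotomy p U' η ε
  posPowDeriv_le : posPowDeriv p (5 * η) ≤ η₀
  η_le_one : η ≤ 1
  η_le : η ≤ U' 0 / 4
  ε_le : ε ≤ η
  mul_ε_le : B * ε ≤ β / 2
  ε_le_div : ε ≤ β / 8
  div_le : 4 * ε / U' 0 ≤ δ
  large : ∀ μ ≥ μ₀, ∀ u u', IsSolOn (Icc 0 Real.pi) (powField p (negSin μ)) u u' →
    -slopeCap p ≤ u' 0 → ε ≤ u 0 → slopeCap p < u' Real.pi ∧ solBound p < u Real.pi

theorem eventually_posPowDeriv_lt (hp : 1 < p) (c : ℝ) {e : ℝ} (he : 0 < e) :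
    ∀ᶠ η in 𝓝[>] (0 : ℝ), posPowDeriv p (c * η) < e := by
  have hcont : Continuous fun η => posPowDeriv p (c * η) :=
    (continuous_posPowDeriv hp).comp (continuous_const.mul continuous_id)
  refine (hcont.continuousAt.eventually_lt continuousAt_const ?_).filter_mono nhdsWithin_le_nhds
  simpa [posPowDeriv, Real.zero_rpow (by linarith : p - 1 ≠ 0)] using he

theorem eventually_nhdsGT_le {c : ℝ} (hc : 0 < c) : ∀ᶠ x in 𝓝[>] (0 : ℝ), x ≤ c :=
  mem_of_superset (Ioc_mem_nhdsGT hc) fun _ hx => hx.2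

theorem exists_calibration (hp : 1 < p) (k : ℕ) : Nonempty (Calibration p k) := by
  obtain ⟨U, U', hU, hslope, hdich⟩ := exists_isArc_shootingDichotomy hp
  have hcap := hslope.trans (slopeBound_lt_slopeCap (p := p)).le
  have hA := hU.deriv_zero_pos
  obtain ⟨δ, hδ, B, hB, hflip⟩ := hU.exists_isFlipping hp hcap
  obtain ⟨η₀, hη₀, hfree⟩ := exists_isNearlyFree (12 * 3 ^ k)
  obtain ⟨ρ, hρ, -, hmod⟩ := exists_forall_abs_sub_le (continuous_posPowDeriv hp)
    (isCompact_Icc (a := 0) (b := truncLevel p)) hδ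
  obtain ⟨β, hβ, hβU⟩ : ∃ β > 0, U' Real.pi = -(2 * β) :=
    ⟨-U' Real.pi / 2, by linarith [hU.deriv_pi_neg], by ring⟩
  obtain ⟨r, hr, hclose⟩ := exists_forall_powField_sin_dist_le hp (lt_min hρ hβ)
  obtain ⟨η, hη5, hη1, hηA, hηr, hη⟩ := ((eventually_posPowDeriv_lt hp 5 hη₀).and <|
    (eventually_nhdsGT_le one_pos).and <| (eventually_nhdsGT_le (by positivity : 0 < U' 0 / 4)).and
    <| (eventually_nhdsGT_le hr).and self_mem_nhdsWithin).exists
  obtain ⟨s, hs, hdich⟩ := hdich η hη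
  obtain ⟨ε, hεη, hεs, hεβ, hεB, hεA, hε⟩ := ((eventually_nhdsGT_le hη).and <|
    (eventually_nhdsGT_le hs).and <| (eventually_nhdsGT_le (by positivity : 0 < β / 8)).and <|
    (eventually_nhdsGT_le (by positivity : 0 < β / 2 / B)).and <|
    (eventually_nhdsGT_le (by positivity : 0 < δ * U' 0 / 4)).and self_mem_nhdsWithin).exists
  obtain ⟨μ₀, hμ₀, hlarge⟩ := exists_forall_negSin_large hp hε
  refine ⟨⟨U, U', δ, B, ρ, β, η₀, η, ε, μ₀, hU, hslope, hδ, hB, hβ, hη, hε, hμ₀, hflip, hfree,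
    fun t ht => hmod (U t) (hU.mem_Icc_truncLevel hcap t ht), fun u u' hu h₀ h₁ => ?_,
    hdich.mono hεs, hη5.le, hη1, hηA, hεη, ?_, hεβ, ?_, hlarge⟩⟩
  · have h := hclose u u' U U' hu hU.isSolOn
      (by rw [hU.left_eq_zero, sub_zero]; exact h₀.trans (hεη.trans hηr)) (h₁.trans hηr)
    refine ⟨fun t ht => abs_sub_comm (u t) (U t) ▸ (h t ht).1.trans (min_le_left _ _), ?_⟩
    have := (abs_le.1 ((h Real.pi (right_mem_Icc.2 Real.pi_pos.le)).2.trans (min_le_right _ _))).2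
    linarith
  · rw [mul_comm]
    exact (le_div_iff₀ hB).1 hεB
  · rw [div_le_iff₀ hA]
    linarith

namespace Calibration

variable {k : ℕ}

theorem lt_of_deriv_pi_le (d : Calibration p k) {μ : ℝ} (hμ : d.μ₀ ≤ μ) {u u' : ℝ → ℝ}
    (hu : IsSolOn (Icc 0 Real.pi) (powField p (negSin μ)) u u') (h₁ : u' Real.pi ≤ slopeCap p)
    (h₀ : d.ε ≤ u Real.pi) : solBound p < u 0 := by
  have h := d.large μ hμ _ _ (hu.reflect (powField_negSin_pi_sub μ))
  simp only [sub_zero, sub_self] at h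
  exact (h (neg_le_neg h₁) h₀).2

end Calibration

/-! ### Nonnegative solutions of the truncated problem -/

variable {k : ℕ}

/-- A nonnegative solution on `[0, kπ]` of the rescaled Dirichlet problem. The bound `solBound p`
keeps it away from the truncation of the nonlinearity. -/
structure IsNonnegSol (p μ : ℝ) (k : ℕ) (u u' : ℝ → ℝ) : Prop where
  isSolOn : IsSolOn (Icc 0 (k * Real.pi)) (powField p (sinWeight μ)) u u'
  left_eq_zero : u 0 = 0
  right_eq_zero : u (k * Real.pi) = 0
  nonneg : ∀ t ∈ Icc 0 (k * Real.pi), 0 ≤ u t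
  le_solBound : ∀ t ∈ Icc 0 (k * Real.pi), u t ≤ solBound p

/-- The initial slope of the `j`-th positive hump is closer to that of the distinguished arc than
to zero. The set of these `j` is the code of a solution. -/
def Calibration.IsBump (d : Calibration p k) (u' : ℝ → ℝ) (j : ℕ) : Prop :=
  d.U' 0 / 2 ≤ hump u' (2 * j) 0

namespace IsNonnegSol

variable {μ : ℝ} {j : ℕ} {u u' v v' w w' : ℝ → ℝ}

theorem mem_Icc_truncLevel (hu : IsNonnegSol p μ k u u') {t : ℝ} (ht : t ∈ Icc 0 (k * Real.pi)) :
    u t ∈ Icc 0 (truncLevel p) :=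
  ⟨hu.nonneg t ht, (hu.le_solBound t ht).trans solBound_le_truncLevel⟩

theorem hump_mem_Icc (hu : IsNonnegSol p μ k u u') {i : ℕ} (hi : i < k) {t : ℝ}
    (ht : t ∈ Icc 0 Real.pi) : hump u i t ∈ Icc 0 (truncLevel p) :=
  hu.mem_Icc_truncLevel (add_mul_pi_mem_Icc hi ht)

theorem abs_deriv_le (hp : 1 < p) (hu : IsNonnegSol p μ k u u') (hj : 2 * j < k) :
    ∀ t ∈ Icc 0 Real.pi, |hump u' (2 * j) t| ≤ slopeBound p :=
  ((hu.isSolOn.hump_even hj).isSolOn_rpow fun _ => hu.hump_mem_Icc hj).abs_deriv_le_slopeBound hp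
    fun _ ht => (hu.hump_mem_Icc hj ht).1

theorem hump_odd_zero_lt (hp : 1 < p) (d : Calibration p k) (hμ : d.μ₀ ≤ μ)
    (hu : IsNonnegSol p μ k u u') (hj : 2 * j + 1 < k) : hump u (2 * j + 1) 0 < d.ε := by
  by_contra! hε
  have hslope := (abs_le.1 (hu.abs_deriv_le hp (by lia : 2 * j < k) Real.pi
    (right_mem_Icc.2 Real.pi_pos.le))).1
  rw [hump_pi] at hslope
  have hlarge := d.large μ hμ _ _ (hu.isSolOn.hump_odd hj)
    (by linarith [slopeBound_lt_slopeCap (p := p)]) hε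
  exact hlarge.2.not_ge
    (hu.le_solBound _ (add_mul_pi_mem_Icc hj (right_mem_Icc.2 Real.pi_pos.le)))

theorem hump_even_succ_zero_lt (hp : 1 < p) (d : Calibration p k) (hμ : d.μ₀ ≤ μ)
    (hu : IsNonnegSol p μ k u u') (hj : 2 * j + 2 < k) : hump u (2 * j + 2) 0 < d.ε := by
  by_contra! hε
  have hslope := (abs_le.1 (hu.abs_deriv_le hp (j := j + 1) hj 0
    (left_mem_Icc.2 Real.pi_pos.le))).2
  rw [← hump_odd_pi] at hslope
  rw [← mul_add_one, ← hump_odd_pi] at hε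
  exact (d.lt_of_deriv_pi_le hμ (hu.isSolOn.hump_odd (by lia))
    (hslope.trans slopeBound_lt_slopeCap.le) hε).not_ge
    (hu.le_solBound _ (add_mul_pi_mem_Icc (by lia) (left_mem_Icc.2 Real.pi_pos.le)))

theorem hump_zero_lt (hp : 1 < p) (d : Calibration p k) (hμ : d.μ₀ ≤ μ)
    (hu : IsNonnegSol p μ k u u') {i : ℕ} (hi : i ≤ k) : hump u i 0 < d.ε := by
  rcases hi.eq_or_lt with rfl | hi
  · rw [hump_zero, hu.right_eq_zero]
    exact d.ε_pos
  rcases Nat.even_or_odd' i with ⟨_ | j, rfl | rfl⟩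
  · rw [hump_zero, mul_zero, Nat.cast_zero, zero_mul, hu.left_eq_zero]
    exact d.ε_pos
  · exact hu.hump_odd_zero_lt hp d hμ hi
  · exact hu.hump_even_succ_zero_lt hp d hμ hi
  · exact hu.hump_odd_zero_lt hp d hμ hi

theorem abs_hump_zero_le (hp : 1 < p) (d : Calibration p k) (hμ : d.μ₀ ≤ μ)
    (hu : IsNonnegSol p μ k u u') {i : ℕ} (hi : i < k) : |hump u i 0| ≤ d.ε := by
  rw [abs_of_nonneg (hu.hump_mem_Icc hi (left_mem_Icc.2 Real.pi_pos.le)).1]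
  exact (hu.hump_zero_lt hp d hμ hi.le).le

theorem deriv_notMem_Icc (hp : 1 < p) (d : Calibration p k) (hμ : d.μ₀ ≤ μ)
    (hu : IsNonnegSol p μ k u u') (hj : 2 * j < k) :
    hump u' (2 * j) 0 ∉ Icc d.η (d.U' 0 - d.η) := fun h =>
  ((d.dichotomy _ _ (hu.isSolOn.hump_even hj) (hu.abs_hump_zero_le hp d hμ hj)).1 h).not_gt
    (hump_pi u (2 * j) ▸ hu.hump_zero_lt hp d hμ hj)

theorem abs_deriv_sub_le_of_isBump (hp : 1 < p) (d : Calibration p k) (hμ : d.μ₀ ≤ μ)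
    (hu : IsNonnegSol p μ k u u') (hj : 2 * j < k) (hbump : d.IsBump u' j) :
    |hump u' (2 * j) 0 - d.U' 0| ≤ d.η := by
  unfold Calibration.IsBump at hbump
  rw [abs_le]
  constructor
  · by_contra! h
    exact hu.deriv_notMem_Icc hp d hμ hj
      ⟨by linarith [d.η_le, d.isArc.deriv_zero_pos], by linarith⟩
  · by_contra! h
    have hcap := (abs_le.1 (hu.abs_deriv_le hp hj 0 (left_mem_Icc.2 Real.pi_pos.le))).2.trans
      slopeBound_lt_slopeCap.le
    have hneg := (d.dichotomy _ _ (hu.isSolOn.hump_even hj) (hu.abs_hump_zero_le hp d hμ hj)).2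
      ⟨by linarith, hcap⟩
    linarith [d.ε_pos, (hu.hump_mem_Icc hj (right_mem_Icc.2 Real.pi_pos.le)).1]

theorem deriv_le_of_not_isBump (hp : 1 < p) (d : Calibration p k) (hμ : d.μ₀ ≤ μ)
    (hu : IsNonnegSol p μ k u u') (hj : 2 * j < k) (hbump : ¬ d.IsBump u' j) :
    hump u' (2 * j) 0 ≤ d.η := by
  by_contra! h
  rw [Calibration.IsBump, not_le] at hbump
  exact hu.deriv_notMem_Icc hp d hμ hj ⟨h.le, by linarith [d.η_le, d.isArc.deriv_zero_pos]⟩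

theorem close_of_isBump (hp : 1 < p) (d : Calibration p k) (hμ : d.μ₀ ≤ μ)
    (hu : IsNonnegSol p μ k u u') (hj : 2 * j < k) (hbump : d.IsBump u' j) :
    (∀ t ∈ Icc 0 Real.pi, |d.U t - hump u (2 * j) t| ≤ d.ρ) ∧ hump u' (2 * j) Real.pi ≤ -d.β :=
  d.close _ _ (hu.isSolOn.hump_even hj) (hu.abs_hump_zero_le hp d hμ hj)
    (hu.abs_deriv_sub_le_of_isBump hp d hμ hj hbump)

theorem hump_le_of_not_isBump (hp : 1 < p) (d : Calibration p k) (hμ : d.μ₀ ≤ μ)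
    (hu : IsNonnegSol p μ k u u') (hj : 2 * j < k) (hbump : ¬ d.IsBump u' j) :
    ∀ t ∈ Icc 0 Real.pi, hump u (2 * j) t ≤ 5 * d.η := fun t ht => by
  have htan := (hu.isSolOn.hump_even hj).le_tangent_of_nonpos (powField_sin_nonpos _) le_rfl
    ht.1 ht.2
  have hslope := mul_le_mul_of_nonneg_right (hu.deriv_le_of_not_isBump hp d hμ hj hbump) ht.1
  have htime := mul_le_mul_of_nonneg_left (ht.2.trans Real.pi_le_four) d.η_pos.le
  linarith [hu.hump_zero_lt hp d hμ hj.le, d.ε_le]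

theorem deriv_pi_le_of_not_isBump (hp : 1 < p) (d : Calibration p k) (hμ : d.μ₀ ≤ μ)
    (hu : IsNonnegSol p μ k u u') (hj : 2 * j < k) (hbump : ¬ d.IsBump u' j) :
    hump u' (2 * j) Real.pi ≤ d.U' 0 / 4 :=
  ((hu.isSolOn.hump_even hj).deriv_anti_of_nonpos (powField_sin_nonpos _) le_rfl
    Real.pi_pos.le le_rfl).trans
      ((hu.deriv_le_of_not_isBump hp d hμ hj hbump).trans d.η_le)

end IsNonnegSol

/-! ### Linearized solutions along the humps -/

/-- The quotients `f(u) / u` and `(f(u) - f(v)) / (u - v)`, where `f` is the truncated power, along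
`u` behave on each hump like the linearization at the arc or at zero, according to the code of `u`.
This is all that is used about the coefficient `q` of a linear equation in order to show that its
Dirichlet problem has only the zero solution. -/
structure IsHumpControlled (d : Calibration p k) (μ : ℝ) (q u u' : ℝ → ℝ) : Prop where
  isFlipping : ∀ j, 2 * j < k → d.IsBump u' j → IsFlipping d.δ d.B (hump q (2 * j))
  isNearlyFree : ∀ j, 2 * j < k → ¬ d.IsBump u' j → IsNearlyFree (12 * 3 ^ k) (hump q (2 * j))
  isSmallBarrier : ∀ j, 2 * j + 1 < k → IsSmallBarrier d.ε (hump q (2 * j + 1))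
    (powField p (negSin μ)) (hump u (2 * j + 1)) (hump u' (2 * j + 1))
  deriv_le_of_isBump : ∀ j, 2 * j + 1 < k → d.IsBump u' j → hump u' (2 * j + 1) 0 ≤ -d.β
  deriv_le_of_not_isBump : ∀ j, 2 * j + 1 < k → ¬ d.IsBump u' j →
    hump u' (2 * j + 1) 0 ≤ d.U' 0 / 4

/-- Admissible data of a linearized solution at the left end of the `j`-th positive hump: `b` says
whether the hump carries a bump. -/
def Calibration.EntryCone (d : Calibration p k) (b : Prop) (j : ℕ) (x y : ℝ) : Prop :=
  ForwardCone (12 * 3 ^ j) x y ∧ (b → ForwardCone d.δ x y)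

/-- Data of a linearized solution at the right end of the `j`-th positive hump. -/
def Calibration.ExitCone (d : Calibration p k) (b : Prop) (j : ℕ) (x y : ℝ) : Prop :=
  0 < x ∧ (b → BoundedSlopeCone d.B x y) ∧ (¬ b → ForwardCone (2 * (12 * 3 ^ j + 4)) x y)

theorem ForwardCone.weaken {d e x y : ℝ} (h : ForwardCone d x y) (hde : d ≤ e) :
    ForwardCone e x y :=
  ⟨h.1, h.2.1, h.2.2.trans (mul_le_mul_of_nonneg_right hde h.2.1.le)⟩

namespace IsHumpControlled

variable {d : Calibration p k} {μ : ℝ} {q u u' w w' : ℝ → ℝ} {j : ℕ}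

theorem exists_exitCone (hq : IsHumpControlled d μ q u u')
    (hw : IsSolOn (Icc 0 (k * Real.pi)) (linField q) w w') (hj : 2 * j < k)
    (h : d.EntryCone (d.IsBump u' j) j (hump w (2 * j) 0) (hump w' (2 * j) 0)) :
    ∃ σ, d.ExitCone (d.IsBump u' j) j (σ * hump w (2 * j) Real.pi)
      (σ * hump w' (2 * j) Real.pi) := by
  by_cases hbump : d.IsBump u' j
  · obtain ⟨hneg, hslope⟩ := hq.isFlipping j hj hbump _ _ (hw.hump_of_lt hj) (h.2 hbump)
    rw [abs_of_neg hneg] at hslope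
    refine ⟨-1, by linarith, fun _ => ⟨by linarith, ?_⟩, fun hb => absurd hbump hb⟩
    linarith [(abs_le.1 hslope).2]
  · have hpow : (3 : ℝ) ^ j ≤ 3 ^ k := pow_le_pow_right₀ (by norm_num) (by lia)
    obtain ⟨hpos, hcone⟩ := hq.isNearlyFree j hj hbump _ _ (hw.hump_of_lt hj) (12 * 3 ^ j)
      ⟨by positivity, by linarith⟩ h.1
    refine ⟨1, ?_⟩
    simp only [one_mul]
    exact ⟨hpos, fun hb => absurd hb hbump, fun _ => hcone⟩

theorem entryCone_succ (hq : IsHumpControlled d μ q u u')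
    (hw : IsSolOn (Icc 0 (k * Real.pi)) (linField q) w w') (hj : 2 * j + 1 < k)
    (h : d.ExitCone (d.IsBump u' j) j (hump w (2 * j) Real.pi) (hump w' (2 * j) Real.pi)) :
    0 < hump w (2 * j + 1) Real.pi ∧ d.EntryCone (d.IsBump u' (j + 1)) (j + 1)
      (hump w (2 * j + 1) Real.pi) (hump w' (2 * j + 1) Real.pi) := by
  have hbar := hq.isSmallBarrier j hj
  have hwj := hw.hump_of_lt hj
  have hA := d.isArc.deriv_zero_pos
  have hpow : (1 : ℝ) ≤ 3 ^ j := one_le_pow₀ (by norm_num)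
  have hright (hb : d.IsBump u' (j + 1)) : d.U' 0 / 2 ≤ hump u' (2 * j + 1) Real.pi := by
    rw [hump_pi]
    exact hb
  obtain ⟨hpos, hbump, hnot⟩ := h
  simp only [hump_pi _ (2 * j)] at hpos hbump hnot
  by_cases hS : d.IsBump u' j
  · have hleft := hq.deriv_le_of_isBump j hj hS
    obtain ⟨hπ, hcone⟩ := hbar.forwardCone_twelve d.β_pos d.ε_pos.le d.B_pos.le d.mul_ε_le
      d.ε_le_div hwj (hbump hS) hleft
    refine ⟨hπ, hcone.weaken (by rw [pow_succ]; linarith), fun hb => ?_⟩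
    exact (hbar.forwardCone_of_boundedSlopeCone d.β_pos d.ε_pos.le d.B_pos.le d.mul_ε_le
      d.ε_le_div hwj (hbump hS) hleft hA (hright hb)).weaken d.div_le
  · obtain ⟨hlt, hcone⟩ := (hnot hS).of_nonpos hwj hbar.weight_nonpos
    refine ⟨hpos.trans hlt, hcone.weaken (by rw [pow_succ]; linarith), fun hb => ?_⟩
    exact (hbar.forwardCone_of_forwardCone hA hwj (hnot hS)
      (hq.deriv_le_of_not_isBump j hj hS) (hright hb)).weaken d.div_le

theorem exists_entryCone (hq : IsHumpControlled d μ q u u')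
    (hw : IsSolOn (Icc 0 (k * Real.pi)) (linField q) w w') (hw₀ : w 0 = 0) (hw₁ : w' 0 ≠ 0) :
    ∀ j, 2 * j < k → ∃ σ, d.EntryCone (d.IsBump u' j) j (σ * hump w (2 * j) 0)
      (σ * hump w' (2 * j) 0)
  | 0, _ => by
    have hsq := mul_self_pos.2 hw₁
    refine ⟨w' 0, ?_⟩
    simp only [hump_zero, mul_zero, Nat.cast_zero, zero_mul, hw₀]
    exact ⟨⟨le_rfl, hsq, by positivity⟩, fun _ => ⟨le_rfl, hsq, mul_nonneg d.δ_pos.le hsq.le⟩⟩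
  | j + 1, hj => by
    obtain ⟨σ, hσ⟩ := exists_entryCone hq hw hw₀ hw₁ j (by lia)
    obtain ⟨τ, hτ⟩ := hq.exists_exitCone (hw.const_mul σ) (by lia) hσ
    have h := (hq.entryCone_succ ((hw.const_mul σ).const_mul τ) (by lia) hτ).2
    refine ⟨τ * σ, ?_⟩
    rw [mul_add_one, ← hump_pi w (2 * j + 1), ← hump_pi w' (2 * j + 1)]
    simpa only [hump, mul_assoc] using h

/-- Up to sign, a nonzero solution stays in the cones, so it cannot vanish at `kπ`. -/
theorem deriv_eq_zero (hq : IsHumpControlled d μ q u u') (hk : 1 ≤ k)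
    (hw : IsSolOn (Icc 0 (k * Real.pi)) (linField q) w w') (hw₀ : w 0 = 0)
    (hwk : w (k * Real.pi) = 0) : w' 0 = 0 := by
  by_contra hw₁
  obtain ⟨n, rfl⟩ := Nat.exists_eq_add_of_le' hk
  obtain ⟨σ, hσ⟩ := hq.exists_entryCone hw hw₀ hw₁ (n / 2) (by lia)
  obtain ⟨τ, hτ⟩ := hq.exists_exitCone (hw.const_mul σ) (by lia) hσ
  have hne : hump w n Real.pi ≠ 0 := by
    rcases Nat.even_or_odd' n with ⟨j, rfl | rfl⟩
    · rw [Nat.mul_div_cancel_left j two_pos] at hτ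
      exact fun h => hτ.1.ne' (by simp only [hump] at h ⊢; rw [h, mul_zero, mul_zero])
    · rw [(by lia : (2 * j + 1) / 2 = j)] at hτ
      have hpos := (hq.entryCone_succ ((hw.const_mul σ).const_mul τ) (by lia) hτ).1
      exact fun h => hpos.ne' (by simp only [hump] at h ⊢; rw [h, mul_zero, mul_zero])
  exact hne (by rw [hump_pi, hump_zero, hwk])

end IsHumpControlled

namespace IsNonnegSol

variable {μ : ℝ} {j : ℕ} {u u' v v' w w' : ℝ → ℝ}

theorem hump_secantWeight_even (j : ℕ) (u v : ℝ → ℝ) {t : ℝ} (ht : t ∈ Icc 0 Real.pi) :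
    hump (secantWeight p (sinWeight μ) u v) (2 * j) t =
      secantWeight p Real.sin (hump u (2 * j)) (hump v (2 * j)) t := by
  rw [secantWeight, ← hump_sinWeight_even μ j ht]
  rfl

theorem isFlipping_secantWeight (hp : 1 < p) (d : Calibration p k) (hμ : d.μ₀ ≤ μ)
    (hu : IsNonnegSol p μ k u u') (hv : IsNonnegSol p μ k v v') (hj : 2 * j < k)
    (hbu : d.IsBump u' j) (hbv : d.IsBump v' j) :
    IsFlipping d.δ d.B (hump (secantWeight p (sinWeight μ) u v) (2 * j)) :=
  d.isFlipping _ fun t ht => by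
    rw [hump_secantWeight_even j u v ht]
    exact abs_secantWeight_sub_linWeight_le hp (d.modulus t ht)
      ((hu.close_of_isBump hp d hμ hj hbu).1 t ht) ((hv.close_of_isBump hp d hμ hj hbv).1 t ht)
      (hu.hump_mem_Icc hj ht).2 (hv.hump_mem_Icc hj ht).2

theorem isNearlyFree_secantWeight (hp : 1 < p) (d : Calibration p k) (hμ : d.μ₀ ≤ μ)
    (hu : IsNonnegSol p μ k u u') (hv : IsNonnegSol p μ k v v') (hj : 2 * j < k)
    (hbu : ¬ d.IsBump u' j) (hbv : ¬ d.IsBump v' j) :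
    IsNearlyFree (12 * 3 ^ k) (hump (secantWeight p (sinWeight μ) u v) (2 * j)) :=
  d.isNearlyFree _ fun t ht => by
    obtain ⟨ξ, hξ, hslope⟩ := exists_truncPowSlope_eq hp (hu.hump_mem_Icc hj ht).2
      (hv.hump_mem_Icc hj ht).2
    have hle : ξ ≤ 5 * d.η := hξ.2.trans (sup_le (hu.hump_le_of_not_isBump hp d hμ hj hbu t ht)
      (hv.hump_le_of_not_isBump hp d hμ hj hbv t ht))
    rw [hump_secantWeight_even j u v ht, secantWeight, hslope, abs_mul,
      abs_of_nonneg (posPowDeriv_nonneg hp ξ)]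
    exact (mul_le_of_le_one_left (posPowDeriv_nonneg hp ξ) (Real.abs_sin_le_one t)).trans
      ((posPowDeriv_mono hp hle).trans d.posPowDeriv_le)

theorem isSmallBarrier_secantWeight (hp : 1 < p) (d : Calibration p k) (hμ : d.μ₀ ≤ μ)
    (hu : IsNonnegSol p μ k u u') (hv : IsNonnegSol p μ k v v') (hj : 2 * j + 1 < k) :
    IsSmallBarrier d.ε (hump (secantWeight p (sinWeight μ) u v) (2 * j + 1))
      (powField p (negSin μ)) (hump u (2 * j + 1)) (hump u' (2 * j + 1)) := by
  have hμ₀ : 0 ≤ μ := d.μ₀_pos.le.trans hμ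
  have hq : ∀ t ∈ Icc 0 Real.pi, hump (secantWeight p (sinWeight μ) u v) (2 * j + 1) t =
      -(μ * Real.sin t * truncPowSlope p (hump u (2 * j + 1) t) (hump v (2 * j + 1) t)) := by
    intro t ht
    rw [← neg_mul, ← negSin, ← hump_sinWeight_odd μ j ht]
    rfl
  have hle : ∀ t ∈ Icc 0 Real.pi, hump u (2 * j + 1) t ^ (p - 1) ≤
      truncPowSlope p (hump u (2 * j + 1) t) (hump v (2 * j + 1) t) := fun t ht =>
    rpow_sub_one_le_truncPowSlope hp (hu.hump_mem_Icc hj ht) (hv.hump_mem_Icc hj ht)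
  have hsin : ∀ t ∈ Icc 0 Real.pi, 0 ≤ μ * Real.sin t := fun t ht =>
    mul_nonneg hμ₀ (sin_nonneg_of_mem_Icc ht)
  refine ⟨hu.isSolOn.hump_odd hj, fun t ht => (hu.hump_mem_Icc hj ht).1,
    (hu.hump_zero_lt hp d hμ hj.le).le, ?_, fun t ht => ?_, powField_negSin_nonneg hμ₀ _,
    fun t ht => ?_⟩
  · rw [hump_pi]
    exact (hu.hump_zero_lt hp d hμ hj).le
  · rw [hq t ht, neg_nonpos]
    exact mul_nonneg (hsin t ht)
      ((Real.rpow_nonneg (hu.hump_mem_Icc hj ht).1 _).trans (hle t ht))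
  · have hmem := hu.hump_mem_Icc hj ht
    rw [powField, linField, hq t ht, negSin, truncPow_of_mem_Icc hmem,
      rpow_eq_rpow_sub_one_mul hp hmem.1, neg_mul, neg_neg, neg_mul, neg_neg, mul_assoc _ _ (_ * _)]
    have := mul_le_mul_of_nonneg_left (mul_le_mul_of_nonneg_right (hle t ht) hmem.1) (hsin t ht)
    linarith

theorem isHumpControlled_secantWeight (hp : 1 < p) (d : Calibration p k) (hμ : d.μ₀ ≤ μ)
    (hu : IsNonnegSol p μ k u u') (hv : IsNonnegSol p μ k v v')
    (hcode : ∀ j, 2 * j < k → (d.IsBump u' j ↔ d.IsBump v' j)) :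
    IsHumpControlled d μ (secantWeight p (sinWeight μ) u v) u u' where
  isFlipping j hj hb := hu.isFlipping_secantWeight hp d hμ hv hj hb ((hcode j hj).1 hb)
  isNearlyFree j hj hb :=
    hu.isNearlyFree_secantWeight hp d hμ hv hj hb fun h => hb ((hcode j hj).2 h)
  isSmallBarrier j hj := hu.isSmallBarrier_secantWeight hp d hμ hv hj
  deriv_le_of_isBump j hj hb := by
    rw [← hump_pi]
    exact (hu.close_of_isBump hp d hμ (by lia) hb).2
  deriv_le_of_not_isBump j hj hb := by
    rw [← hump_pi]
    exact hu.deriv_pi_le_of_not_isBump hp d hμ (by lia) hb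

theorem eqOn_of_isBump_iff (hp : 1 < p) (hk : 1 ≤ k) (d : Calibration p k) (hμ : d.μ₀ ≤ μ)
    (hu : IsNonnegSol p μ k u u') (hv : IsNonnegSol p μ k v v')
    (hcode : ∀ j, 2 * j < k → (d.IsBump u' j ↔ d.IsBump v' j)) :
    ∀ t ∈ Icc 0 (k * Real.pi), u t = v t ∧ u' t = v' t := by
  have h := (hu.isHumpControlled_secantWeight hp d hμ hv hcode).deriv_eq_zero hk
    (hu.isSolOn.sub hv.isSolOn) (by rw [hu.left_eq_zero, hv.left_eq_zero, sub_zero])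
    (by rw [hu.right_eq_zero, hv.right_eq_zero, sub_zero])
  exact hu.isSolOn.unique (fun t _ => lipschitzWith_powField hp (abs_sinWeight_le μ t)) hv.isSolOn
    (hu.left_eq_zero.trans hv.left_eq_zero.symm) (sub_eq_zero.1 h)

theorem eq_zero_of_linearized (hp : 1 < p) (hk : 1 ≤ k) (d : Calibration p k) (hμ : d.μ₀ ≤ μ)
    (hu : IsNonnegSol p μ k u u')
    (hw : IsSolOn (Icc 0 (k * Real.pi))
      (linField fun t => sinWeight μ t * posPowDeriv p (u t)) w w')
    (hw₀ : w 0 = 0) (hwk : w (k * Real.pi) = 0) : ∀ t ∈ Icc 0 (k * Real.pi), w t = 0 := by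
  have hsec : secantWeight p (sinWeight μ) u u = fun t => sinWeight μ t * posPowDeriv p (u t) :=
    funext fun t => by rw [secantWeight, truncPowSlope, if_pos rfl]
  have h := (hu.isHumpControlled_secantWeight hp d hμ hu fun _ _ => Iff.rfl).deriv_eq_zero hk
    (hsec ▸ hw) hw₀ hwk
  have hweight : ∀ t ∈ Icc 0 (k * Real.pi),
      |sinWeight μ t * posPowDeriv p (u t)| ≤ ((1 + ‖μ‖₊) * truncLip p : ℝ≥0) := fun t ht => by
    rw [abs_mul, abs_of_nonneg (posPowDeriv_nonneg hp _), NNReal.coe_mul, coe_truncLip hp]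
    exact mul_le_mul (abs_sinWeight_le μ t)
      (posPowDeriv_mono hp (hu.mem_Icc_truncLevel ht).2) (posPowDeriv_nonneg hp _) (by positivity)
  have hzero : IsSolOn (Icc 0 (k * Real.pi))
      (linField fun t => sinWeight μ t * posPowDeriv p (u t)) (fun _ => 0) (fun _ => 0) :=
    fun t _ => ⟨hasDerivAt_const t 0, by simpa [linField] using hasDerivAt_const t (0 : ℝ)⟩
  exact fun t ht => (hw.unique (fun t ht => lipschitzWith_linField (hweight t ht)) hzero hw₀ h
    t ht).1

end IsNonnegSol

/-! ### Existence of a solution for every code -/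

namespace IsSolOn

variable {a b : ℝ} {C : ℝ≥0} {q u u' : ℝ → ℝ}

theorem eq_affine_of_nonpos (hp : 1 < p) (hq : ∀ t ∈ Icc a b, |q t| ≤ C)
    (hu : IsSolOn (Icc a b) (powField p q) u u') (h₀ : u a ≤ 0) (h₁ : u' a ≤ 0) :
    ∀ t ∈ Icc a b, u t = u a + u' a * (t - a) ∧ u' t = u' a := by
  have haffine : IsSolOn (Icc a b) (powField p q) (fun t => u a + u' a * (t - a))
      fun _ => u' a := fun t ht => by
    have hle : u a + u' a * (t - a) ≤ 0 := by
      linarith [mul_nonpos_of_nonpos_of_nonneg h₁ (sub_nonneg.2 ht.1)]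
    rw [powField, truncPow_of_nonpos hp hle, mul_zero, neg_zero]
    refine ⟨?_, hasDerivAt_const t _⟩
    simpa using (((hasDerivAt_id t).sub_const a).const_mul (u' a)).const_add (u a)
  exact hu.unique (fun t ht => lipschitzWith_powField hp (hq t ht)) haffine (by simp) rfl

/-- Where a solution is negative the nonlinearity vanishes, so it stays affine with the negative
slope with which it crossed zero. -/
theorem neg_of_neg (hp : 1 < p) (hq : ∀ t ∈ Icc a b, |q t| ≤ C)
    (hu : IsSolOn (Icc a b) (powField p q) u u') (ha : 0 ≤ u a) {t : ℝ} (ht : t ∈ Icc a b)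
    (hneg : u t < 0) : ∀ s ∈ Icc t b, u s < 0 ∧ u' s < 0 := by
  obtain ⟨s, hs, hs₀, hs_neg⟩ := exists_last_eq (φ := fun t => -u t) (c := 0) ht.1
    (hu.continuousOn.mono (Icc_subset_Icc_right ht.2)).neg (by simpa using ha)
    (by simpa using hneg.le)
  have hst : s < t := hs.2.lt_of_ne fun h => by
    rw [h] at hs₀
    linarith
  obtain ⟨ξ, hξ, hslope⟩ := exists_hasDerivAt_eq_slope u u' hst
    (hu.continuousOn.mono (Icc_subset_Icc hs.1 ht.2))
    fun x hx => (hu x ⟨hs.1.trans hx.1.le, hx.2.le.trans ht.2⟩).1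
  have hξ' : u' ξ < 0 := by
    rw [hslope]
    exact div_neg_of_neg_of_pos (by linarith) (sub_pos.2 hst)
  have hξ₀ : u ξ < 0 := neg_pos.1 (hs_neg ξ ⟨hξ.1, hξ.2.le⟩)
  have hsub : Icc ξ b ⊆ Icc a b := Icc_subset_Icc_left (hs.1.trans hξ.1.le)
  intro r hr
  obtain ⟨hr₀, hr₁⟩ := (hu.mono hsub).eq_affine_of_nonpos hp (fun t ht => hq t (hsub ht)) hξ₀.le
    hξ'.le r ⟨hξ.2.le.trans hr.1, hr.2⟩
  have hmul := mul_nonpos_of_nonpos_of_nonneg hξ'.le (sub_nonneg.2 (hξ.2.le.trans hr.1))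
  exact ⟨by linarith, hr₁.trans_lt hξ'⟩

theorem nonneg_of_right_nonneg (hp : 1 < p) (hq : ∀ t ∈ Icc a b, |q t| ≤ C)
    (hu : IsSolOn (Icc a b) (powField p q) u u') (ha : 0 ≤ u a) (hb : 0 ≤ u b) :
    ∀ t ∈ Icc a b, 0 ≤ u t := fun t ht => by
  by_contra! hneg
  exact hb.not_gt (hu.neg_of_neg hp hq ha ht hneg b ⟨ht.2, le_rfl⟩).1

theorem deriv_right_nonpos (hp : 1 < p) (hq : ∀ t ∈ Icc a b, |q t| ≤ C)
    (hu : IsSolOn (Icc a b) (powField p q) u u') (hab : a < b) (ha : 0 ≤ u a) (hb : u b = 0) :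
    u' b ≤ 0 :=
  deriv_nonpos_of_forall_left_le hab (hu b ⟨hab.le, le_rfl⟩).1 fun s hs => by
    rw [hb]
    exact hu.nonneg_of_right_nonneg hp hq ha hb.ge s ⟨hs.1.le, hs.2.le⟩

end IsSolOn

theorem exists_eq_forall_uIcc_le {φ : ℝ → ℝ} (hφ : Continuous φ) {y z c : ℝ} (hy : φ y ≤ c)
    (hz : c ≤ φ z) : ∃ s ∈ uIcc y z, φ s = c ∧ ∀ t ∈ uIcc y s, φ t ≤ c := by
  rcases le_total y z with hyz | hyz
  · obtain ⟨s, hs, hsc, hlt⟩ := exists_first_eq hyz hφ.continuousOn hy hz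
    refine ⟨s, Icc_subset_uIcc hs, hsc, fun t ht => ?_⟩
    rw [uIcc_of_le hs.1] at ht
    exact ht.2.lt_or_eq.elim (fun h => (hlt t ⟨ht.1, h⟩).le) fun h => h ▸ hsc.le
  · obtain ⟨s, hs, hsc, hlt⟩ := exists_last_eq hyz hφ.neg.continuousOn (neg_le_neg hz)
      (neg_le_neg hy)
    refine ⟨s, Icc_subset_uIcc' hs, neg_inj.1 hsc, fun t ht => ?_⟩
    rw [uIcc_of_ge hs.2] at ht
    exact ht.1.lt_or_eq.elim (fun h => (neg_lt_neg_iff.1 (hlt t ⟨h, ht.2⟩)).le)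
      fun h => h ▸ (neg_inj.1 hsc).le

theorem exists_eq_forall_uIcc_ge {φ : ℝ → ℝ} (hφ : Continuous φ) {y z c : ℝ} (hy : φ y ≤ c)
    (hz : c ≤ φ z) : ∃ s ∈ uIcc y z, φ s = c ∧ ∀ t ∈ uIcc s z, c ≤ φ t := by
  obtain ⟨s, hs, hsc, hle⟩ := exists_eq_forall_uIcc_le hφ.neg (neg_le_neg hz) (neg_le_neg hy)
  refine ⟨s, uIcc_comm z y ▸ hs, neg_inj.1 hsc, fun t ht => ?_⟩
  exact neg_le_neg_iff.1 (hle t (uIcc_comm s z ▸ ht))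

/-- The family of solutions of the rescaled problem that vanish at `0`, indexed by the slope
at `0`. -/
structure IsShootingFamily (p μ : ℝ) (k : ℕ) (V V' : ℝ → ℝ → ℝ) : Prop where
  isSolOn : ∀ y, IsSolOn (Icc 0 (k * Real.pi)) (powField p (sinWeight μ)) (V y) (V' y)
  left_eq_zero : ∀ y, V y 0 = 0
  deriv_left : ∀ y, V' y 0 = y

theorem exists_isShootingFamily (hp : 1 < p) (μ : ℝ) (k : ℕ) :
    ∃ V V', IsShootingFamily p μ k V V' := by
  choose V V' hsol hzero hslope using fun y => exists_isSolOn_powField hp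
    (show 0 ≤ k * Real.pi by positivity) (continuous_sinWeight μ) (abs_sinWeight_le μ) 0 y
  exact ⟨V, V', hsol, hzero, hslope⟩

namespace Calibration

/-- A solution enters its `j`-th positive hump with a small value and an admissible slope. -/
def Enters (d : Calibration p k) (j : ℕ) (u u' : ℝ → ℝ) : Prop :=
  hump u (2 * j) 0 ∈ Icc 0 d.ε ∧ hump u' (2 * j) 0 ≤ slopeCap p

/-- Through its first `j` positive humps, a solution is close to the distinguished arc on the humps
in `S` and small on the others. -/
def FollowsCode (d : Calibration p k) (S : Set ℕ) (j : ℕ) (u u' : ℝ → ℝ) : Prop :=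
  ∀ i < j, d.Enters i u u' ∧ 0 ≤ hump u (2 * i) Real.pi ∧
    (i ∈ S → d.U' 0 - d.η ≤ hump u' (2 * i) 0) ∧ (i ∉ S → hump u' (2 * i) 0 ≤ d.η)

/-- An interval of initial slopes that follow the code `S` up to the `j`-th positive hump, and
enter this hump with a range of slopes from nonpositive to maximal. -/
structure IsEntryInterval (d : Calibration p k) (V V' : ℝ → ℝ → ℝ) (S : Set ℕ) (j : ℕ)
    (y z : ℝ) : Prop where
  followsCode : ∀ α ∈ uIcc y z, d.FollowsCode S j (V α) (V' α)
  enters : ∀ α ∈ uIcc y z, d.Enters j (V α) (V' α)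
  left_eq_zero : hump (V y) (2 * j) 0 = 0
  deriv_left_nonpos : hump (V' y) (2 * j) 0 ≤ 0
  deriv_right_eq : hump (V' z) (2 * j) 0 = slopeCap p

/-- An interval of initial slopes that follow the code `S` through the `j`-th positive hump, and
leave this hump with a range of values from zero to `d.ε`. -/
structure IsExitInterval (d : Calibration p k) (V V' : ℝ → ℝ → ℝ) (S : Set ℕ) (j : ℕ)
    (y z : ℝ) : Prop where
  followsCode : ∀ α ∈ uIcc y z, d.FollowsCode S (j + 1) (V α) (V' α)
  left_eq_zero : hump (V y) (2 * j) Real.pi = 0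
  le_right : d.ε ≤ hump (V z) (2 * j) Real.pi

variable {d : Calibration p k} {S : Set ℕ} {j : ℕ} {μ : ℝ} {u u' : ℝ → ℝ}

theorem FollowsCode.succ (h : d.FollowsCode S j u u') (hj : d.Enters j u u')
    (hπ : 0 ≤ hump u (2 * j) Real.pi) (hmem : j ∈ S → d.U' 0 - d.η ≤ hump u' (2 * j) 0)
    (hnotMem : j ∉ S → hump u' (2 * j) 0 ≤ d.η) : d.FollowsCode S (j + 1) u u' := fun i hi => by
  rcases Nat.lt_succ_iff_lt_or_eq.1 hi with hi | rfl
  · exact h i hi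
  · exact ⟨hj, hπ, hmem, hnotMem⟩

theorem FollowsCode.le_solBound (hp : 1 < p) (h : d.FollowsCode S j u u')
    (hu : IsSolOn (Icc 0 (k * Real.pi)) (powField p (sinWeight μ)) u u') {i : ℕ} (hij : i < j)
    (hi : 2 * i < k) :
    ∀ t ∈ Icc 0 Real.pi, hump u (2 * i) t ≤ solBound p ∧ |hump u' (2 * i) t| ≤ slopeBound p :=
  have ⟨⟨hmem, hslope⟩, hπ, _⟩ := h i hij
  (hu.hump_even hi).le_solBound_of_nonneg_ends hp
    ⟨hmem.1, hmem.2.trans (d.ε_le.trans d.η_le_one)⟩ hslope hπ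

theorem FollowsCode.isBump_iff (h : d.FollowsCode S j u u') {i : ℕ} (hi : i < j) :
    d.IsBump u' i ↔ i ∈ S := by
  obtain ⟨-, -, hmem, hnotMem⟩ := h i hi
  have hη := d.η_le
  have hη₀ := d.η_pos
  rw [IsBump]
  exact ⟨fun hb => by_contra fun hS => by linarith [hnotMem hS], fun hS => by linarith [hmem hS]⟩

end Calibration

namespace IsShootingFamily

variable {d : Calibration p k} {S : Set ℕ} {i j : ℕ} {μ : ℝ} {V V' : ℝ → ℝ → ℝ}

theorem continuous (hp : 1 < p) (hV : IsShootingFamily p μ k V V') {t : ℝ}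
    (ht : t ∈ Icc 0 (k * Real.pi)) :
    Continuous (fun y => V y t) ∧ Continuous (fun y => V' y t) := by
  have hdist : ∀ y z, _ := fun y z => IsSolOn.dist_le (D := |y - z|)
    (fun t _ => lipschitzWith_powField hp (abs_sinWeight_le μ t)) (hV.isSolOn y) (hV.isSolOn z)
    (by simp [hV.left_eq_zero]) (by rw [hV.deriv_left, hV.deriv_left]) t ht
  exact ⟨(LipschitzWith.of_dist_le' fun y z => (hdist y z).1.trans_eq (mul_comm _ _)).continuous,
    (LipschitzWith.of_dist_le' fun y z => (hdist y z).2.trans_eq (mul_comm _ _)).continuous⟩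

theorem continuous_hump (hp : 1 < p) (hV : IsShootingFamily p μ k V V') (hi : i < k) {t : ℝ}
    (ht : t ∈ Icc 0 Real.pi) : Continuous (fun y => hump (V y) i t) :=
  (hV.continuous hp (add_mul_pi_mem_Icc hi ht)).1

theorem continuous_hump_deriv (hp : 1 < p) (hV : IsShootingFamily p μ k V V') (hi : i < k) {t : ℝ}
    (ht : t ∈ Icc 0 Real.pi) : Continuous (fun y => hump (V' y) i t) :=
  (hV.continuous hp (add_mul_pi_mem_Icc hi ht)).2

theorem isEntryInterval_zero (hV : IsShootingFamily p μ k V V') (d : Calibration p k)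
    (S : Set ℕ) : d.IsEntryInterval V V' S 0 0 (slopeCap p) := by
  have hvalue : ∀ y, hump (V y) (2 * 0) 0 = 0 := fun y => by simp [hump, hV.left_eq_zero]
  have hslope : ∀ y, hump (V' y) (2 * 0) 0 = y := fun y => by simp [hump, hV.deriv_left]
  refine ⟨fun _ _ i hi => absurd hi i.not_lt_zero, fun α hα => ⟨?_, ?_⟩, hvalue 0, (hslope 0).le,
    hslope _⟩
  · rw [hvalue]
    exact ⟨le_rfl, d.ε_pos.le⟩
  · rw [uIcc_of_le slopeCap_pos.le] at hα
    exact (hslope α).trans_le hα.2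

theorem exit_dichotomy (hV : IsShootingFamily p μ k V V') (hj : 2 * j < k)
    {y z α : ℝ} (h : d.IsEntryInterval V V' S j y z) (hα : α ∈ uIcc y z) :
    (hump (V' α) (2 * j) 0 ∈ Icc d.η (d.U' 0 - d.η) → d.ε ≤ hump (V α) (2 * j) Real.pi) ∧
      (hump (V' α) (2 * j) 0 ∈ Icc (d.U' 0 + d.η) (slopeCap p) →
        hump (V α) (2 * j) Real.pi ≤ -d.ε) :=
  d.dichotomy _ _ ((hV.isSolOn α).hump_even hj)
    (abs_le.2 ⟨by linarith [(h.enters α hα).1.1, d.ε_pos], (h.enters α hα).1.2⟩)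

theorem exists_isExitInterval_of_mem (hp : 1 < p) (hV : IsShootingFamily p μ k V V')
    (hj : 2 * j < k) {y z : ℝ} (h : d.IsEntryInterval V V' S j y z) (hjS : j ∈ S) :
    ∃ s r, d.IsExitInterval V V' S j s r := by
  have hη := d.η_le
  have hη₀ := d.η_pos
  have hcap : d.U' 0 + d.η ≤ slopeCap p := add_le_add d.slope_le d.η_le_one
  obtain ⟨r, hr, hr_slope, hr_ge⟩ := exists_eq_forall_uIcc_ge (c := d.U' 0 - d.η)
    (hV.continuous_hump_deriv hp hj (left_mem_Icc.2 Real.pi_nonneg))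
    (by linarith [h.deriv_left_nonpos]) (by linarith [h.deriv_right_eq])
  have hr_value := (hV.exit_dichotomy hj h hr).1 ⟨by linarith, hr_slope.le⟩
  have hz_value := (hV.exit_dichotomy hj h right_mem_uIcc).2
    ⟨hcap.trans_eq h.deriv_right_eq.symm, h.deriv_right_eq.le⟩
  obtain ⟨s, hs, hs_value, hs_ge⟩ := exists_eq_forall_uIcc_ge (c := 0)
    (hV.continuous_hump hp hj (right_mem_Icc.2 Real.pi_nonneg))
    (hz_value.trans (neg_nonpos.2 d.ε_pos.le)) (d.ε_pos.le.trans hr_value)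
  rw [uIcc_comm] at hs
  refine ⟨s, r, fun α hα => ?_, hs_value, hr_value⟩
  have hα_right : α ∈ uIcc r z := uIcc_subset_uIcc hs left_mem_uIcc hα
  have hα' : α ∈ uIcc y z := uIcc_subset_uIcc hr right_mem_uIcc hα_right
  exact (h.followsCode α hα').succ (h.enters α hα') (hs_ge α hα) (fun _ => hr_ge α hα_right)
    fun hS => absurd hjS hS

theorem exists_isExitInterval_of_notMem (hp : 1 < p) (hV : IsShootingFamily p μ k V V')
    (hj : 2 * j < k) {y z : ℝ} (h : d.IsEntryInterval V V' S j y z) (hjS : j ∉ S) :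
    ∃ s r, d.IsExitInterval V V' S j s r := by
  have hη := d.η_le
  have hη₀ := d.η_pos
  have hcap := d.slope_le.trans_lt slopeBound_lt_slopeCap
  obtain ⟨r, hr, hr_slope, hr_le⟩ := exists_eq_forall_uIcc_le (c := d.η)
    (hV.continuous_hump_deriv hp hj (left_mem_Icc.2 Real.pi_nonneg))
    (by linarith [h.deriv_left_nonpos]) (by linarith [h.deriv_right_eq])
  have hr_value := (hV.exit_dichotomy hj h hr).1 ⟨hr_slope.ge, by linarith⟩
  have hy_value : hump (V y) (2 * j) Real.pi ≤ 0 := by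
    have htan := ((hV.isSolOn y).hump_even hj).le_tangent_of_nonpos (powField_sin_nonpos _) le_rfl
      Real.pi_nonneg le_rfl
    linarith [h.left_eq_zero, mul_nonpos_of_nonpos_of_nonneg h.deriv_left_nonpos
      (sub_nonneg.2 Real.pi_nonneg)]
  obtain ⟨s, hs, hs_value, hs_ge⟩ := exists_eq_forall_uIcc_ge (c := 0)
    (hV.continuous_hump hp hj (right_mem_Icc.2 Real.pi_nonneg)) hy_value
    (d.ε_pos.le.trans hr_value)
  refine ⟨s, r, fun α hα => ?_, hs_value, hr_value⟩
  have hα_left : α ∈ uIcc y r := uIcc_subset_uIcc hs right_mem_uIcc hα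
  have hα' : α ∈ uIcc y z := uIcc_subset_uIcc left_mem_uIcc hr hα_left
  exact (h.followsCode α hα').succ (h.enters α hα') (hs_ge α hα) (fun hS => absurd hS hjS)
    fun _ => hr_le α hα_left

theorem exists_isExitInterval (hp : 1 < p) (hV : IsShootingFamily p μ k V V') (hj : 2 * j < k)
    {y z : ℝ} (h : d.IsEntryInterval V V' S j y z) : ∃ s r, d.IsExitInterval V V' S j s r := by
  by_cases hjS : j ∈ S
  · exact hV.exists_isExitInterval_of_mem hp hj h hjS
  · exact hV.exists_isExitInterval_of_notMem hp hj h hjS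

theorem hump_deriv_pi_nonpos (hp : 1 < p) (hV : IsShootingFamily p μ k V V') (hi : i < k) {α : ℝ}
    (h : hump (V α) i Real.pi = 0) : hump (V' α) i Real.pi ≤ 0 :=
  have hmem := add_mul_pi_mem_Icc hi (right_mem_Icc.2 Real.pi_nonneg)
  IsSolOn.deriv_right_nonpos (b := Real.pi + i * Real.pi) hp (fun t _ => abs_sinWeight_le μ t)
    ((hV.isSolOn α).mono (Icc_subset_Icc_right hmem.2)) (by positivity) (hV.left_eq_zero α).ge h

theorem hump_pi_nonneg_of_deriv_nonneg (hp : 1 < p) (hV : IsShootingFamily p μ k V V')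
    (hi : i < k) {α : ℝ} (h : 0 ≤ hump (V' α) i Real.pi) : 0 ≤ hump (V α) i Real.pi := by
  by_contra! hneg
  have hmem := add_mul_pi_mem_Icc hi (right_mem_Icc.2 Real.pi_nonneg)
  exact h.not_gt ((hV.isSolOn α).neg_of_neg hp (fun t _ => abs_sinWeight_le μ t)
    (hV.left_eq_zero α).ge hmem hneg _ ⟨le_rfl, hmem.2⟩).2

theorem hump_succ_pi_nonpos (hp : 1 < p) (hV : IsShootingFamily p μ k V V') (hi : i + 1 < k)
    {α : ℝ} (h : hump (V α) i Real.pi = 0) :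
    hump (V α) (i + 1) Real.pi ≤ 0 ∧ hump (V' α) (i + 1) Real.pi ≤ 0 := by
  have hslope := hV.hump_deriv_pi_nonpos hp (i.lt_succ_self.trans hi) h
  rw [hump_pi] at h hslope
  obtain ⟨hvalue, hslope_eq⟩ := IsSolOn.eq_affine_of_nonpos hp
    (q := fun t => sinWeight μ (t + (i + 1 : ℕ) * Real.pi)) (fun t _ => abs_sinWeight_le μ _)
    ((hV.isSolOn α).hump_of_lt hi) h.le hslope Real.pi (right_mem_Icc.2 Real.pi_nonneg)
  rw [hvalue, hslope_eq, h]
  exact ⟨by linarith [mul_nonpos_of_nonpos_of_nonneg hslope (sub_nonneg.2 Real.pi_nonneg)],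
    hslope⟩

theorem slopeCap_lt_hump_odd (hp : 1 < p) (hV : IsShootingFamily p μ k V V') (hμ : d.μ₀ ≤ μ)
    (hj : 2 * j + 1 < k) {y z : ℝ} (h : d.IsExitInterval V V' S j y z) :
    slopeCap p < hump (V' z) (2 * j + 1) Real.pi := by
  have hslope := ((h.followsCode z right_mem_uIcc).le_solBound hp (hV.isSolOn z) j.lt_succ_self
    (by lia) Real.pi (right_mem_Icc.2 Real.pi_nonneg)).2
  refine (d.large μ hμ _ _ ((hV.isSolOn z).hump_odd hj) ?_ ?_).1
  · rw [← hump_pi]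
    exact (neg_le_neg slopeBound_lt_slopeCap.le).trans (abs_le.1 hslope).1
  · rw [← hump_pi]
    exact h.le_right

theorem exists_isEntryInterval_succ (hp : 1 < p) (hV : IsShootingFamily p μ k V V')
    (hμ : d.μ₀ ≤ μ) (hj : 2 * j + 1 < k) {y z : ℝ} (h : d.IsExitInterval V V' S j y z) :
    ∃ s r, d.IsEntryInterval V V' S (j + 1) s r := by
  have hπ := right_mem_Icc.2 Real.pi_nonneg
  obtain ⟨hy_value, hy_slope⟩ := hV.hump_succ_pi_nonpos hp hj h.left_eq_zero
  obtain ⟨r, hr, hr_slope, hr_le⟩ := exists_eq_forall_uIcc_le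
    (hV.continuous_hump_deriv hp hj hπ) (hy_slope.trans slopeCap_pos.le)
    (hV.slopeCap_lt_hump_odd hp hμ hj h).le
  have hr_value := hV.hump_pi_nonneg_of_deriv_nonneg hp hj (slopeCap_pos.le.trans_eq hr_slope.symm)
  obtain ⟨s, hs, hs_value, hs_ge⟩ := exists_eq_forall_uIcc_ge
    (hV.continuous_hump hp hj hπ) hy_value hr_value
  have hsr : uIcc s r ⊆ uIcc y r := uIcc_subset_uIcc hs right_mem_uIcc
  have hyr : uIcc y r ⊆ uIcc y z := uIcc_subset_uIcc left_mem_uIcc hr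
  refine ⟨s, r, fun α hα => h.followsCode α (hyr (hsr hα)), fun α hα => ?_,
    (hump_odd_pi _ j).symm.trans hs_value,
    (hump_odd_pi _ j).symm.trans_le (hV.hump_deriv_pi_nonpos hp hj hs_value),
    (hump_odd_pi _ j).symm.trans hr_slope⟩
  rw [Calibration.Enters, ← hump_odd_pi, ← hump_odd_pi]
  refine ⟨⟨hs_ge α hα, ?_⟩, hr_le α (hsr hα)⟩
  by_contra! hlarge
  have hexit := d.lt_of_deriv_pi_le hμ ((hV.isSolOn α).hump_odd hj) (hr_le α (hsr hα)) hlarge.le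
  rw [← hump_pi] at hexit
  exact hexit.not_ge ((h.followsCode α (hyr (hsr hα))).le_solBound hp (hV.isSolOn α)
    j.lt_succ_self (by lia) Real.pi hπ).1

theorem exists_isEntryInterval (hp : 1 < p) (hV : IsShootingFamily p μ k V V') (hμ : d.μ₀ ≤ μ) :
    ∀ j, 2 * j ≤ k → ∃ y z, d.IsEntryInterval V V' S j y z
  | 0, _ => ⟨_, _, hV.isEntryInterval_zero d S⟩
  | j + 1, hj => by
    obtain ⟨y, z, hentry⟩ := exists_isEntryInterval hp hV hμ j (by lia)
    obtain ⟨s, r, hexit⟩ := hV.exists_isExitInterval hp (by lia) hentry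
    exact hV.exists_isEntryInterval_succ hp hμ (by lia) hexit

theorem exists_followsCode (hp : 1 < p) (hV : IsShootingFamily p μ k V V') (hμ : d.μ₀ ≤ μ)
    (S : Set ℕ) :
    ∃ α, V α (k * Real.pi) = 0 ∧ d.FollowsCode S ((k + 1) / 2) (V α) (V' α) := by
  rcases k.even_or_odd' with ⟨j, hj | hj⟩
  · obtain ⟨y, z, h⟩ := hV.exists_isEntryInterval (S := S) hp hμ j hj.ge
    refine ⟨y, ?_, ?_⟩
    · rw [hj, ← hump_zero (V y)]
      exact h.left_eq_zero
    · rw [show (k + 1) / 2 = j by lia]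
      exact h.followsCode y left_mem_uIcc
  · obtain ⟨y, z, hentry⟩ := hV.exists_isEntryInterval (S := S) hp hμ j (by lia)
    obtain ⟨s, r, h⟩ := hV.exists_isExitInterval hp (by lia) hentry
    refine ⟨s, ?_, ?_⟩
    · rw [hj, ← hump_zero (V s), ← hump_pi]
      exact h.left_eq_zero
    · rw [show (k + 1) / 2 = j + 1 by lia]
      exact h.followsCode s left_mem_uIcc

end IsShootingFamily

theorem Calibration.FollowsCode.isNonnegSol {d : Calibration p k} {S : Set ℕ} {μ : ℝ}
    {u u' : ℝ → ℝ} (h : d.FollowsCode S ((k + 1) / 2) u u') (hp : 1 < p) (hk : 1 ≤ k)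
    (hμ : d.μ₀ ≤ μ) (hu : IsSolOn (Icc 0 (k * Real.pi)) (powField p (sinWeight μ)) u u')
    (h₀ : u 0 = 0) (hkπ : u (k * Real.pi) = 0) : IsNonnegSol p μ k u u' := by
  have hnonneg := hu.nonneg_of_right_nonneg hp (fun t _ => abs_sinWeight_le μ t) h₀.ge hkπ.ge
  exact ⟨hu, h₀, hkπ, hnonneg, IsSolOn.le_of_hump_even_le hk (d.μ₀_pos.le.trans hμ) hu
    (fun t _ => truncPow_nonneg p (u t)) (hkπ.trans_le solBound_pos.le)
    fun j hj t ht => (h.le_solBound hp hu (by lia) hj t ht).1⟩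

theorem exists_isNonnegSol (hp : 1 < p) (hk : 1 ≤ k) (d : Calibration p k) {μ : ℝ}
    (hμ : d.μ₀ ≤ μ) (S : Set ℕ) :
    ∃ u u', IsNonnegSol p μ k u u' ∧ ∀ j, 2 * j < k → (d.IsBump u' j ↔ j ∈ S) := by
  obtain ⟨V, V', hV⟩ := exists_isShootingFamily hp μ k
  obtain ⟨α, hzero, hcode⟩ := hV.exists_followsCode hp hμ S
  exact ⟨V α, V' α, hcode.isNonnegSol hp hk hμ (hV.isSolOn α) (hV.left_eq_zero α) hzero,
    fun j hj => hcode.isBump_iff (by lia)⟩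

theorem isSolOn_powField_zero (hp : 1 < p) (q : ℝ → ℝ) (s : Set ℝ) :
    IsSolOn s (powField p q) (fun _ => 0) fun _ => 0 := fun t _ => by
  rw [powField, truncPow_of_nonpos hp le_rfl, mul_zero, neg_zero]
  exact ⟨hasDerivAt_const t _, hasDerivAt_const t _⟩

theorem IsSolOn.eq_zero_of_eq_zero_of_nonneg {a b : ℝ} {C : ℝ≥0} {q u u' : ℝ → ℝ} (hp : 1 < p)
    (hq : ∀ t ∈ Icc a b, |q t| ≤ C) (hu : IsSolOn (Icc a b) (powField p q) u u')
    (hu0 : ∀ t ∈ Icc a b, 0 ≤ u t) {c : ℝ} (hc : c ∈ Ioo a b) (h₀ : u c = 0) :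
    ∀ t ∈ Icc a b, u t = 0 ∧ u' t = 0 := by
  have hc' := Ioo_subset_Icc_self hc
  have hmin : IsLocalMin u c := by
    filter_upwards [Icc_mem_nhds hc.1 hc.2] with s hs
    rw [h₀]
    exact hu0 s hs
  exact hu.unique_of_mem (fun t ht => lipschitzWith_powField hp (hq t ht))
    (isSolOn_powField_zero hp q _) hc' h₀ (hmin.hasDerivAt_eq_zero (hu c hc').1)

theorem isNonnegSol_of_rpow {μ : ℝ} {u u' : ℝ → ℝ} (hp : 1 < p) (hk : 1 ≤ k) (hμ : 0 ≤ μ)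
    (hu : IsSolOn (Icc 0 (k * Real.pi)) (fun t x => -(sinWeight μ t * x ^ p)) u u')
    (h₀ : u 0 = 0) (hkπ : u (k * Real.pi) = 0) (hu0 : ∀ t ∈ Icc 0 (k * Real.pi), 0 ≤ u t) :
    IsNonnegSol p μ k u u' := by
  have hle : ∀ t ∈ Icc 0 (k * Real.pi), u t ≤ solBound p := by
    refine IsSolOn.le_of_hump_even_le (g := (· ^ p)) hk hμ hu
      (fun t ht => Real.rpow_nonneg (hu0 t ht) p) (hkπ.trans_le solBound_pos.le) fun j hj => ?_
    refine ((hu.hump_of_lt hj).congr fun t ht => ?_).le_solBound hp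
      fun t ht => hu0 _ (add_mul_pi_mem_Icc hj ht)
    rw [← hump_sinWeight_even μ j ht]
    rfl
  refine ⟨hu.congr fun t ht => ?_, h₀, hkπ, hu0, hle⟩
  rw [powField, truncPow_of_mem_Icc ⟨hu0 t ht, (hle t ht).trans solBound_le_truncLevel⟩]

/-- The code of a solution with derivative `u'`: the set of its bumps. -/
noncomputable def Calibration.code (d : Calibration p k) (u' : ℝ → ℝ) : Finset ℕ :=
  open scoped Classical in {j ∈ Finset.range ((k + 1) / 2) | d.IsBump u' j}

theorem Calibration.code_subset (d : Calibration p k) (u' : ℝ → ℝ) :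
    d.code u' ⊆ Finset.range ((k + 1) / 2) := by
  classical
  exact Finset.filter_subset _ _

theorem Calibration.mem_code {d : Calibration p k} {u' : ℝ → ℝ} {j : ℕ} :
    j ∈ d.code u' ↔ 2 * j < k ∧ d.IsBump u' j := by
  classical
  unfold code
  rw [Finset.mem_filter, Finset.mem_range]
  exact and_congr_left' (by lia)

namespace IsNonnegSol

variable {μ : ℝ} {d : Calibration p k} {u u' v v' : ℝ → ℝ}

theorem zero (hp : 1 < p) (μ : ℝ) (k : ℕ) : IsNonnegSol p μ k (fun _ => 0) fun _ => 0 :=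
  ⟨isSolOn_powField_zero hp _ _, rfl, rfl, fun _ _ => le_rfl, fun _ _ => solBound_pos.le⟩

theorem eqOn_of_code_eq (hp : 1 < p) (hk : 1 ≤ k) (hμ : d.μ₀ ≤ μ) (hu : IsNonnegSol p μ k u u')
    (hv : IsNonnegSol p μ k v v') (hcode : d.code u' = d.code v') :
    EqOn u v (Icc 0 (k * Real.pi)) := fun t ht =>
  (hu.eqOn_of_isBump_iff hp hk d hμ hv (fun j hj => by
    simpa only [Calibration.mem_code, hj, true_and] using Finset.ext_iff.1 hcode j) t ht).1

theorem code_congr (d : Calibration p k) (hu : IsNonnegSol p μ k u u')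
    (hv : IsNonnegSol p μ k v v') (huv : EqOn u v (Icc 0 (k * Real.pi))) :
    d.code u' = d.code v' := by
  ext j
  simp only [Calibration.mem_code]
  refine and_congr_right fun hj => ?_
  have hmem := add_mul_pi_mem_Icc hj (left_mem_Icc.2 Real.pi_nonneg)
  have hpos : (0 : ℝ) < k * Real.pi := mul_pos (by exact_mod_cast hj.pos) Real.pi_pos
  have hderiv : hump u' (2 * j) 0 = hump v' (2 * j) 0 :=
    (uniqueDiffOn_Icc hpos _ hmem).eq_deriv _ (hu.isSolOn _ hmem).1.hasDerivWithinAt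
      ((hv.isSolOn _ hmem).1.hasDerivWithinAt.congr huv (huv hmem))
  rw [Calibration.IsBump, Calibration.IsBump, hderiv]

theorem pos_of_code_nonempty (hp : 1 < p) (hu : IsNonnegSol p μ k u u')
    (hcode : (d.code u').Nonempty) : ∀ t ∈ Ioo 0 (k * Real.pi), 0 < u t := by
  obtain ⟨j, hj⟩ := hcode
  obtain ⟨hjk, hbump⟩ := Calibration.mem_code.1 hj
  refine fun t ht => (hu.nonneg t (Ioo_subset_Icc_self ht)).lt_of_ne' fun hzero => ?_
  have hslope : hump u' (2 * j) 0 = 0 := (hu.isSolOn.eq_zero_of_eq_zero_of_nonneg hp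
    (fun t _ => abs_sinWeight_le μ t) hu.nonneg ht hzero _
    (add_mul_pi_mem_Icc hjk (left_mem_Icc.2 Real.pi_nonneg))).2
  rw [Calibration.IsBump, hslope] at hbump
  linarith [d.isArc.deriv_zero_pos]

theorem code_nonempty_of_pos (hp : 1 < p) (hk : 1 ≤ k) (hμ : d.μ₀ ≤ μ)
    (hu : IsNonnegSol p μ k u u') {t : ℝ} (ht : t ∈ Icc 0 (k * Real.pi)) (hpos : 0 < u t) :
    (d.code u').Nonempty := by
  by_contra hempty
  have hzero : d.code (fun _ => 0) = ∅ := by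
    refine Finset.eq_empty_of_forall_notMem fun j hj => (Calibration.mem_code.1 hj).2.not_gt ?_
    exact half_pos d.isArc.deriv_zero_pos
  exact hpos.ne' (hu.eqOn_of_code_eq hp hk hμ (zero hp μ k)
    ((Finset.not_nonempty_iff_eq_empty.1 hempty).trans hzero.symm) ht)

end IsNonnegSol

theorem exists_isNonnegSol_code_eq (hp : 1 < p) (hk : 1 ≤ k) (d : Calibration p k) {μ : ℝ}
    (hμ : d.μ₀ ≤ μ) {S : Finset ℕ} (hS : S ⊆ Finset.range ((k + 1) / 2)) :
    ∃ u u', IsNonnegSol p μ k u u' ∧ d.code u' = S := by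
  obtain ⟨u, u', hu, hbump⟩ := exists_isNonnegSol hp hk d hμ S
  refine ⟨u, u', hu, Finset.ext fun j => Calibration.mem_code.trans ⟨fun h => ?_, fun h => ?_⟩⟩
  · exact_mod_cast (hbump j h.1).1 h.2
  · have hj : 2 * j < k := by
      have := Finset.mem_range.1 (hS h)
      lia
    exact ⟨hj, (hbump j hj).2 (by exact_mod_cast h)⟩

/-! ### Rescaling `[a, b]` to `[0, kπ]` -/

theorem IsSolOn.const_mul_comp {r s : Set ℝ} {F G : ℝ → ℝ → ℝ} {u u' φ : ℝ → ℝ} {c l : ℝ}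
    (hu : IsSolOn s F u u') (hφ : ∀ t ∈ r, HasDerivAt φ l t) (hrs : MapsTo φ r s)
    (hG : ∀ t ∈ r, G t (c * u (φ t)) = c * l ^ 2 * F (φ t) (u (φ t))) :
    IsSolOn r G (fun t => c * u (φ t)) fun t => c * l * u' (φ t) := fun t ht => by
  obtain ⟨hd, hd'⟩ := hu (φ t) (hrs ht)
  refine ⟨((hd.comp t (hφ t ht)).const_mul c).congr_deriv (by ring),
    ((hd'.comp t (hφ t ht)).const_mul (c * l)).congr_deriv ?_⟩
  rw [hG t ht]
  ring

theorem IsSolOn.isC2Sol {a b : ℝ} {ω f u u' : ℝ → ℝ}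
    (hu : IsSolOn (Icc a b) (fun t x => -(ω t * f x)) u u') :
    IsC2Sol a b ω f u u' fun t => -(ω t * f (u t)) :=
  ⟨fun t ht => (hu t ht).1, fun t ht => (hu t ht).2, fun _ _ => neg_add_cancel _⟩

theorem IsC2Sol.isSolOn {a b : ℝ} {ω f u u' u'' : ℝ → ℝ} (hu : IsC2Sol a b ω f u u' u'') :
    IsSolOn (Icc a b) (fun t x => -(ω t * f x)) u u' := fun t ht =>
  ⟨hu.1 t ht, (hu.2.1 t ht).congr_deriv (eq_neg_of_add_eq_zero_left (hu.2.2 t ht))⟩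

theorem IsC2LinSol.isSolOn {a b : ℝ} {ω w w' w'' : ℝ → ℝ} (hw : IsC2LinSol a b ω w w' w'') :
    IsSolOn (Icc a b) (linField ω) w w' := fun t ht =>
  ⟨hw.1 t ht, (hw.2.1 t ht).congr_deriv (eq_neg_of_add_eq_zero_left (hw.2.2 t ht))⟩

section Rescale

/-- The speed of the affine map of `[a, b]` onto `[0, kπ]`. -/
noncomputable def angularRate (a b : ℝ) (k : ℕ) : ℝ := k * Real.pi / (b - a)

/-- The affine map of `[a, b]` onto `[0, kπ]`, in the form in which it appears in `sinW`. -/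
noncomputable def angle (a b : ℝ) (k : ℕ) (t : ℝ) : ℝ := k * Real.pi * (t - a) / (b - a)

/-- The inverse of `angle`. -/
noncomputable def ofAngle (a b : ℝ) (k : ℕ) (s : ℝ) : ℝ := a + s / angularRate a b k

/-- The factor by which a solution on `[0, kπ]` has to be multiplied when it is transported to
`[a, b]`. It makes `|x| ^ (p - 1) * x` absorb the square of the angular rate. -/
noncomputable def amplitude (p a b : ℝ) (k : ℕ) : ℝ := angularRate a b k ^ (2 / (p - 1))

/-- The solution on `[a, b]` corresponding to the solution `U` on `[0, kπ]`. -/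
noncomputable def rescale (p a b : ℝ) (k : ℕ) (U : ℝ → ℝ) : ℝ → ℝ :=
  fun t => amplitude p a b k * U (angle a b k t)

variable {a b : ℝ}

theorem sinWμ_eq_sinWeight_angle (a b : ℝ) (k : ℕ) (μ t : ℝ) :
    sinWμ a b k μ t = sinWeight μ (angle a b k t) := rfl

theorem angularRate_pos (hab : a < b) (hk : 1 ≤ k) : 0 < angularRate a b k :=
  div_pos (mul_pos (by exact_mod_cast hk) Real.pi_pos) (sub_pos.2 hab)

theorem angle_left (a b : ℝ) (k : ℕ) : angle a b k a = 0 := by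
  rw [angle, sub_self, mul_zero, zero_div]

theorem angle_right (hab : a < b) (k : ℕ) : angle a b k b = k * Real.pi :=
  mul_div_cancel_right₀ _ (sub_pos.2 hab).ne'

theorem hasDerivAt_angle (a b : ℝ) (k : ℕ) (t : ℝ) :
    HasDerivAt (angle a b k) (angularRate a b k) t :=
  ((((hasDerivAt_id' t).sub_const a).const_mul (k * Real.pi)).div_const (b - a)).congr_deriv
    (by rw [mul_one, angularRate])

theorem hasDerivAt_ofAngle (a b : ℝ) (k : ℕ) (s : ℝ) :
    HasDerivAt (ofAngle a b k) (angularRate a b k)⁻¹ s :=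
  (((hasDerivAt_id' s).div_const (angularRate a b k)).const_add a).congr_deriv (one_div _)

theorem angle_eq (a b : ℝ) (k : ℕ) (t : ℝ) : angle a b k t = angularRate a b k * (t - a) := by
  rw [angle, angularRate, div_mul_eq_mul_div]

theorem ofAngle_angle (hab : a < b) (hk : 1 ≤ k) (t : ℝ) :
    ofAngle a b k (angle a b k t) = t := by
  rw [ofAngle, angle_eq, mul_div_cancel_left₀ _ (angularRate_pos hab hk).ne',
    add_sub_cancel]

theorem angle_ofAngle (hab : a < b) (hk : 1 ≤ k) (s : ℝ) :
    angle a b k (ofAngle a b k s) = s := by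
  rw [angle_eq, ofAngle, add_sub_cancel_left, mul_div_cancel₀ _ (angularRate_pos hab hk).ne']

theorem ofAngle_zero (a b : ℝ) (k : ℕ) : ofAngle a b k 0 = a := by
  rw [ofAngle, zero_div, add_zero]

theorem ofAngle_mul_pi (hab : a < b) (hk : 1 ≤ k) : ofAngle a b k (k * Real.pi) = b := by
  rw [← angle_right hab, ofAngle_angle hab hk]

theorem strictMono_angle (hab : a < b) (hk : 1 ≤ k) : StrictMono (angle a b k) := fun s t hst => by
  rw [angle_eq, angle_eq]
  exact mul_lt_mul_of_pos_left (sub_lt_sub_right hst a) (angularRate_pos hab hk)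

theorem strictMono_ofAngle (hab : a < b) (hk : 1 ≤ k) : StrictMono (ofAngle a b k) :=
  fun _ _ hst => add_lt_add_right (div_lt_div_of_pos_right hst (angularRate_pos hab hk)) a

theorem mapsTo_angle_Icc (hab : a < b) (hk : 1 ≤ k) :
    MapsTo (angle a b k) (Icc a b) (Icc 0 (k * Real.pi)) := by
  simpa only [angle_left, angle_right hab] using
    (strictMono_angle hab hk).monotone.mapsTo_Icc (a := a) (b := b)

theorem mapsTo_angle_Ioo (hab : a < b) (hk : 1 ≤ k) :
    MapsTo (angle a b k) (Ioo a b) (Ioo 0 (k * Real.pi)) := by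
  simpa only [angle_left, angle_right hab] using
    (strictMono_angle hab hk).mapsTo_Ioo (a := a) (b := b)

theorem mapsTo_ofAngle_Icc (hab : a < b) (hk : 1 ≤ k) :
    MapsTo (ofAngle a b k) (Icc 0 (k * Real.pi)) (Icc a b) := by
  simpa only [ofAngle_zero, ofAngle_mul_pi hab hk] using
    (strictMono_ofAngle hab hk).monotone.mapsTo_Icc (a := 0) (b := k * Real.pi)

theorem amplitude_pos (p : ℝ) (hab : a < b) (hk : 1 ≤ k) : 0 < amplitude p a b k :=
  Real.rpow_pos_of_pos (angularRate_pos hab hk) _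

theorem abs_amplitude_mul_rpow (hp : 1 < p) (hab : a < b) (hk : 1 ≤ k) {x : ℝ} (hx : 0 ≤ x) :
    |amplitude p a b k * x| ^ (p - 1) = angularRate a b k ^ 2 * x ^ (p - 1) := by
  have hA := (amplitude_pos p hab hk).le
  rw [abs_of_nonneg (mul_nonneg hA hx), Real.mul_rpow hA hx, amplitude,
    ← Real.rpow_mul (angularRate_pos hab hk).le, div_mul_cancel₀ _ (sub_pos.2 hp).ne',
    Real.rpow_two]

theorem abs_amplitude_mul_rpow_mul (hp : 1 < p) (hab : a < b) (hk : 1 ≤ k) {x : ℝ} (hx : 0 ≤ x) :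
    |amplitude p a b k * x| ^ (p - 1) * (amplitude p a b k * x) =
      amplitude p a b k * angularRate a b k ^ 2 * x ^ p := by
  rw [abs_amplitude_mul_rpow hp hab hk hx, rpow_eq_rpow_sub_one_mul hp hx]
  ring

theorem IsNonnegSol.exists_isC2Sol_rescale {μ : ℝ} {U U' : ℝ → ℝ} (hp : 1 < p) (hab : a < b)
    (hk : 1 ≤ k) (hU : IsNonnegSol p μ k U U') :
    ∃ v' v'', IsC2Sol a b (sinWμ a b k μ) (fun x => |x| ^ (p - 1) * x) (rescale p a b k U)
      v' v'' := by
  refine ⟨_, _, (hU.isSolOn.const_mul_comp (fun t _ => hasDerivAt_angle a b k t)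
    (mapsTo_angle_Icc hab hk) fun t ht => ?_).isC2Sol⟩
  have hUt := hU.mem_Icc_truncLevel (mapsTo_angle_Icc hab hk ht)
  rw [abs_amplitude_mul_rpow_mul hp hab hk hUt.1, sinWμ_eq_sinWeight_angle, powField,
    truncPow_of_mem_Icc hUt]
  ring

theorem rescale_left (b : ℝ) {U : ℝ → ℝ} (hU : U 0 = 0) : rescale p a b k U a = 0 := by
  rw [rescale, angle_left, hU, mul_zero]

theorem rescale_right {U : ℝ → ℝ} (hab : a < b) (hU : U (k * Real.pi) = 0) :
    rescale p a b k U b = 0 := by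
  rw [rescale, angle_right hab, hU, mul_zero]

theorem rescale_pos {U : ℝ → ℝ} (hab : a < b) (hk : 1 ≤ k)
    (hU : ∀ s ∈ Ioo 0 (k * Real.pi), 0 < U s) : ∀ t ∈ Ioo a b, 0 < rescale p a b k U t :=
  fun _ ht => mul_pos (amplitude_pos p hab hk) (hU _ (mapsTo_angle_Ioo hab hk ht))

theorem eqOn_of_eqOn_rescale {U V : ℝ → ℝ} (hab : a < b) (hk : 1 ≤ k)
    (h : EqOn (rescale p a b k U) (rescale p a b k V) (Icc a b)) :
    EqOn U V (Icc 0 (k * Real.pi)) := fun s hs => by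
  have := mul_left_cancel₀ (amplitude_pos p hab hk).ne' (h (mapsTo_ofAngle_Icc hab hk hs))
  rwa [angle_ofAngle hab hk] at this

theorem IsC2Sol.exists_isNonnegSol_eqOn_rescale {μ : ℝ} {u u' u'' : ℝ → ℝ} (hp : 1 < p)
    (hab : a < b) (hk : 1 ≤ k) (hμ : 0 ≤ μ)
    (hu : IsC2Sol a b (sinWμ a b k μ) (fun x => |x| ^ (p - 1) * x) u u' u'')
    (ha : u a = 0) (hb : u b = 0) (hpos : ∀ t ∈ Icc a b, 0 ≤ u t) :
    ∃ U U', IsNonnegSol p μ k U U' ∧ EqOn u (rescale p a b k U) (Icc a b) := by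
  have hA := amplitude_pos p hab hk
  have hr := (angularRate_pos hab hk).ne'
  have hmaps := mapsTo_ofAngle_Icc hab hk
  refine ⟨_, _, isNonnegSol_of_rpow hp hk hμ (hu.isSolOn.const_mul_comp
      (c := (amplitude p a b k)⁻¹) (fun s _ => hasDerivAt_ofAngle a b k s) hmaps
      fun s hs => ?_) ?_ ?_ fun s hs => mul_nonneg (inv_nonneg.2 hA.le) (hpos _ (hmaps hs)),
    fun t _ => ?_⟩
  · set x := (amplitude p a b k)⁻¹ * u (ofAngle a b k s)
    have hux : u (ofAngle a b k s) = amplitude p a b k * x := (mul_inv_cancel_left₀ hA.ne' _).symm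
    have hx₀ : 0 ≤ x := mul_nonneg (inv_nonneg.2 hA.le) (hpos _ (hmaps hs))
    rw [hux, abs_amplitude_mul_rpow_mul hp hab hk hx₀, sinWμ_eq_sinWeight_angle,
      angle_ofAngle hab hk]
    field_simp [hA.ne']
  · rw [ofAngle_zero, ha, mul_zero]
  · rw [ofAngle_mul_pi hab hk, hb, mul_zero]
  · rw [rescale, ofAngle_angle hab hk, mul_inv_cancel_left₀ hA.ne']

theorem IsNonnegSol.eq_zero_of_isC2LinSol_rescale {μ : ℝ} {U U' w w' w'' : ℝ → ℝ} (hp : 1 < p)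
    (hab : a < b) (hk : 1 ≤ k) (d : Calibration p k) (hμ : d.μ₀ ≤ μ) (hU : IsNonnegSol p μ k U U')
    (hw : IsC2LinSol a b
      (fun t => sinWμ a b k μ t * (p * |rescale p a b k U t| ^ (p - 1))) w w' w'')
    (ha : w a = 0) (hb : w b = 0) : ∀ t ∈ Icc a b, w t = 0 := by
  have hr := (angularRate_pos hab hk).ne'
  have hlin : IsSolOn (Icc 0 (k * Real.pi))
      (linField fun s => sinWeight μ s * posPowDeriv p (U s))
      (fun s => 1 * w (ofAngle a b k s)) _ :=
    hw.isSolOn.const_mul_comp (fun s _ => hasDerivAt_ofAngle a b k s)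
      (mapsTo_ofAngle_Icc hab hk) fun s hs => by
        rw [linField, linField, rescale, sinWμ_eq_sinWeight_angle, angle_ofAngle hab hk,
          abs_amplitude_mul_rpow hp hab hk (hU.nonneg s hs),
          posPowDeriv_of_nonneg (hU.nonneg s hs)]
        field_simp
  intro t ht
  simpa only [one_mul, ofAngle_angle hab hk] using hU.eq_zero_of_linearized hp hk d hμ hlin
    (by rw [ofAngle_zero, ha, mul_zero]) (by rw [ofAngle_mul_pi hab hk, hb, mul_zero]) _
    (mapsTo_angle_Icc hab hk ht)

end Rescale

end PowerEquation

theorem exists_injective_range_eq_nonempty_subsets (m : ℕ) :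
    ∃ T : Fin (2 ^ m - 1) → Finset ℕ, Function.Injective T ∧
      range T = {S | S.Nonempty ∧ S ⊆ Finset.range m} := by
  have hcard : ((Finset.range m).powerset.erase ∅).card = 2 ^ m - 1 := by
    rw [Finset.card_erase_of_mem (Finset.empty_mem_powerset _), Finset.card_powerset,
      Finset.card_range]
  let e := (Finset.equivFinOfCardEq hcard).symm
  refine ⟨Subtype.val ∘ e, Subtype.val_injective.comp e.injective, ?_⟩
  ext S
  rw [e.surjective.range_comp, Subtype.range_coe]
  simp only [SetLike.mem_coe, Finset.mem_erase, Finset.mem_powerset, mem_ofPred_eq,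
    Finset.nonempty_iff_ne_empty]

theorem IsC2Sol.exists_isNonnegSol_code_nonempty {p a b μ : ℝ} {k : ℕ} {u u' u'' : ℝ → ℝ}
    (hp : 1 < p) (hab : a < b) (hk : 1 ≤ k) (d : Calibration p k) (hμ : d.μ₀ ≤ μ)
    (hu : IsC2Sol a b (sinWμ a b k μ) (fun x => |x| ^ (p - 1) * x) u u' u'')
    (ha : u a = 0) (hb : u b = 0) (hpos : ∀ t ∈ Ioo a b, 0 < u t) :
    ∃ U U', IsNonnegSol p μ k U U' ∧ (d.code U').Nonempty ∧
      EqOn u (rescale p a b k U) (Icc a b) := by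
  have hnonneg : ∀ t ∈ Icc a b, 0 ≤ u t := fun t ht => by
    rcases eq_endpoints_or_mem_Ioo_of_mem_Icc ht with rfl | rfl | ht
    exacts [ha.ge, hb.ge, (hpos t ht).le]
  obtain ⟨U, U', hU, heq⟩ := hu.exists_isNonnegSol_eqOn_rescale hp hab hk
    (d.μ₀_pos.le.trans hμ) ha hb hnonneg
  obtain ⟨c, hc⟩ := exists_between hab
  have hcI := Ioo_subset_Icc_self hc
  have hUc : 0 < U (angle a b k c) :=
    pos_of_mul_pos_right ((hpos c hc).trans_eq (heq hcI)) (amplitude_pos p hab hk).le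
  exact ⟨U, U', hU, hU.code_nonempty_of_pos hp hk hμ (mapsTo_angle_Icc hab hk hcI) hUc, heq⟩

theorem exact_multiplicity_sinusoidal_general
    (a b : ℝ) (hab : a < b) (k : ℕ) (hk : 1 ≤ k) (p : ℝ) (hp : 1 < p) :
    ∃ μss > (0 : ℝ), ∀ μ > μss,
      ∃ v v' v'' : Fin (2 ^ ((k + 1) / 2) - 1) → ℝ → ℝ,
        (∀ i,
          IsC2Sol a b (sinWμ a b k μ) (fun x => |x| ^ (p - 1) * x)
            (v i) (v' i) (v'' i) ∧
          v i a = 0 ∧ v i b = 0 ∧ (∀ t ∈ Set.Ioo a b, 0 < v i t) ∧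
          (∀ w w₁ w₂ : ℝ → ℝ,
            IsC2LinSol a b (fun t => sinWμ a b k μ t * (p * |v i t| ^ (p - 1)))
              w w₁ w₂ →
            w a = 0 → w b = 0 → ∀ t ∈ Set.Icc a b, w t = 0)) ∧
        (∀ i j, i ≠ j → ∃ t ∈ Set.Icc a b, v i t ≠ v j t) ∧
        (∀ u u₁ u₂ : ℝ → ℝ,
          IsC2Sol a b (sinWμ a b k μ) (fun x => |x| ^ (p - 1) * x) u u₁ u₂ →
          u a = 0 → u b = 0 → (∀ t ∈ Set.Ioo a b, 0 < u t) →
          ∃ i, Set.EqOn u (v i) (Set.Icc a b)) := by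
  obtain ⟨d⟩ := exists_calibration hp k
  refine ⟨d.μ₀, d.μ₀_pos, fun μ hμ => ?_⟩
  obtain ⟨T, hT_inj, hT_range⟩ := exists_injective_range_eq_nonempty_subsets ((k + 1) / 2)
  have hT : ∀ i, (T i).Nonempty ∧ T i ⊆ Finset.range ((k + 1) / 2) := fun i =>
    hT_range.subset (mem_range_self i)
  choose U U' hU hcode using fun i => exists_isNonnegSol_code_eq hp hk d hμ.le (hT i).2
  choose v' v'' hv using fun i => (hU i).exists_isC2Sol_rescale hp hab hk
  refine ⟨fun i => rescale p a b k (U i), v', v'', fun i => ⟨hv i, rescale_left b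
    (hU i).left_eq_zero, rescale_right hab (hU i).right_eq_zero, ?_, fun w w₁ w₂ hw ha hb =>
    (hU i).eq_zero_of_isC2LinSol_rescale hp hab hk d hμ.le hw ha hb⟩, fun i j => ?_, ?_⟩
  · exact rescale_pos hab hk ((hU i).pos_of_code_nonempty hp ((hcode i).symm ▸ (hT i).1))
  · contrapose!
    refine fun heq => hT_inj ?_
    rw [← hcode, ← hcode, (hU i).code_congr d (hU j) (eqOn_of_eqOn_rescale hab hk heq)]
  · intro u u₁ u₂ hu ha hb hpos
    obtain ⟨W, W', hW, hne, heq⟩ := hu.exists_isNonnegSol_code_nonempty hp hab hk d hμ.le ha hb hpos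
    obtain ⟨i, hi⟩ := hT_range.superset ⟨hne, d.code_subset W'⟩
    exact ⟨i, fun t ht => (heq ht).trans (congrArg (amplitude p a b k * ·)
      (hW.eqOn_of_code_eq hp hk hμ.le (hU i) (hi.symm.trans (hcode i).symm)
        (mapsTo_angle_Icc hab hk ht)))⟩

/-- **Exact multiplicity for sinusoidal weights.** Let `k ≥ 2`,
`p > 1`, `h(t) = sin(kπ(t-a)/(b-a))` on `[a,b]`. Then there is `μ** > 0` such
that for every `μ > μ**` the Dirichlet problem
`u'' + (h⁺(t) - μ h⁻(t)) |u|^{p-1} u = 0`, `u(a) = 0 = u(b)`, possesses exactly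
`2^m - 1` positive solutions, where `m = ⌊(k+1)/2⌋`; moreover these solutions
are non-degenerate. -/
theorem exact_multiplicity_sinusoidal
    (a b : ℝ) (hab : a < b)
    (k : ℕ) (hk : 2 ≤ k)
    (p : ℝ) (hp : 1 < p) :
    ∃ μss > (0 : ℝ), ∀ μ > μss,
      ∃ v v' v'' : Fin (2 ^ ((k + 1) / 2) - 1) → ℝ → ℝ,
        -- each `v i` is a positive, non-degenerate solution:
        (∀ i,
          IsC2Sol a b (sinWμ a b k μ) (fun x => |x| ^ (p - 1) * x)
            (v i) (v' i) (v'' i) ∧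
          v i a = 0 ∧ v i b = 0 ∧ (∀ t ∈ Set.Ioo a b, 0 < v i t) ∧
          (∀ w w₁ w₂ : ℝ → ℝ,
            IsC2LinSol a b (fun t => sinWμ a b k μ t * (p * |v i t| ^ (p - 1)))
              w w₁ w₂ →
            w a = 0 → w b = 0 → ∀ t ∈ Set.Icc a b, w t = 0)) ∧
        -- the solutions are pairwise distinct:
        (∀ i j, i ≠ j → ∃ t ∈ Set.Icc a b, v i t ≠ v j t) ∧
        -- and there are no other positive solutions:
        (∀ u u₁ u₂ : ℝ → ℝ,
          IsC2Sol a b (sinWμ a b k μ) (fun x => |x| ^ (p - 1) * x) u u₁ u₂ →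
          u a = 0 → u b = 0 → (∀ t ∈ Set.Ioo a b, 0 < u t) →
          ∃ i, Set.EqOn u (v i) (Set.Icc a b)) :=
  exact_multiplicity_sinusoidal_general a b hab k (one_le_two.trans hk) p hp
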